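/- Let h be a concave cocirculation in a convex triangular grid G. Then there exists an integer concave cocirculation h' in G such that h'(e)=h(e) for all edges e ∈ O_h ∪ I_h, where O_h is the set of boundary edges e of G with h(e) ∈ ℤ, and I_h is the set of edges contained in little triangles Δ such that h takes integer values on all three edges of Δ. -/

import Mathlib

open scoped BigOperators

attribute [local instance] Classical.propDecidable

noncomputable section

/-- Points of the plane. -/
abbrev Pt : Type := ℝ × ℝ

/-- Directed edges: ordered pairs of points. -/
abbrev Ed : Type := Pt × Pt

/-- The three generating vectors ξ₁ = (1,0), ξ₂ = (−1/2, √3/2), ξ₃ = (−1/2, −√3/2). -/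
noncomputable def xiv : Fin 3 → Pt
  | 0 => ((1 : ℝ), (0 : ℝ))
  | 1 => (-(1 / 2 : ℝ), Real.sqrt 3 / 2)
  | 2 => (-(1 / 2 : ℝ), -(Real.sqrt 3 / 2))

/-- A little (lattice) triangle of the triangular grid, given by its base point and
its orientation (`up = true` for an upward triangle). -/
structure GridTriangle : Type where
  base : Pt
  up : Bool

noncomputable def GridTriangle.v0 (T : GridTriangle) : Pt := T.base
noncomputable def GridTriangle.v1 (T : GridTriangle) : Pt := T.base + xiv 0
noncomputable def GridTriangle.v2 (T : GridTriangle) : Pt :=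
  if T.up then T.base + xiv 0 + xiv 1 else T.base + xiv 0 + xiv 2

/-- The three directed edges of the 3-circuit surrounding a little triangle;
each has direction ξ₁, ξ₂ or ξ₃. -/
noncomputable def GridTriangle.e0 (T : GridTriangle) : Ed := (T.v0, T.v1)
noncomputable def GridTriangle.e1 (T : GridTriangle) : Ed := (T.v1, T.v2)
noncomputable def GridTriangle.e2 (T : GridTriangle) : Ed := (T.v2, T.v0)

noncomputable def GridTriangle.edgeFinset (T : GridTriangle) : Finset Ed := {T.e0, T.e1, T.e2}

/-- The closed region spanned by a little triangle. -/
noncomputable def GridTriangle.region (T : GridTriangle) : Set Pt :=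
  convexHull ℝ {T.v0, T.v1, T.v2}

/-- Vectors of the lattice generated by ξ₁ and ξ₂. -/
def IsLatticeVec (p : Pt) : Prop := ∃ m n : ℤ, p = (m : ℝ) • xiv 0 + (n : ℝ) • xiv 1

/-- A convex triangular grid: a finite nonempty set of little triangles of a common
translate of the triangular lattice whose union is a convex polygon.  (Its vertices,
edges, bounded faces and boundary are then those of the planar digraph formed by the
edges of the little triangles.) -/
structure ConvexGrid : Type where
  tris : Finset GridTriangle
  nonempty : tris.Nonempty
  aligned : ∀ T ∈ tris, ∀ T' ∈ tris, IsLatticeVec (T.base - T'.base)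
  convex : Convex ℝ (⋃ T ∈ tris, GridTriangle.region T)

/-- The region R(G) spanned by the grid. -/
noncomputable def ConvexGrid.region (G : ConvexGrid) : Set Pt :=
  ⋃ T ∈ G.tris, GridTriangle.region T

/-- The (directed) edge set E(G) of the grid. -/
noncomputable def ConvexGrid.edges (G : ConvexGrid) : Finset Ed :=
  G.tris.biUnion GridTriangle.edgeFinset

/-- The boundary edges B(G): edges lying in exactly one little triangle. -/
noncomputable def ConvexGrid.boundary (G : ConvexGrid) : Finset Ed :=
  G.edges.filter fun e => (G.tris.filter fun T => e ∈ T.edgeFinset).card = 1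

/-- A cocirculation: `h(e)+h(e')+h(e'')=0` around each little triangle. -/
def IsCocirculation (G : ConvexGrid) (h : Ed → ℝ) : Prop :=
  ∀ T ∈ G.tris, h T.e0 + h T.e1 + h T.e2 = 0

/-- `g` coincides with an affine function on `S`. -/
def AffineOn (g : Pt → ℝ) (S : Set Pt) : Prop :=
  ∃ φ : Pt →ᵃ[ℝ] ℝ, ∀ x ∈ S, g x = φ x

/-- A concave cocirculation: a cocirculation induced by a concave function on R(G)
which is affinely linear within each little triangle. -/
def IsConcaveCocirculation (G : ConvexGrid) (h : Ed → ℝ) : Prop :=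
  IsCocirculation G h ∧
  ∃ g : Pt → ℝ, ConcaveOn ℝ G.region g ∧ (∀ T ∈ G.tris, AffineOn g T.region) ∧
    ∀ e ∈ G.edges, h e = g e.2 - g e.1

/-- The polyhedron C(G,h₀) of concave cocirculations agreeing with h₀ on F. -/
def CC (G : ConvexGrid) (F : Set Ed) (h₀ : Ed → ℝ) : Set (Ed → ℝ) :=
  {h | IsConcaveCocirculation G h ∧ ∀ e ∈ F, h e = h₀ e}

/-- `h` is a vertex (extreme point) of the set `C` of cocirculations, regarded as a
subset of ℝ^{E(G)} (only the coordinates on the edges of `G` matter). -/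
def IsVertexOf (G : ConvexGrid) (C : Set (Ed → ℝ)) (h : Ed → ℝ) : Prop :=
  h ∈ C ∧ ∀ h₁ ∈ C, ∀ h₂ ∈ C,
    (∀ e ∈ G.edges, h e = (h₁ e + h₂ e) / 2) → ∀ e ∈ G.edges, h₁ e = h₂ e

namespace TG

abbrev Z2 : Type := ℤ × ℤ

/-- rotation by 60 degrees in lattice coordinates -/
def rot (u : Z2) : Z2 := (u.1 - u.2, u.1)
def cr (u x : Z2) : ℤ := u.1 * x.2 - u.2 * x.1
def dp (p : ℝ × ℝ) (x : Z2) : ℝ := p.1 * x.1 + p.2 * x.2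
def Dirs : Finset Z2 := {(1,0),(1,1),(0,1),(-1,0),(-1,-1),(0,-1)}

lemma mem_Dirs {u : Z2} : u ∈ Dirs ↔ u = (1,0) ∨ u = (1,1) ∨ u = (0,1) ∨ u = (-1,0) ∨
    u = (-1,-1) ∨ u = (0,-1) := by simp [Dirs]

lemma rot_add (u v : Z2) : rot (u + v) = rot u + rot v := by
  ext <;> simp [rot]; ring
lemma rot_sub (u v : Z2) : rot (u - v) = rot u - rot v := by
  ext <;> simp [rot]; ring
lemma rot_neg (u : Z2) : rot (-u) = -rot u := by
  ext <;> simp [rot]; ring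
lemma rot_rot (u : Z2) : rot (rot u) = rot u - u := by
  ext <;> simp [rot]

lemma dp_add (p) (x y : Z2) : dp p (x + y) = dp p x + dp p y := by
  simp [dp]; ring
lemma dp_sub (p) (x y : Z2) : dp p (x - y) = dp p x - dp p y := by
  simp [dp]; ring
lemma dp_neg (p) (x : Z2) : dp p (-x) = - dp p x := by
  simp [dp]; ring

lemma rot_mem {u : Z2} (h : u ∈ Dirs) : rot u ∈ Dirs := by
  rw [mem_Dirs] at *
  rcases h with h | h | h | h | h | h <;> subst h <;> simp [rot]
lemma neg_mem {u : Z2} (h : u ∈ Dirs) : -u ∈ Dirs := by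
  rw [mem_Dirs] at *
  rcases h with h | h | h | h | h | h <;> subst h <;> simp
lemma rsub_mem {u : Z2} (h : u ∈ Dirs) : rot u - u ∈ Dirs := by
  rw [← rot_rot]; exact rot_mem (rot_mem h)
lemma subr_mem {u : Z2} (h : u ∈ Dirs) : u - rot u ∈ Dirs := by
  have := neg_mem (rsub_mem h); rwa [neg_sub] at this
lemma negrot_mem {u : Z2} (h : u ∈ Dirs) : -rot u ∈ Dirs := neg_mem (rot_mem h)

lemma cr_rot {u : Z2} (h : u ∈ Dirs) : cr u (rot u) = 1 := by
  rw [mem_Dirs] at *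
  rcases h with h | h | h | h | h | h <;> subst h <;> simp [rot, cr]

lemma cr_sub_right (u x y : Z2) : cr u (x - y) = cr u x - cr u y := by simp [cr]; ring
lemma cr_add_right (u x y : Z2) : cr u (x + y) = cr u x + cr u y := by simp [cr]; ring
lemma cr_neg_right (u x : Z2) : cr u (-x) = - cr u x := by simp [cr]; ring
lemma cr_sub_left (u x y : Z2) : cr (x - y) u = cr x u - cr y u := by simp [cr]; ring
lemma cr_add_left (u x y : Z2) : cr (x + y) u = cr x u + cr y u := by simp [cr]; ring
lemma cr_neg_left (u x : Z2) : cr (-x) u = - cr x u := by simp [cr]; ring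
lemma cr_self (u : Z2) : cr u u = 0 := by simp [cr]; ring
lemma cr_swap (u x : Z2) : cr u x = - cr x u := by simp [cr]; ring

lemma dp_decomp {u : Z2} (h : u ∈ Dirs) (p) (d : Z2) :
    dp p d = (cr d (rot u) : ℝ) * dp p u + (cr u d : ℝ) * dp p (rot u) := by
  rw [mem_Dirs] at h
  obtain ⟨a, b⟩ := d
  rcases h with h | h | h | h | h | h <;> subst h <;> simp [rot, cr, dp] <;> ring

lemma vec_decomp {u : Z2} (h : u ∈ Dirs) (d : Z2) :
    d = (cr d (rot u)) • u + (cr u d) • rot u := by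
  rw [mem_Dirs] at h
  obtain ⟨a, b⟩ := d
  rcases h with h | h | h | h | h | h <;> subst h <;> simp [rot, cr]

def Tri (V : Finset Z2) (v u : Z2) : Prop := v ∈ V ∧ v + u ∈ V ∧ v + rot u ∈ V

lemma Tri.rot {V v u} (h : Tri V v u) : Tri V (v + u) (TG.rot u - u) := by
  refine ⟨h.2.1, ?_, ?_⟩
  · have : v + u + (TG.rot u - u) = v + TG.rot u := by abel
    rw [this]; exact h.2.2
  · have : v + u + TG.rot (TG.rot u - u) = v := by rw [rot_sub, rot_rot]; abel
    rw [this]; exact h.1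

lemma Tri.rot' {V v u} (h : Tri V v u) : Tri V (v + TG.rot u) (-TG.rot u) := by
  have := h.rot.rot
  have e1 : v + u + (TG.rot u - u) = v + TG.rot u := by abel
  have e2 : TG.rot (TG.rot u - u) - (TG.rot u - u) = - TG.rot u := by rw [rot_sub, rot_rot]; abel
  rwa [e1, e2] at this

/-- the slack of the rhombus with diagonal `v, v+u` -/
def sl (g : Z2 → ℝ) (v u : Z2) : ℝ := g v + g (v + u) - g (v + rot u) - g (v + u - rot u)

def In (V : Finset Z2) (g : Z2 → ℝ) (p : ℝ × ℝ) (v u : Z2) : Prop :=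
  Tri V v u ∧ g (v + u) - g v = dp p u ∧ g (v + rot u) - g v = dp p (rot u)

def Hs (V : Finset Z2) : Prop :=
  ∀ v u x, u ∈ Dirs → Tri V v u → x ∈ V → cr u (x - v) < 0 → v + u - rot u ∈ V

def Conc (V : Finset Z2) (g : Z2 → ℝ) : Prop :=
  ∀ v u, u ∈ Dirs → Tri V v u → v + u - rot u ∈ V → 0 ≤ sl g v u

lemma tri_opp {V v u} (h : Tri V v u) (h2 : v + u - rot u ∈ V) : Tri V (v + u) (-u) := by
  refine ⟨h.2.1, ?_, ?_⟩
  · have : v + u + -u = v := by abel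
    rw [this]; exact h.1
  · have : v + u + rot (-u) = v + u - rot u := by rw [rot_neg]; abel
    rw [this]; exact h2

lemma tri_opp_apex {V v u} (h : Tri V (v + u) (-u)) : v + u - rot u ∈ V := by
  have := h.2.2
  rwa [rot_neg, ← sub_eq_add_neg] at this

lemma exists_In {V v u} (g) (hu : u ∈ Dirs) (h : Tri V v u) : ∃ p, In V g p v u := by
  refine ⟨((u.1 : ℝ) * (g (v + u) - g v) - (u.2 : ℝ) * (g (v + rot u) - g v),
    -((u.1 : ℝ) - u.2) * (g (v + u) - g v) + (u.1 : ℝ) * (g (v + rot u) - g v)), h, ?_, ?_⟩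
  · rw [mem_Dirs] at hu
    generalize g (v + u) - g v = A
    generalize g (v + rot u) - g v = B
    rcases hu with h | h | h | h | h | h <;> subst h <;> simp [rot, dp]
  · rw [mem_Dirs] at hu
    generalize g (v + u) - g v = A
    generalize g (v + rot u) - g v = B
    rcases hu with h | h | h | h | h | h <;> subst h <;> simp [rot, dp]

lemma dp_ext {u : Z2} (hu : u ∈ Dirs) {p q : ℝ × ℝ} (h1 : dp p u = dp q u)
    (h2 : dp p (rot u) = dp q (rot u)) : p = q := by
  rw [mem_Dirs] at hu
  rcases hu with h | h | h | h | h | h <;> subst h <;> simp [rot, dp] at h1 h2 <;>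
    ext <;> linarith

lemma In.unique {V g p q v u} (hu : u ∈ Dirs) (h : In V g p v u) (h' : In V g q v u) : p = q :=
  dp_ext hu (by rw [← h.2.1, ← h'.2.1]) (by rw [← h.2.2, ← h'.2.2])

lemma In.rot {V g p v u} (h : In V g p v u) : In V g p (v + u) (TG.rot u - u) := by
  refine ⟨h.1.rot, ?_, ?_⟩
  · have : v + u + (TG.rot u - u) = v + TG.rot u := by abel
    rw [this, dp_sub, ← h.2.1, ← h.2.2]; ring
  · have : v + u + TG.rot (TG.rot u - u) = v := by rw [rot_sub, rot_rot]; abel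
    rw [this]
    have : TG.rot (TG.rot u - u) = -u := by rw [rot_sub, rot_rot]; abel
    rw [this, dp_neg, ← h.2.1]; ring

lemma In.rot' {V g p v u} (h : In V g p v u) : In V g p (v + TG.rot u) (-TG.rot u) := by
  have := h.rot.rot
  have e1 : v + u + (TG.rot u - u) = v + TG.rot u := by abel
  have e2 : TG.rot (TG.rot u - u) - (TG.rot u - u) = - TG.rot u := by rw [rot_sub, rot_rot]; abel
  rwa [e1, e2] at this

/-- crossing a tight edge -/
lemma In.cross {V g p v u} (h : In V g p v u) (h2 : v + u - TG.rot u ∈ V) (h3 : sl g v u = 0) :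
    In V g p (v + u) (-u) := by
  refine ⟨tri_opp h.1 h2, ?_, ?_⟩
  · have : v + u + -u = v := by abel
    rw [this, dp_neg, ← h.2.1]; ring
  · have : v + u + TG.rot (-u) = v + u - TG.rot u := by rw [rot_neg]; abel
    rw [this, rot_neg, dp_neg, ← h.2.2]
    unfold sl at h3; linarith

lemma In.sl_eq {V g p q v u} (h : In V g p v u) (h' : In V g q (v + u) (-u)) :
    sl g v u = dp q (TG.rot u) - dp p (TG.rot u) := by
  have h2 := h'.2.2
  have : v + u + TG.rot (-u) = v + u - TG.rot u := by rw [rot_neg]; abel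
  rw [this, rot_neg, dp_neg] at h2
  have := h.2.2
  unfold sl; linarith

lemma In.eq_dp {V g p q v u} (h : In V g p v u) (h' : In V g q (v + u) (-u)) :
    dp p u = dp q u := by
  have h2 := h'.2.1
  have : v + u + -u = v := by abel
  rw [this, dp_neg] at h2
  have := h.2.1
  linarith

def SS (v u x : Z2) : ℤ := (cr u (x - v))^2 + (cr (x - v) (rot u))^2 +
  (1 - cr u (x - v) - cr (x - v) (rot u))^2

lemma SS_nonneg (v u x) : 0 ≤ SS v u x := by unfold SS; positivity

lemma cr1 {u : Z2} (hu : u ∈ Dirs) (v x : Z2) :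
    cr (rot u - u) (x - (v + u)) = 1 - cr u (x - v) - cr (x - v) (rot u) := by
  have h1 := cr_rot hu
  have : x - (v + u) = (x - v) - u := by abel
  rw [this]
  generalize x - v = d
  have h2 := cr_swap (rot u) d
  have h3 := cr_swap (rot u) u
  rw [cr_sub_left, cr_sub_right, cr_sub_right, cr_self]
  omega

lemma cr2 {u : Z2} (hu : u ∈ Dirs) (v x : Z2) :
    cr (x - (v + u)) (rot (rot u - u)) = cr u (x - v) := by
  have : x - (v + u) = (x - v) - u := by abel
  have e : rot (rot u - u) = -u := by rw [rot_sub, rot_rot]; abel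
  rw [this, e, cr_sub_left, cr_neg_right, cr_neg_right, cr_self, cr_swap (x - v)]; ring

lemma SS_rot {u : Z2} (hu : u ∈ Dirs) (v x : Z2) : SS (v + u) (rot u - u) x = SS v u x := by
  unfold SS
  rw [cr1 hu, cr2 hu]; ring

lemma SS_opp {u : Z2} (hu : u ∈ Dirs) (v x : Z2) :
    SS (v + u) (-u) x = SS v u x + 2 * cr u (x - v) := by
  unfold SS
  have h1 := cr_rot hu
  have : x - (v + u) = (x - v) - u := by abel
  rw [this, rot_neg, cr_neg_left, cr_sub_right, cr_self, cr_neg_right, cr_sub_left, h1]; ring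

lemma vertex_of_nonneg {v u x : Z2} (hu : u ∈ Dirs) (h1 : 0 ≤ cr u (x - v))
    (h2 : 0 ≤ cr (x - v) (rot u)) (h3 : 0 ≤ 1 - cr u (x - v) - cr (x - v) (rot u)) :
    x = v ∨ x = v + u ∨ x = v + rot u := by
  have hd := vec_decomp hu (x - v)
  generalize cr u (x - v) = j at *
  generalize cr (x - v) (rot u) = i at *
  have hx : x = v + (i • u + j • rot u) := by rw [← hd]; abel
  have hc : (i = 0 ∧ j = 0) ∨ (i = 1 ∧ j = 0) ∨ (i = 0 ∧ j = 1) := by omega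
  rcases hc with ⟨rfl, rfl⟩ | ⟨rfl, rfl⟩ | ⟨rfl, rfl⟩
  · left; rw [hx]; simp
  · right; left; rw [hx]; simp
  · right; right; rw [hx]; simp

/-- induction principle: walk through triangles from a given one to the point `x` -/
lemma walk_ind {V : Finset Z2} (hs : Hs V) {x : Z2} (hx : x ∈ V) (Q : Z2 → Z2 → Prop)
    (base : ∀ v u, u ∈ Dirs → Tri V v u → v = x → Q v u)
    (hrot : ∀ v u, u ∈ Dirs → Tri V v u → Q (v + u) (rot u - u) → Q v u)
    (hcross : ∀ v u, u ∈ Dirs → Tri V v u → cr u (x - v) < 0 → v + u - rot u ∈ V →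
      Q (v + u) (-u) → Q v u) :
    ∀ v u, u ∈ Dirs → Tri V v u → Q v u := by
  suffices H : ∀ n : ℕ, ∀ v u, u ∈ Dirs → Tri V v u → SS v u x < n → Q v u by
    intro v u hu ht
    refine H ((SS v u x).toNat + 1) v u hu ht ?_
    have := SS_nonneg v u x
    push_cast; omega
  intro n
  induction n with
  | zero => intro v u hu ht h; have := SS_nonneg v u x; push_cast at h; omega
  | succ n ih =>
    have key : ∀ v u, u ∈ Dirs → Tri V v u → SS v u x < (n + 1 : ℕ) → cr u (x - v) < 0 →
        Q v u := by
      intro v u hu ht hS hc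
      have hap := hs v u x hu ht hx hc
      refine hcross v u hu ht hc hap (ih _ _ (neg_mem hu) (tri_opp ht hap) ?_)
      rw [SS_opp hu]; push_cast at hS; omega
    intro v u hu ht hS
    by_cases h1 : cr u (x - v) < 0
    · exact key v u hu ht hS h1
    have hu2 := rsub_mem hu
    have hu3 := rsub_mem hu2
    have hS2 : SS (v + u) (rot u - u) x < (n + 1 : ℕ) := by rw [SS_rot hu]; exact hS
    by_cases h3 : 1 - cr u (x - v) - cr (x - v) (rot u) < 0
    · refine hrot v u hu ht (key _ _ hu2 ht.rot hS2 ?_)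
      rw [cr1 hu]; exact h3
    have e1 : cr (rot (rot u - u) - (rot u - u)) (x - (v + u + (rot u - u))) = cr (x - v) (rot u) := by
      rw [cr1 hu2, cr1 hu, cr2 hu]; ring
    by_cases h2 : cr (x - v) (rot u) < 0
    · refine hrot v u hu ht (hrot _ _ hu2 ht.rot (key _ _ hu3 ht.rot.rot ?_ ?_))
      · rw [SS_rot hu2]; exact hS2
      · rw [e1]; exact h2
    rcases vertex_of_nonneg hu (not_lt.1 h1) (not_lt.1 h2) (not_lt.1 h3) with h | h | h
    · exact base v u hu ht h.symm
    · exact hrot v u hu ht (base _ _ hu2 ht.rot h.symm)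
    · refine hrot v u hu ht (hrot _ _ hu2 ht.rot (base _ _ hu3 ht.rot.rot ?_))
      rw [h]; abel

lemma maj {V g} (hs : Hs V) (hc : Conc V g) {p v u x} (hu : u ∈ Dirs) (h : In V g p v u)
    (hx : x ∈ V) : g x ≤ g v + dp p (x - v) := by
  refine walk_ind hs hx (fun v u => ∀ p, In V g p v u → g x ≤ g v + dp p (x - v))
    ?_ ?_ ?_ v u hu h.1 p h
  · intro v u hu ht hv p h
    subst hv; simp [dp]
  · intro v u hu ht ih p h
    have := ih p h.rot
    have e : x - (v + u) = (x - v) - u := by abel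
    rw [e, dp_sub, ← h.2.1] at this
    linarith
  · intro v u hu ht hcr hap ih p h
    obtain ⟨q, hq⟩ := exists_In g (neg_mem hu) (tri_opp ht hap)
    have h1 := ih q hq
    have h2 := hc v u hu ht hap
    rw [h.sl_eq hq] at h2
    have h3 := h.eq_dp hq
    have e : x - (v + u) = (x - v) - u := by abel
    rw [e, dp_sub, dp_decomp hu q (x - v)] at h1
    rw [dp_decomp hu p (x - v)]
    have h4 := h.2.1
    have h5 : (cr u (x - v) : ℝ) ≤ 0 := by exact_mod_cast hcr.le
    rw [← h3] at h1
    nlinarith [mul_nonneg (neg_nonneg.2 h5) h2]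

end TG

namespace TG

lemma dirs6 {u b : Z2} (hu : u ∈ Dirs) (hb : b ∈ Dirs) : b = u ∨ b = rot u ∨ b = rot u - u ∨
    b = -u ∨ b = -rot u ∨ b = u - rot u := by
  rw [mem_Dirs] at *
  rcases hu with rfl | rfl | rfl | rfl | rfl | rfl <;>
  rcases hb with rfl | rfl | rfl | rfl | rfl | rfl <;> simp [rot]

lemma three_uniq {a y : Z2} (ha : a ∈ Dirs) (h1 : y = a ∨ y = rot a ∨ y = rot a - a)
    (h2 : rot y = a ∨ rot y = rot a ∨ rot y = rot a - a)
    (h3 : rot y - y = a ∨ rot y - y = rot a ∨ rot y - y = rot a - a) : y = a := by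
  rw [mem_Dirs] at *
  rcases ha with rfl | rfl | rfl | rfl | rfl | rfl <;>
  rcases h1 with rfl | rfl | rfl <;> simp [rot] at *

lemma rot_rsub (u : Z2) : rot (rot u - u) = -u := by rw [rot_sub, rot_rot]; abel
lemma rot_subr (u : Z2) : rot (u - rot u) = u := by rw [rot_sub, rot_rot]; abel

lemma slot_iff {V g p v a} : In V g p (v + a) (-a) ↔ In V g p v (a - rot a) := by
  constructor
  · intro h
    have := h.rot
    rw [rot_neg] at this
    have e : v + a + -a = v := by abel
    have e2 : -rot a - -a = a - rot a := by abel
    rwa [e, e2] at this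
  · intro h
    have := h.rot'
    rwa [rot_subr] at this

lemma same_aff {V g} (hs : Hs V) (hc : Conc V g) {p v u v' u'} (hu : u ∈ Dirs) (hu' : u' ∈ Dirs)
    (h : In V g p v u) (h' : In V g p v' u') : g v' = g v + dp p (v' - v) := by
  have h1 := maj hs hc hu h h'.1.1
  have h2 := maj hs hc hu' h' h.1.1
  have e : v - v' = -(v' - v) := by abel
  rw [e, dp_neg] at h2
  linarith

lemma supp {V g} (hs : Hs V) (hc : Conc V g) {p v u v' u'} (hu : u ∈ Dirs) (hu' : u' ∈ Dirs)
    (h : In V g p v u) (hn : ¬ In V g p (v + u) (-u)) (h' : In V g p v' u') :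
    0 ≤ cr u (v' - v) := by
  by_contra hcr
  push Not at hcr
  have hap := hs v u v' hu h.1 h'.1.1 hcr
  obtain ⟨q, hq⟩ := exists_In g (neg_mem hu) (tri_opp h.1 hap)
  have h2 := hc v u hu h.1 hap
  have h3 : sl g v u ≠ 0 := fun h0 => hn (h.cross hap h0)
  have h4 : 0 < sl g v u := lt_of_le_of_ne h2 (Ne.symm h3)
  rw [h.sl_eq hq] at h4
  have h5 := h.eq_dp hq
  have h6 := maj hs hc (neg_mem hu) hq h'.1.1
  have h7 := same_aff hs hc hu hu' h h'
  have e : v' - (v + u) = (v' - v) - u := by abel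
  rw [e, dp_sub, dp_decomp hu q (v' - v)] at h6
  rw [dp_decomp hu p (v' - v)] at h7
  have h8 := h.2.1
  rw [← h5] at h6
  have h9 : (cr u (v' - v) : ℝ) < 0 := by exact_mod_cast hcr
  nlinarith [mul_pos (neg_pos.2 h9) h4]

/-- slots at a vertex when the right edge of slot `a` is not tight -/
lemma slots_R {V g} (hs : Hs V) (hc : Conc V g) {p v a b} (ha : a ∈ Dirs) (hb : b ∈ Dirs)
    (h : In V g p v a) (hn : ¬ In V g p v (a - rot a)) (h' : In V g p v b) :
    b = a ∨ b = rot a ∨ b = rot a - a := by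
  rw [← slot_iff] at hn
  have h1 := supp hs hc ha (rsub_mem hb) h hn h'.rot
  have h2 := supp hs hc ha (negrot_mem hb) h hn h'.rot'
  have e1 : v + b - v = b := by abel
  have e2 : v + rot b - v = rot b := by abel
  rw [e1] at h1; rw [e2] at h2
  have := cr_rot ha
  have h0 := cr_self a
  rcases dirs6 ha hb with h | h | h | h | h | h
  · exact Or.inl h
  · exact Or.inr (Or.inl h)
  · exact Or.inr (Or.inr h)
  · subst h; rw [rot_neg, cr_neg_right] at h2; omega
  · subst h; rw [cr_neg_right] at h1; omega
  · subst h; rw [cr_sub_right] at h1; omega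

/-- slots at a vertex when the left edge of slot `a` is not tight -/
lemma slots_L {V g} (hs : Hs V) (hc : Conc V g) {p v a b} (ha : a ∈ Dirs) (hb : b ∈ Dirs)
    (h : In V g p v a) (hn : ¬ In V g p v (rot a)) (h' : In V g p v b) :
    b = a ∨ b = a - rot a ∨ b = -rot a := by
  have hn' : ¬ In V g p (v + rot a + -rot a) (- -rot a) := by
    rw [neg_neg]; have e : v + rot a + -rot a = v := by abel
    rwa [e]
  have h1 := supp hs hc (negrot_mem ha) (rsub_mem hb) h.rot' hn' h'.rot
  have h2 := supp hs hc (negrot_mem ha) (negrot_mem hb) h.rot' hn' h'.rot'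
  have e1 : v + b - (v + rot a) = b - rot a := by abel
  have e2 : v + rot b - (v + rot a) = rot b - rot a := by abel
  rw [e1, cr_neg_left, cr_sub_right, cr_self] at h1
  rw [e2, cr_neg_left, cr_sub_right, cr_self] at h2
  have := cr_rot ha
  have h3 := cr_swap a (rot a)
  have h0 := cr_self (rot a)
  rcases dirs6 ha hb with h | h | h | h | h | h
  · exact Or.inl h
  · subst h; rw [rot_rot, cr_sub_right] at h2; omega
  · subst h; rw [cr_sub_right] at h1; omega
  · subst h; rw [cr_neg_right] at h1; omega
  · exact Or.inr (Or.inr h)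
  · exact Or.inr (Or.inl h)

def Full (V : Finset Z2) (g : Z2 → ℝ) (p : ℝ × ℝ) (v : Z2) : Prop := ∀ a ∈ Dirs, In V g p v a
def Half (V : Finset Z2) (g : Z2 → ℝ) (p : ℝ × ℝ) (v u : Z2) : Prop :=
  u ∈ Dirs ∧ In V g p v u ∧ In V g p v (rot u) ∧ In V g p v (rot u - u) ∧ ¬ In V g p v (u - rot u)

lemma Half.slots {V g} (hs : Hs V) (hc : Conc V g) {p v u b} (h : Half V g p v u) (hb : b ∈ Dirs)
    (h' : In V g p v b) : b = u ∨ b = rot u ∨ b = rot u - u :=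
  slots_R hs hc h.1 hb h.2.1 h.2.2.2.2 h'

lemma Half.uniq {V g p v u y} (h : Half V g p v u) (hy : y ∈ Dirs)
    (hy' : ∀ b ∈ Dirs, In V g p v b → b = y ∨ b = rot y ∨ b = rot y - y) : u = y :=
  three_uniq hy (hy' _ h.1 h.2.1) (hy' _ (rot_mem h.1) h.2.2.1)
    (hy' _ (rsub_mem h.1) h.2.2.2.1)

lemma Half.not_full {V g p v u} (h : Half V g p v u) : ¬ Full V g p v :=
  fun hF => h.2.2.2.2 (hF _ (subr_mem h.1))

def IsI (x : ℝ) : Prop := ∃ z : ℤ, x = z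

lemma IsI.neg {x} (h : IsI x) : IsI (-x) := by
  obtain ⟨z, rfl⟩ := h; exact ⟨-z, by push_cast; rfl⟩
lemma IsI.add {x y} (h : IsI x) (h' : IsI y) : IsI (x + y) := by
  obtain ⟨z, rfl⟩ := h; obtain ⟨z', rfl⟩ := h'; exact ⟨z + z', by push_cast; rfl⟩
lemma IsI.sub {x y} (h : IsI x) (h' : IsI y) : IsI (x - y) := by
  obtain ⟨z, rfl⟩ := h; obtain ⟨z', rfl⟩ := h'; exact ⟨z - z', by push_cast; rfl⟩
lemma isI_neg {x} : IsI (-x) ↔ IsI x := ⟨fun h => by simpa using h.neg, IsI.neg⟩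

def wct (V : Finset Z2) (g : Z2 → ℝ) (p : ℝ × ℝ) (u : Z2) : ℕ :=
  (V.filter (fun v => In V g p v u ∧ ¬ In V g p (v + u) (-u))).card
def ff (V : Finset Z2) (g : Z2 → ℝ) (p : ℝ × ℝ) (u : Z2) : ℝ :=
  if IsI (dp p u) then 0 else wct V g p u
def CC' (V : Finset Z2) (g : Z2 → ℝ) (p : ℝ × ℝ) : ℝ := (∑ u ∈ Dirs, ff V g p u) / 2

lemma ff_nonneg (V g p u) : 0 ≤ ff V g p u := by unfold ff; split_ifs <;> positivity

lemma CC_eq {u : Z2} (hu : u ∈ Dirs) (V g p) : 2 * CC' V g p = ff V g p u + ff V g p (rot u) +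
    ff V g p (rot u - u) + ff V g p (-u) + ff V g p (-rot u) + ff V g p (u - rot u) := by
  have e : CC' V g p = (ff V g p (1,0) + ff V g p (1,1) + ff V g p (0,1) + ff V g p (-1,0) +
    ff V g p (-1,-1) + ff V g p (0,-1)) / 2 := by
    unfold CC' Dirs
    repeat rw [Finset.sum_insert (by simp)]
    rw [Finset.sum_singleton]; ring
  rw [e]
  rw [mem_Dirs] at hu
  rcases hu with h | h | h | h | h | h <;> subst h <;> simp [rot] <;> ring

lemma bundle {V g} (hs : Hs V) (hc : Conc V g) {p q v a v'} (ha : a ∈ Dirs) (h : In V g p v a)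
    (hq : In V g q (v + a) (-a)) (hpq : p ≠ q) (h' : In V g p v' a)
    (hn' : ¬ In V g p (v' + a) (-a)) : In V g q (v' + a) (-a) := by
  have hn : ¬ In V g p (v + a) (-a) := fun hh => hpq (hh.unique (neg_mem ha) hq)
  have h1 := supp hs hc ha ha h hn h'
  have h2 := supp hs hc ha ha h' hn' h
  have e : v - v' = -(v' - v) := by abel
  rw [e, cr_neg_right] at h2
  have h0 : cr a (v' - v) = 0 := by omega
  have hx : v + a - rot a ∈ V := tri_opp_apex hq.1
  have hx' : v' + a - rot a ∈ V := by
    refine hs v' a _ ha h'.1 hx ?_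
    have e : v + a - rot a - v' = -(v' - v) + a - rot a := by abel
    rw [e, cr_sub_right, cr_add_right, cr_neg_right, h0, cr_self, cr_rot ha]; norm_num
  obtain ⟨q', hq'⟩ := exists_In g (neg_mem ha) (tri_opp h'.1 hx')
  suffices q' = q by rwa [← this]
  have d1 := h.eq_dp hq
  have d2 := h'.eq_dp hq'
  have m1 := maj hs hc (neg_mem ha) hq hx'
  have m2 := maj hs hc (neg_mem ha) hq' hx
  have s := same_aff hs hc (rsub_mem ha) (rsub_mem ha) h.rot h'.rot
  have e1 : v' + a - rot a - (v + a) = (v' - v) - rot a := by abel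
  have e2 : v + a - rot a - (v' + a) = - (v' - v) - rot a := by abel
  have e3 : v' + a - (v + a) = v' - v := by abel
  rw [e1, dp_sub, dp_decomp ha q (v' - v), h0] at m1
  rw [e2, dp_sub, dp_neg, dp_decomp ha q' (v' - v), h0] at m2
  rw [e3, dp_decomp ha p (v' - v), h0] at s
  have g1 := hq.2.2
  have g2 := hq'.2.2
  rw [rot_neg, dp_neg, ← sub_eq_add_neg] at g1 g2
  push_cast at m1 m2 s
  rw [← d1] at m1; rw [← d2] at m2
  refine dp_ext ha (by rw [← d1, ← d2]) ?_
  linarith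

lemma wct_le {V g} (hs : Hs V) (hc : Conc V g) {p q v a} (ha : a ∈ Dirs) (h : In V g p v a)
    (hq : In V g q (v + a) (-a)) (hpq : p ≠ q) : wct V g p a ≤ wct V g q (-a) := by
  unfold wct
  refine Finset.card_le_card_of_injOn (fun x => x + a) ?_ (fun x _ y _ h => add_right_cancel h)
  intro x hx
  simp only [Finset.coe_filter, Set.mem_setOf_eq] at hx ⊢
  have hb := bundle hs hc ha h hq hpq hx.2.1 hx.2.2
  refine ⟨hb.1.1, hb, ?_⟩
  rw [neg_neg]
  have e : x + a + -a = x := by abel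
  rw [e]
  exact fun hh => hpq (hx.2.1.unique ha hh)

lemma ff_eq {V g} (hs : Hs V) (hc : Conc V g) {p q v a} (ha : a ∈ Dirs) (h : In V g p v a)
    (hq : In V g q (v + a) (-a)) (hpq : p ≠ q) : ff V g p a = ff V g q (-a) := by
  have e : v + a + -a = v := by abel
  have h1 := wct_le hs hc ha h hq hpq
  have h2 := wct_le hs hc (neg_mem ha) hq (by rw [neg_neg, e]; exact h) hpq.symm
  rw [neg_neg] at h2
  unfold ff
  rw [le_antisymm h1 h2, dp_neg, isI_neg, h.eq_dp hq]

lemma half_other {V g} (hs : Hs V) (hc : Conc V g) {p q v a b} (h : Half V g p v a) (hb : b ∈ Dirs)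
    (hq : In V g q v b) (hpq : p ≠ q) : Half V g q v (-a) ∧ ff V g p a = ff V g q (-a) := by
  obtain ⟨ha, h1, h2, h3, h4⟩ := h
  have hcr := cr_rot ha
  have hb3 : b = -a ∨ b = -rot a ∨ b = a - rot a := by
    rcases dirs6 ha hb with h | h | h | h | h | h
    · subst h; exact absurd (h1.unique hb hq) hpq
    · subst h; exact absurd (h2.unique hb hq) hpq
    · subst h; exact absurd (h3.unique hb hq) hpq
    · exact Or.inl h
    · exact Or.inr (Or.inl h)
    · exact Or.inr (Or.inr h)
  have hx : ∃ x ∈ V, cr a (x - v) < 0 := by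
    rcases hb3 with h | h | h
    · refine ⟨_, hq.1.2.2, ?_⟩
      have e : v + rot b - v = rot b := by abel
      rw [e, h, rot_neg, cr_neg_right]; omega
    · refine ⟨_, hq.1.2.1, ?_⟩
      have e : v + b - v = b := by abel
      rw [e, h, cr_neg_right]; omega
    · refine ⟨_, hq.1.2.1, ?_⟩
      have e : v + b - v = b := by abel
      rw [e, h, cr_sub_right, cr_self]; omega
  obtain ⟨x, hxV, hx⟩ := hx
  have hA : v + a - rot a ∈ V := hs v a x ha h1.1 hxV hx
  have h3' := h3.rot'
  rw [rot_rsub, neg_neg] at h3'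
  have hB : v - rot a ∈ V := by
    have := hs _ _ x ha h3'.1 hxV (by
      have e : x - (v + -a) = x - v + a := by abel
      rw [e, cr_add_right, cr_self]; omega)
    have e : v + -a + a - rot a = v - rot a := by abel
    rwa [e] at this
  obtain ⟨q1, hq1⟩ := exists_In g (neg_mem ha) (tri_opp h1.1 hA)
  have hpq1 : p ≠ q1 := by
    rintro rfl
    exact h4 (slot_iff.1 hq1)
  have hn : ¬ In V g p v (-a) := by
    intro hh
    have := slots_R hs hc ha (neg_mem ha) h1 h4 hh
    rw [mem_Dirs] at ha
    rcases ha with rfl | rfl | rfl | rfl | rfl | rfl <;> simp [rot] at this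
  have e : v + -a + a = v := by abel
  have hb1 := bundle hs hc ha h1 hq1 hpq1 h3' (by rw [e]; exact hn)
  rw [e] at hb1
  have hs1 := slot_iff.1 hq1
  have hmid : In V g q1 v (-rot a) := by
    refine ⟨⟨h1.1.1, ?_, ?_⟩, ?_, ?_⟩
    · rw [← sub_eq_add_neg]; exact hB
    · rw [rot_neg, rot_rot]
      have e : v + -(rot a - a) = v + a - rot a := by abel
      rw [e]; exact hA
    · have := hb1.2.2
      rwa [rot_neg] at this
    · have := hs1.2.1
      rw [rot_neg, rot_rot, neg_sub]
      exact this
  have : q = q1 := by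
    rcases hb3 with h | h | h
    · subst h; exact hq.unique hb hb1
    · subst h; exact hq.unique hb hmid
    · subst h; exact hq.unique hb hs1
  subst this
  refine ⟨⟨neg_mem ha, hb1, ?_, ?_, ?_⟩, ff_eq hs hc ha h1 hq1 hpq⟩
  · rw [rot_neg]; exact hmid
  · rw [rot_neg]
    have e : -rot a - -a = a - rot a := by abel
    rw [e]; exact hs1
  · rw [rot_neg]
    have e : -a - -rot a = rot a - a := by abel
    rw [e]; exact fun hh => hpq (h3.unique (rsub_mem ha) hh)

/-- the local value of the spread function -/
def phip (V : Finset Z2) (g : Z2 → ℝ) (p : ℝ × ℝ) (v : Z2) : ℝ :=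
  if Full V g p v then CC' V g p else
    if h : ∃ u, Half V g p v u then ff V g p h.choose else 0

lemma phip_full {V g p v} (h : Full V g p v) : phip V g p v = CC' V g p := by
  unfold phip; rw [if_pos h]

lemma phip_half {V g} (hs : Hs V) (hc : Conc V g) {p v u} (h : Half V g p v u) :
    phip V g p v = ff V g p u := by
  unfold phip
  rw [if_neg h.not_full]
  have hex : ∃ u, Half V g p v u := ⟨u, h⟩
  rw [dif_pos hex]
  rw [hex.choose_spec.uniq h.1 (fun b hb hh => h.slots hs hc hb hh)]

lemma phip_none {V g p v} (h : ¬ Full V g p v) (h' : ∀ u, ¬ Half V g p v u) :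
    phip V g p v = 0 := by
  unfold phip
  rw [if_neg h, dif_neg (by push Not; exact h')]

lemma phip_cons {V g} (hs : Hs V) (hc : Conc V g) {p q v a b} (ha : a ∈ Dirs) (hb : b ∈ Dirs)
    (hp : In V g p v a) (hq : In V g q v b) : phip V g p v = phip V g q v := by
  by_cases hpq : p = q
  · rw [hpq]
  have nF1 : ¬ Full V g p v := fun hF => hpq ((hF b hb).unique hb hq)
  have nF2 : ¬ Full V g q v := fun hF => hpq (hp.unique ha (hF a ha))
  by_cases h1 : ∃ u, Half V g p v u
  · obtain ⟨u, hu⟩ := h1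
    obtain ⟨h2, h3⟩ := half_other hs hc hu hb hq hpq
    rw [phip_half hs hc hu, phip_half hs hc h2, h3]
  by_cases h2 : ∃ u, Half V g q v u
  · obtain ⟨u, hu⟩ := h2
    exact absurd ⟨_, (half_other hs hc hu ha hp (Ne.symm hpq)).1⟩ h1
  push Not at h1 h2
  rw [phip_none nF1 h1, phip_none nF2 h2]

lemma phip_le_ff {V g} (hs : Hs V) (hc : Conc V g) {p v a} (ha : a ∈ Dirs)
    (hsl : ∀ b ∈ Dirs, In V g p v b → b = a ∨ b = rot a ∨ b = rot a - a) :
    phip V g p v ≤ ff V g p a := by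
  have nF : ¬ Full V g p v := by
    intro hF
    have := hsl _ (neg_mem ha) (hF _ (neg_mem ha))
    rw [mem_Dirs] at ha
    rcases ha with rfl | rfl | rfl | rfl | rfl | rfl <;> simp [rot] at this
  by_cases h1 : ∃ u, Half V g p v u
  · obtain ⟨u, hu⟩ := h1
    rw [phip_half hs hc hu, hu.uniq ha hsl]
  push Not at h1
  rw [phip_none nF h1]; exact ff_nonneg _ _ _ _

lemma phip_nonneg {V g} (hs : Hs V) (hc : Conc V g) (p v) : 0 ≤ phip V g p v := by
  by_cases h1 : ∃ u, Half V g p v u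
  · obtain ⟨u, hu⟩ := h1
    rw [phip_half hs hc hu]; exact ff_nonneg _ _ _ _
  by_cases h2 : Full V g p v
  · rw [phip_full h2]; unfold CC'
    exact div_nonneg (Finset.sum_nonneg (fun _ _ => ff_nonneg _ _ _ _)) (by norm_num)
  push Not at h1
  rw [phip_none h2 h1]

lemma bd2a {V g} (hs : Hs V) (hc : Conc V g) {p v a} (ha : a ∈ Dirs) (h : In V g p v a)
    (hn : ¬ In V g p v (a - rot a)) : phip V g p v ≤ ff V g p a :=
  phip_le_ff hs hc ha (fun _ hb h' => slots_R hs hc ha hb h hn h')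

lemma bd2b {V g} (hs : Hs V) (hc : Conc V g) {p v a} (ha : a ∈ Dirs) (h : In V g p v a)
    (hn : ¬ In V g p v (a - rot a)) : phip V g p (v + a) ≤ ff V g p a := by
  refine phip_le_ff hs hc ha (fun b hb h' => ?_)
  have := slots_L hs hc (rsub_mem ha) hb h.rot (by rw [rot_rsub]; rwa [slot_iff]) h'
  rw [rot_rsub] at this
  rcases this with h | h | h
  · exact Or.inr (Or.inr h)
  · right; left; rw [h]; abel
  · left; rw [h]; abel

lemma corner_zero {V g} (hs : Hs V) (hc : Conc V g) {p v a} (ha : a ∈ Dirs) (h : In V g p v a)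
    (hn : ¬ In V g p v (a - rot a)) (hn' : ¬ In V g p v (rot a)) : phip V g p v = 0 := by
  refine phip_none (fun hF => hn (hF _ (subr_mem ha))) (fun u hu => ?_)
  have := hu.uniq ha (fun b hb h' => slots_R hs hc ha hb h hn h')
  rw [this] at hu
  exact hn' hu.2.2.1

end TG

namespace TG

def nct (V : Finset Z2) (g : Z2 → ℝ) (p : ℝ × ℝ) (u : Z2) : ℕ := (V.filter (fun v => In V g p v u)).card
def tct (V : Finset Z2) (g : Z2 → ℝ) (p : ℝ × ℝ) (u : Z2) : ℕ :=
  (V.filter (fun v => In V g p v u ∧ In V g p (v + u) (-u))).card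

lemma nct_eq (V g p u) : nct V g p u = tct V g p u + wct V g p u := by
  unfold nct tct wct
  rw [← Finset.filter_filter, ← Finset.filter_filter, Finset.card_filter_add_card_filter_not]

lemma tct_le (V g p u) : tct V g p u ≤ tct V g p (-u) := by
  unfold tct
  refine Finset.card_le_card_of_injOn (fun x => x + u) ?_ (fun x _ y _ h => add_right_cancel h)
  intro x hx
  simp only [Finset.coe_filter, Set.mem_ofPred_eq] at hx ⊢
  refine ⟨hx.2.2.1.1, hx.2.2, ?_⟩
  have e : x + u + -u = x := by abel
  rw [neg_neg, e]; exact hx.2.1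

lemma tct_eq (V g p u) : tct V g p u = tct V g p (-u) := by
  refine le_antisymm (tct_le _ _ _ _) ?_
  have := tct_le V g p (-u)
  rwa [neg_neg] at this

lemma nct_le (V g p u) : nct V g p u ≤ nct V g p (rot u - u) := by
  unfold nct
  refine Finset.card_le_card_of_injOn (fun x => x + u) ?_ (fun x _ y _ h => add_right_cancel h)
  intro x hx
  simp only [Finset.coe_filter, Set.mem_ofPred_eq] at hx ⊢
  exact ⟨hx.2.1.2.1, hx.2.rot⟩

lemma nct_rot (V g p u) : nct V g p u = nct V g p (rot u - u) := by
  refine le_antisymm (nct_le _ _ _ _) ?_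
  have h1 := nct_le V g p (rot u - u)
  have h2 := nct_le V g p (rot (rot u - u) - (rot u - u))
  have e : rot (rot (rot u - u) - (rot u - u)) - (rot (rot u - u) - (rot u - u)) = u := by
    simp only [rot_rot, rot_sub, rot_neg]; abel
  rw [e] at h2
  omega

lemma balance (V g p u) : (wct V g p u : ℝ) - wct V g p (-u) =
    wct V g p (rot u - u) - wct V g p (u - rot u) := by
  have h1 := nct_eq V g p u
  have h2 := nct_eq V g p (-u)
  have h3 := nct_eq V g p (rot u - u)
  have h4 := nct_eq V g p (u - rot u)
  have h5 := tct_eq V g p u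
  have h6 := tct_eq V g p (rot u - u)
  rw [neg_sub] at h6
  have h7 := nct_rot V g p u
  have h8 := nct_rot V g p (-u)
  rw [rot_neg] at h8
  have e : -rot u - -u = u - rot u := by abel
  rw [e] at h8
  have : (wct V g p u : ℤ) - wct V g p (-u) = wct V g p (rot u - u) - wct V g p (u - rot u) := by
    omega
  exact_mod_cast this

/-- all six values, by integrality type -/
lemma ff_cases (V g p u) :
    ∃ w0 w1 w2 w3 w4 w5 : ℝ, 0 ≤ w0 ∧ 0 ≤ w1 ∧ 0 ≤ w2 ∧ 0 ≤ w3 ∧ 0 ≤ w4 ∧ 0 ≤ w5 ∧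
    w1 = wct V g p (rot u) ∧
    w0 - w3 = w2 - w5 ∧ w2 - w5 = w4 - w1 ∧
    ∃ P0 P1 P2 : Prop, (P0 → P1 → P2) ∧ (P0 → P2 → P1) ∧ (P1 → P2 → P0) ∧
    ff V g p u = (if P0 then 0 else w0) ∧ ff V g p (rot u) = (if P1 then 0 else w1) ∧
    ff V g p (rot u - u) = (if P2 then 0 else w2) ∧ ff V g p (-u) = (if P0 then 0 else w3) ∧
    ff V g p (-rot u) = (if P1 then 0 else w4) ∧ ff V g p (u - rot u) = (if P2 then 0 else w5) := by
  refine ⟨wct V g p u, wct V g p (rot u), wct V g p (rot u - u), wct V g p (-u),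
    wct V g p (-rot u), wct V g p (u - rot u), by positivity, by positivity, by positivity,
    by positivity, by positivity, by positivity, rfl, balance V g p u, ?_,
    IsI (dp p u), IsI (dp p (rot u)), IsI (dp p (rot u - u)), ?_, ?_, ?_, rfl, rfl, rfl, ?_, ?_, ?_⟩
  · have := balance V g p (rot u - u)
    rw [rot_rsub, neg_sub] at this
    rw [this]
    congr 3 <;> abel
  · rw [dp_sub]; exact fun a b => b.sub a
  · rw [dp_sub]; intro a b; simpa using b.add a
  · rw [dp_sub]; intro a b; simpa using a.sub b
  · unfold ff; rw [dp_neg, isI_neg]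
  · unfold ff; rw [dp_neg, isI_neg]
  · unfold ff
    have : dp p (u - rot u) = - dp p (rot u - u) := by rw [← dp_neg, neg_sub]
    rw [this, isI_neg]

lemma beta {u : Z2} (hu : u ∈ Dirs) (V g p) : ff V g p u + ff V g p (rot u) ≤ CC' V g p := by
  have h := CC_eq hu V g p
  obtain ⟨w0, w1, w2, w3, w4, w5, h0, h1, h2, h3, h4, h5, -, b1, b2, P0, P1, P2, p1, p2, p3,
    f0, f1, f2, f3, f4, f5⟩ := ff_cases V g p u
  rw [f0, f1, f2, f3, f4, f5] at h
  rw [f0, f1]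
  clear f0 f1 f2 f3 f4 f5
  by_cases q0 : P0 <;> by_cases q1 : P1 <;> by_cases q2 : P2 <;>
    first
    | exact absurd (p1 q0 q1) q2
    | exact absurd (p2 q0 q2) q1
    | exact absurd (p3 q1 q2) q0
    | (simp only [q0, q1, q2, if_true, if_false] at h ⊢
       linarith)

lemma ff_le_C {u : Z2} (hu : u ∈ Dirs) (V g p) : ff V g p u ≤ CC' V g p := by
  have := beta hu V g p
  have := ff_nonneg V g p (rot u)
  linarith

lemma bd1 {V g} (hs : Hs V) (hc : Conc V g) (p v) : phip V g p v ≤ CC' V g p := by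
  by_cases h1 : ∃ u, Half V g p v u
  · obtain ⟨u, hu⟩ := h1
    rw [phip_half hs hc hu]; exact ff_le_C hu.1 _ _ _
  by_cases h2 : Full V g p v
  · rw [phip_full h2]
  push Not at h1
  rw [phip_none h2 h1]
  exact (ff_nonneg _ _ _ _).trans (ff_le_C (u := (1,0)) (by simp [Dirs]) V g p)

lemma gd {u : Z2} (hu : u ∈ Dirs) {V g p} (h0 : wct V g p (rot u) = 0) :
    CC' V g p ≤ ff V g p u + ff V g p (rot u - u) ∧ ff V g p (-u) ≤ ff V g p u ∧
    ff V g p (u - rot u) ≤ ff V g p (rot u - u) := by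
  have h := CC_eq hu V g p
  obtain ⟨w0, w1, w2, w3, w4, w5, g0, g1, g2, g3, g4, g5, hw1, b1, b2, P0, P1, P2, p1, p2, p3,
    f0, f1, f2, f3, f4, f5⟩ := ff_cases V g p u
  rw [h0] at hw1
  push_cast at hw1
  rw [f0, f1, f2, f3, f4, f5] at h
  rw [f0, f2, f3, f5]
  clear f0 f1 f2 f3 f4 f5
  refine ⟨?_, ?_, ?_⟩ <;>
  by_cases q0 : P0 <;> by_cases q1 : P1 <;> by_cases q2 : P2 <;>
    first
    | exact absurd (p1 q0 q1) q2
    | exact absurd (p2 q0 q2) q1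
    | exact absurd (p3 q1 q2) q0
    | (simp only [q0, q1, q2, if_true, if_false] at h ⊢
       linarith)

lemma wct_zero {V g} (hs : Hs V) (hc : Conc V g) {p v u} (hu : u ∈ Dirs) (h : In V g p v u)
    (h1 : ¬ In V g p (v + u) (-u)) (h2 : ¬ In V g p (v + rot u) (u - rot u)) :
    wct V g p (rot u) = 0 := by
  unfold wct
  rw [Finset.card_eq_zero, Finset.filter_eq_empty_iff]
  rintro v' - ⟨h', hn'⟩
  have hc0 := cr_rot hu
  have hsw := cr_swap u (rot u)
  have s1 := supp hs hc hu (rot_mem hu) h h1 h'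
  have s2 := supp hs hc (rsub_mem hu) (rsub_mem (rot_mem hu)) h.rot (by
    have e : v + u + (rot u - u) = v + rot u := by abel
    rw [e, neg_sub]; exact h2) h'.rot
  have s3 := supp hs hc (rot_mem hu) (rsub_mem hu) h' hn' h.rot
  have e2 : v' + rot u - (v + u) = (v' - v) + (rot u - u) := by abel
  have e3 : v + u - v' = u - (v' - v) := by abel
  rw [e2, cr_add_right, cr_self, cr_sub_left] at s2
  rw [e3, cr_sub_right] at s3
  omega

lemma gammaL {V g} (hs : Hs V) (hc : Conc V g) {p v u} (hu : u ∈ Dirs) (h : In V g p v u)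
    (h1 : ¬ In V g p v (u - rot u)) (h2 : ¬ In V g p (v + rot u) (u - rot u)) :
    phip V g p (v + u) = 0 ∧
    CC' V g p ≤ ff V g p u + ff V g p (rot u - u) ∧ ff V g p (-u) ≤ ff V g p u ∧
    ff V g p (u - rot u) ≤ ff V g p (rot u - u) := by
  rw [← slot_iff] at h1
  refine ⟨corner_zero hs hc (rsub_mem hu) h.rot ?_ ?_, gd hu (wct_zero hs hc hu h h1 h2)⟩
  · rw [← slot_iff]
    have e : v + u + (rot u - u) = v + rot u := by abel
    rw [e, neg_sub]; exact h2
  · rw [rot_rsub]; exact h1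

lemma outcome {V g} (hs : Hs V) (hc : Conc V g) {p v u} (hu : u ∈ Dirs) (h : In V g p v u)
    (h' : In V g p v (u - rot u)) :
    phip V g p v = CC' V g p ∨ (phip V g p v = ff V g p (u - rot u) ∧ ¬ In V g p v (-rot u)) ∨
    (phip V g p v = ff V g p (-rot u) ∧ ¬ In V g p v (rot u)) ∨
    (phip V g p v = 0 ∧ ¬ In V g p v (-rot u) ∧ ¬ In V g p v (rot u)) := by
  have e1 : u - rot u - u = - rot u := by abel
  by_cases ha : In V g p v (rot u) <;> by_cases hb : In V g p v (-rot u)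
  · left
    apply phip_full
    have h3 : In V g p v (rot u - u) := by
      by_contra hh
      have := slots_L hs hc (rot_mem hu) (negrot_mem hu) ha (by rwa [rot_rot]) hb
      rw [mem_Dirs] at hu
      rcases hu with rfl | rfl | rfl | rfl | rfl | rfl <;> simp [rot] at this
    have h4 : In V g p v (-u) := by
      by_contra hh
      have := slots_R hs hc (negrot_mem hu) (rot_mem hu) hb (by
        rw [rot_neg, rot_rot]
        have : -rot u - -(rot u - u) = -u := by abel
        rwa [this]) ha
      rw [mem_Dirs] at hu
      rcases hu with rfl | rfl | rfl | rfl | rfl | rfl <;> simp [rot] at this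
    intro b hb'
    rcases dirs6 hu hb' with h | h | h | h | h | h <;> subst h <;> assumption
  · right; left
    refine ⟨phip_half hs hc ⟨subr_mem hu, h', ?_, ?_, ?_⟩, hb⟩
    · rwa [rot_subr]
    · rw [rot_subr]
      have : u - (u - rot u) = rot u := by abel
      rwa [this]
    · rwa [rot_subr, e1]
  · right; right; left
    refine ⟨phip_half hs hc ⟨negrot_mem hu, hb, ?_, ?_, ?_⟩, ha⟩
    · rw [rot_neg, rot_rot, neg_sub]; exact h'
    · rw [rot_neg, rot_rot]
      have : -(rot u - u) - -rot u = u := by abel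
      rwa [this]
    · rw [rot_neg, rot_rot]
      have : -rot u - -(rot u - u) = -u := by abel
      rw [this]
      intro hh
      have := slots_L hs hc hu (neg_mem hu) h ha hh
      rw [mem_Dirs] at hu
      rcases hu with rfl | rfl | rfl | rfl | rfl | rfl <;> simp [rot] at this
  · right; right; right
    refine ⟨phip_none (fun hF => ha (hF _ (rot_mem hu))) (fun y hy => ?_), hb, ha⟩
    have := slots_L hs hc hu hy.1 h ha hy.2.1
    have h2 := slots_L hs hc hu (rot_mem hy.1) h ha hy.2.2.1
    have h3 := slots_L hs hc hu (rsub_mem hy.1) h ha hy.2.2.2.1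
    have hb' := hb
    rcases this with rfl | rfl | rfl
    · exact ha hy.2.2.1
    · rw [rot_subr] at h3
      have : u - (u - rot u) = rot u := by abel
      rw [this] at h3
      rcases h3 with h3 | h3 | h3
      · rw [h3] at ha; exact ha h
      · rw [h3] at ha; exact ha h'
      · rw [mem_Dirs] at hu
        rcases hu with rfl | rfl | rfl | rfl | rfl | rfl <;> simp [rot] at h3
    · exact hb hy.2.1

lemma feas {V g} (hs : Hs V) (hc : Conc V g) {p v u} (hu : u ∈ Dirs) (h : In V g p v u)
    (h' : In V g p (v + u) (-u)) : 0 ≤ sl (phip V g p) v u := by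
  have hb' := slot_iff.1 h'
  have hd' := h.rot
  have ob := outcome hs hc hu h hb'
  have od := outcome hs hc (v := v + u) (neg_mem hu) h' (by
    rw [rot_neg]; have e : -u - -rot u = rot u - u := by abel
    rw [e]; exact hd')
  rw [rot_neg, neg_neg] at od
  have e0 : -u - -rot u = rot u - u := by abel
  rw [e0] at od
  have ea : v + (u - rot u) = v + u - rot u := by abel
  have ec : v + u + (rot u - u) = v + rot u := by abel
  have A1 : ¬ In V g p v (-rot u) → phip V g p (v + u - rot u) ≤ ff V g p (u - rot u) := by
    intro hn
    have := bd2b hs hc (subr_mem hu) hb' (by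
      rw [rot_subr]; have e : u - rot u - u = -rot u := by abel
      rwa [e])
    rwa [ea] at this
  have C1 : ¬ In V g p (v + u) (rot u) → phip V g p (v + rot u) ≤ ff V g p (rot u - u) := by
    intro hn
    have := bd2b hs hc (rsub_mem hu) hd' (by
      rw [rot_rsub]; have e : rot u - u - -u = rot u := by abel
      rwa [e])
    rwa [ec] at this
  have A2 : ¬ In V g p (v + u) (-rot u) → phip V g p (v + u - rot u) ≤ ff V g p (rot u) := by
    intro hn
    -- flag (v+u-rot u, rot u)
    have h3 := h'.rot'
    rw [rot_neg, neg_neg, ← sub_eq_add_neg] at h3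
    refine bd2a hs hc (rot_mem hu) h3 ?_
    rw [← slot_iff]
    have e : v + u - rot u + rot u = v + u := by abel
    rwa [e]
  have C2 : ¬ In V g p v (rot u) → phip V g p (v + rot u) ≤ ff V g p (-rot u) := by
    intro hn
    refine bd2a hs hc (negrot_mem hu) h.rot' ?_
    rw [← slot_iff]
    have e : v + rot u + -rot u = v := by abel
    rwa [e, neg_neg]
  have GA : ¬ In V g p v (-rot u) → ¬ In V g p (v + u) (-rot u) →
      phip V g p (v + u - rot u) = 0 ∧ CC' V g p ≤ ff V g p (u - rot u) + ff V g p (rot u) ∧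
      ff V g p (rot u - u) ≤ ff V g p (u - rot u) ∧ ff V g p (-rot u) ≤ ff V g p (rot u) := by
    intro h1 h2
    have e1 : u - rot u - u = -rot u := by abel
    have e2 : u - (u - rot u) = rot u := by abel
    have := gammaL hs hc (subr_mem hu) hb' (by rwa [rot_subr, e1]) (by rwa [rot_subr, e1])
    rw [rot_subr, ea, e1, e2, neg_sub] at this
    exact this
  have GC : ¬ In V g p v (rot u) → ¬ In V g p (v + u) (rot u) →
      phip V g p (v + rot u) = 0 ∧ CC' V g p ≤ ff V g p (rot u - u) + ff V g p (-rot u) ∧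
      ff V g p (u - rot u) ≤ ff V g p (rot u - u) ∧ ff V g p (rot u) ≤ ff V g p (-rot u) := by
    intro h1 h2
    have e1 : rot u - u - -u = rot u := by abel
    have e2 : -u - (rot u - u) = -rot u := by abel
    have e3 : v + u + -u = v := by abel
    have := gammaL hs hc (rsub_mem hu) hd' (by rwa [rot_rsub, e1]) (by rwa [rot_rsub, e1, e3])
    rw [rot_rsub, ec, e1, e2, neg_sub] at this
    exact this
  have b1 := beta (rot_mem hu) V g p
  rw [rot_rot] at b1
  have b2 := beta (negrot_mem hu) V g p
  rw [rot_neg, rot_rot, neg_sub] at b2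
  have n1 := phip_nonneg hs hc p v
  have n2 := phip_nonneg hs hc p (v + u)
  have n3 := ff_nonneg V g p (rot u)
  have n4 := ff_nonneg V g p (-rot u)
  have n5 := ff_nonneg V g p (rot u - u)
  have n6 := ff_nonneg V g p (u - rot u)
  have m1 := bd1 hs hc p (v + rot u)
  have m2 := bd1 hs hc p (v + u - rot u)
  unfold sl
  rcases ob with ob | ⟨ob, k1⟩ | ⟨ob, k2⟩ | ⟨ob, k1, k2⟩ <;>
  rcases od with od | ⟨od, l1⟩ | ⟨od, l2⟩ | ⟨od, l1, l2⟩
  all_goals try have a1 := A1 k1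
  all_goals try have c2 := C2 k2
  all_goals try have c1 := C1 l1
  all_goals try have a2 := A2 l2
  all_goals try have ga := GA k1 l2
  all_goals try have gc := GC k2 l1
  all_goals clear A1 A2 C1 C2 GA GC
  all_goals rw [ob, od]
  all_goals try have ga1 := ga.1
  all_goals try have ga2 := ga.2.1
  all_goals try have ga3 := ga.2.2.1
  all_goals try have ga4 := ga.2.2.2
  all_goals try have gc1 := gc.1
  all_goals try have gc2 := gc.2.1
  all_goals try have gc3 := gc.2.2.1
  all_goals try have gc4 := gc.2.2.2
  all_goals linarith

end TG

namespace TG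

def Tight (V : Finset Z2) (g : Z2 → ℝ) (v u : Z2) : Prop :=
  Tri V v u ∧ Tri V (v + u) (-u) ∧ sl g v u = 0

lemma sl_symm (g v u) : sl g (v + u) (-u) = sl g v u := by
  unfold sl
  have e1 : v + u + -u = v := by abel
  have e2 : v + u + rot (-u) = v + u - rot u := by rw [rot_neg]; abel
  have e3 : v - rot (-u) = v + rot u := by rw [rot_neg]; abel
  rw [e2, e1, e3]; ring

lemma Tight.symm {V g v u} (h : Tight V g v u) : Tight V g (v + u) (-u) := by
  refine ⟨h.2.1, ?_, by rw [sl_symm]; exact h.2.2⟩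
  have e : v + u + -u = v := by abel
  rw [neg_neg, e]; exact h.1

lemma tight_iff {V g p v u} (h : In V g p v u) : Tight V g v u ↔ In V g p (v + u) (-u) := by
  constructor
  · intro ht
    exact h.cross (tri_opp_apex ht.2.1) ht.2.2
  · intro h'
    refine ⟨h.1, h'.1, ?_⟩
    rw [h.sl_eq h', sub_self]

/-- the global spread function -/
def phi (V : Finset Z2) (g : Z2 → ℝ) (v : Z2) : ℝ :=
  if h : ∃ p u, u ∈ Dirs ∧ In V g p v u then phip V g h.choose v else 0

lemma phi_eq {V g} (hs : Hs V) (hc : Conc V g) {p v u} (hu : u ∈ Dirs) (h : In V g p v u) :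
    phi V g v = phip V g p v := by
  have hex : ∃ p u, u ∈ Dirs ∧ In V g p v u := ⟨p, u, hu, h⟩
  unfold phi
  rw [dif_pos hex]
  obtain ⟨u', hu', h'⟩ := hex.choose_spec
  exact phip_cons hs hc hu' hu h' h

lemma phi_nonneg {V g} (hs : Hs V) (hc : Conc V g) (v) : 0 ≤ phi V g v := by
  unfold phi
  split_ifs
  · exact phip_nonneg hs hc _ _
  · exact le_rfl

lemma phi_off {V g v} (hv : v ∉ V) : phi V g v = 0 := by
  unfold phi
  rw [dif_neg]
  rintro ⟨p, u, -, h⟩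
  exact hv h.1.1

lemma phi_f1 {V g} (hs : Hs V) (hc : Conc V g) {v u} (hu : u ∈ Dirs) (ht : Tight V g v u) :
    0 ≤ sl (phi V g) v u := by
  obtain ⟨p, hp⟩ := exists_In g hu ht.1
  have hp' := (tight_iff hp).1 ht
  have h := feas hs hc hu hp hp'
  unfold sl at *
  rw [phi_eq hs hc hu hp, phi_eq hs hc (neg_mem hu) hp', phi_eq hs hc (negrot_mem hu) hp.rot']
  have h4 := hp'.rot'
  rw [rot_neg, ← sub_eq_add_neg] at h4
  rw [phi_eq hs hc (neg_mem (negrot_mem hu)) h4]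
  exact h

lemma phi_f2 {V g} (hs : Hs V) (hc : Conc V g) {v u} (hu : u ∈ Dirs) (ht : Tri V v u)
    (hn : ¬ Tight V g v u) (hi : IsI (g (v + u) - g v)) : phi V g (v + u) = phi V g v := by
  obtain ⟨p, hp⟩ := exists_In g hu ht
  rw [tight_iff hp, slot_iff] at hn
  rw [hp.2.1] at hi
  have h0 : ff V g p u = 0 := by unfold ff; rw [if_pos hi]
  have h1 := bd2a hs hc hu hp hn
  have h2 := bd2b hs hc hu hp hn
  have h3 := phip_nonneg hs hc p v
  have h4 := phip_nonneg hs hc p (v + u)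
  rw [phi_eq hs hc hu hp, phi_eq hs hc (rsub_mem hu) hp.rot]
  linarith

lemma all_int {p u} (hu : u ∈ Dirs) (h1 : IsI (dp p u)) (h2 : IsI (dp p (rot u))) :
    ∀ a ∈ Dirs, IsI (dp p a) := by
  intro a ha
  rcases dirs6 hu ha with h | h | h | h | h | h <;> subst h
  · exact h1
  · exact h2
  · rw [dp_sub]; exact h2.sub h1
  · rw [dp_neg]; exact h1.neg
  · rw [dp_neg]; exact h2.neg
  · rw [dp_sub]; exact h1.sub h2

lemma phi_f3 {V g} (hs : Hs V) (hc : Conc V g) {v u} (hu : u ∈ Dirs) (ht : Tri V v u)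
    (hi : IsI (g (v + u) - g v)) (hi' : IsI (g (v + rot u) - g v)) : phi V g v = 0 := by
  obtain ⟨p, hp⟩ := exists_In g hu ht
  rw [hp.2.1] at hi
  rw [hp.2.2] at hi'
  rw [phi_eq hs hc hu hp]
  have h1 := bd1 hs hc p v
  have h2 := phip_nonneg hs hc p v
  have h3 : CC' V g p = 0 := by
    unfold CC'
    rw [Finset.sum_eq_zero]; · norm_num
    intro a ha; unfold ff; rw [if_pos (all_int hu hi hi' a ha)]
  linarith

def LexMax (V : Finset Z2) (v0 : Z2) : Prop :=
  v0 ∈ V ∧ ∀ x ∈ V, x.1 < v0.1 ∨ (x.1 = v0.1 ∧ x.2 ≤ v0.2)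

lemma phi_v0 {V g v0} (h0 : LexMax V v0) : phi V g v0 = 0 := by
  unfold phi
  split_ifs with h
  swap
  · rfl
  have key : ∀ u ∈ Dirs, v0 + u ∈ V → v0 + -u ∈ V → False := by
    intro u hu h1 h2
    have a1 := h0.2 _ h1
    have a2 := h0.2 _ h2
    rw [mem_Dirs] at hu
    rcases hu with rfl | rfl | rfl | rfl | rfl | rfl <;> simp at a1 a2
  apply phip_none
  · intro hF
    have k1 : ((1,0) : Z2) ∈ Dirs := by simp [Dirs]
    exact key (1,0) k1 (hF _ k1).1.2.1 (hF _ (neg_mem k1)).1.2.1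
  · intro u hu
    have := hu.2.2.2.1.1.2.2
    rw [rot_rsub] at this
    exact key u hu.1 hu.2.1.1.2.1 this

/-- consequence of maximality -/
def Good (V : Finset Z2) (g : Z2 → ℝ) : Prop :=
  (∀ p v, Full V g p v → ∀ a ∈ Dirs, IsI (dp p a)) ∧
  (∀ p v u, Half V g p v u → IsI (dp p u))

lemma nonint_pair {p : ℝ × ℝ} (h : ¬ ∀ a ∈ Dirs, IsI (dp p a)) :
    ∃ a ∈ Dirs, ¬ IsI (dp p a) ∧ ¬ IsI (dp p (rot a)) := by
  have k : ((1,0) : Z2) ∈ Dirs := by simp [Dirs]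
  have e2 : dp p (rot (rot (1,0))) = dp p (rot (1,0)) - dp p (1,0) := by rw [rot_rot, dp_sub]
  have e3 : dp p (rot (rot (rot (1,0)))) = - dp p (1,0) := by
    rw [rot_rot (rot (1,0)), rot_rot, ← dp_neg]; congr 1
  by_cases q0 : IsI (dp p (1,0))
  · have q1 : ¬ IsI (dp p (rot (1,0))) := fun q1 => h (all_int k q0 q1)
    refine ⟨rot (1,0), rot_mem k, q1, ?_⟩
    rw [e2]
    intro hh
    apply q1
    simpa using hh.add q0
  · by_cases q1 : IsI (dp p (rot (1,0)))
    · refine ⟨rot (rot (1,0)), rot_mem (rot_mem k), ?_, ?_⟩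
      · rw [e2]; intro hh
        apply q0
        have := q1.sub hh
        simpa using this
      · rw [e3, isI_neg]; exact q0
    · exact ⟨_, k, q0, q1⟩

lemma CC_pos {V g} {p v} (hF : Full V g p v) (h : ¬ ∀ a ∈ Dirs, IsI (dp p a)) :
    0 < CC' V g p := by
  obtain ⟨a, ha, n1, n2⟩ := nonint_pair h
  by_contra hcon
  have b := beta ha V g p
  have b1 := ff_nonneg V g p a
  have b2 := ff_nonneg V g p (rot a)
  have z1 : ff V g p a = 0 := by linarith
  have z2 : ff V g p (rot a) = 0 := by linarith
  unfold ff at z1 z2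
  rw [if_neg n1] at z1
  rw [if_neg n2] at z2
  have z1' : wct V g p a = 0 := by exact_mod_cast z1
  have z2' : wct V g p (rot a) = 0 := by exact_mod_cast z2
  unfold wct at z1' z2'
  rw [Finset.card_eq_zero, Finset.filter_eq_empty_iff] at z1' z2'
  have step : ∀ x, In V g p x a → In V g p (x + (a - rot a)) a := by
    intro x hx
    have h1 : In V g p (x + a) (-a) := by
      by_contra hh; exact z1' hx.1.1 ⟨hx, hh⟩
    rw [slot_iff] at h1
    have h2 := h1.rot
    rw [rot_subr] at h2
    have e : a - (a - rot a) = rot a := by abel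
    rw [e] at h2
    have h3 : In V g p (x + (a - rot a) + rot a) (-rot a) := by
      by_contra hh; exact z2' h2.1.1 ⟨h2, hh⟩
    rw [slot_iff, rot_rot] at h3
    have e : rot a - (rot a - a) = a := by abel
    rwa [e] at h3
  have all : ∀ n : ℕ, In V g p (v + n • (a - rot a)) a := by
    intro n
    induction n with
    | zero => simpa using hF a ha
    | succ n ih =>
      have := step _ ih
      rwa [succ_nsmul, ← add_assoc]
  have hinj : Function.Injective (fun n : ℕ => v + n • (a - rot a)) := by
    intro m n hmn
    have h1 : m • (a - rot a) = n • (a - rot a) := add_left_cancel hmn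
    rw [mem_Dirs] at ha
    rcases ha with rfl | rfl | rfl | rfl | rfl | rfl <;> simpa [rot] using h1
  have : Set.Infinite (Set.range (fun n : ℕ => v + n • (a - rot a))) := Set.infinite_range_of_injective hinj
  refine this (V.finite_toSet.subset ?_)
  rintro x ⟨n, rfl⟩
  exact (all n).1.1

lemma good_of_phi {V g} (hs : Hs V) (hc : Conc V g) (h : ∀ v, phi V g v = 0) : Good V g := by
  constructor
  · intro p v hF
    by_contra hcon
    have k : ((1,0) : Z2) ∈ Dirs := by simp [Dirs]
    have := h v
    rw [phi_eq hs hc k (hF _ k), phip_full hF] at this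
    have := CC_pos hF hcon
    linarith
  · intro p v u hH
    by_contra hcon
    have := h v
    rw [phi_eq hs hc hH.1 hH.2.1, phip_half hs hc hH] at this
    unfold ff at this
    rw [if_neg hcon] at this
    have h0 : wct V g p u = 0 := by exact_mod_cast this
    unfold wct at h0
    rw [Finset.card_eq_zero, Finset.filter_eq_empty_iff] at h0
    refine h0 hH.2.1.1.1 ⟨hH.2.1, ?_⟩
    rw [slot_iff]; exact hH.2.2.2.2

/-- three consecutive slots -/
lemma three {V g} (hs : Hs V) (hc : Conc V g) (hg : Good V g) {p v u} (hu : u ∈ Dirs)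
    (h1 : In V g p v u) (h2 : In V g p v (rot u)) (h3 : In V g p v (rot u - u)) :
    IsI (dp p u) := by
  by_cases h4 : In V g p v (u - rot u)
  · refine hg.1 p v ?_ u hu
    have h5 : In V g p v (-u) := by
      by_contra hh
      have := slots_L hs hc (rsub_mem hu) (subr_mem hu) h3 (by rwa [rot_rsub]) h4
      rw [rot_rsub] at this
      rw [mem_Dirs] at hu
      rcases hu with rfl | rfl | rfl | rfl | rfl | rfl <;> simp [rot] at this
    have h6 : In V g p v (-rot u) := by
      by_contra hh
      have := slots_R hs hc (subr_mem hu) (rsub_mem hu) h4 (by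
        rw [rot_subr]
        have e : u - rot u - u = -rot u := by abel
        rwa [e]) h3
      rw [rot_subr] at this
      rw [mem_Dirs] at hu
      rcases hu with rfl | rfl | rfl | rfl | rfl | rfl <;> simp [rot] at this
    intro b hb
    rcases dirs6 hu hb with h | h | h | h | h | h <;> subst h <;> assumption
  · exact hg.2 p v u ⟨hu, h1, h2, h3, h4⟩

def iNT (V : Finset Z2) (g : Z2 → ℝ) (v u : Z2) : Prop := IsI (g (v + u) - g v) ∧ ¬ Tight V g v u
def NI (V : Finset Z2) (g : Z2 → ℝ) (v u : Z2) : Prop :=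
  Tri V v u ∧ ¬ (IsI (g (v + u) - g v) ∧ IsI (g (v + rot u) - g v))
def U2 (V : Finset Z2) (g : Z2 → ℝ) (v u : Z2) : Prop :=
  NI V g v u ∧ ¬ iNT V g v u ∧ ¬ iNT V g (v + u) (rot u - u) ∧ ¬ iNT V g (v + rot u) (-rot u)

lemma iNT_symm {V g v u} : iNT V g (v + u) (-u) ↔ iNT V g v u := by
  unfold iNT
  have e : v + u + -u = v := by abel
  rw [e]
  have e2 : g v - g (v + u) = -(g (v + u) - g v) := by ring
  rw [e2, isI_neg]
  have : Tight V g (v + u) (-u) ↔ Tight V g v u := by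
    refine ⟨fun h => ?_, fun h => h.symm⟩
    have := h.symm
    rwa [e, neg_neg] at this
  rw [this]

lemma NI.rot {V g v u} (h : NI V g v u) : NI V g (v + u) (TG.rot u - u) := by
  refine ⟨h.1.rot, fun hh => h.2 ?_⟩
  rw [rot_rsub] at hh
  have e1 : v + u + (TG.rot u - u) = v + TG.rot u := by abel
  have e2 : v + u + -u = v := by abel
  rw [e1, e2] at hh
  have h1 : IsI (g (v + u) - g v) := by
    have := hh.2.neg; rwa [neg_sub] at this
  refine ⟨h1, ?_⟩
  have := hh.1.add h1
  have e : g (v + TG.rot u) - g (v + u) + (g (v + u) - g v) = g (v + TG.rot u) - g v := by ring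
  rwa [e] at this

lemma rot3a (v u : Z2) : v + u + (rot u - u) = v + rot u := by abel
lemma rot3b (u : Z2) : rot (rot u - u) - (rot u - u) = -rot u := by rw [rot_rsub]; abel
lemma rot3c (v u : Z2) : v + rot u + -rot u = v := by abel
lemma rot3d (u : Z2) : rot (-rot u) - -rot u = u := by rw [rot_neg, rot_rot]; abel

lemma NI_rot_iff {V g v u} : NI V g (v + u) (rot u - u) ↔ NI V g v u := by
  refine ⟨fun h => ?_, NI.rot⟩
  have := h.rot.rot
  rw [rot3a, rot3b, rot_rsub] at this
  have e : v + u + -u = v := by abel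
  rwa [e, neg_neg] at this

lemma U2.rot {V g v u} (h : U2 V g v u) : U2 V g (v + u) (TG.rot u - u) := by
  refine ⟨h.1.rot, h.2.2.1, ?_, ?_⟩
  · rw [rot3a, rot3b]; exact h.2.2.2
  · rw [rot_rsub]
    have e : v + u + -u = v := by abel
    rw [e, neg_neg]; exact h.2.1

lemma NI_iff_p {V g p v u} (hu : u ∈ Dirs) (h : In V g p v u) :
    NI V g v u ↔ ¬ ∀ a ∈ Dirs, IsI (dp p a) := by
  unfold NI
  rw [h.2.1, h.2.2]
  constructor
  · intro hh hall; exact hh.2 ⟨hall _ hu, hall _ (rot_mem hu)⟩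
  · intro hh; exact ⟨h.1, fun hi => hh (all_int hu hi.1 hi.2)⟩

/-- a U2 triangle does not have two tight edges at the vertex `v` -/
lemma U2_one {V g} (hs : Hs V) (hc : Conc V g) (hg : Good V g) {v u} (hu : u ∈ Dirs)
    (h : U2 V g v u) : ¬ (Tight V g v u ∧ Tight V g (v + rot u) (-rot u)) := by
  rintro ⟨t1, t3⟩
  obtain ⟨p, hp⟩ := exists_In g hu h.1.1
  have hni := (NI_iff_p hu hp).1 h.1
  have s1 := slot_iff.1 ((tight_iff hp).1 t1)
  have s3 := (tight_iff hp.rot').1 t3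
  rw [rot3c, neg_neg] at s3
  have i1 := three hs hc hg (subr_mem hu) s1 (by rw [rot_subr]; exact hp) (by
    rw [rot_subr]
    have e : u - (u - rot u) = rot u := by abel
    rwa [e])
  have i1' : IsI (dp p (rot u - u)) := by
    have := i1.neg; rwa [← dp_neg, neg_sub] at this
  have hnt := h.2.2.1
  unfold iNT at hnt
  rw [hp.rot.2.1] at hnt
  have t2 : Tight V g (v + u) (rot u - u) := by
    by_contra hh; exact hnt ⟨i1', hh⟩
  -- vertex v+u
  have s2 := (tight_iff hp.rot).1 t2
  rw [slot_iff, rot_rsub] at s2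
  have e : rot u - u - -u = rot u := by abel
  rw [e] at s2
  have i2 := three hs hc hg (rot_mem hu) s2 (by rw [rot_rot]; exact hp.rot) (by
    rw [rot_rot]
    have e : rot u - u - rot u = -u := by abel
    rw [e]; exact (tight_iff hp).1 t1)
  exact hni (all_int (rot_mem hu) i2 (by rw [rot_rot]; exact i1'))

lemma par1 {V g} (hs : Hs V) (hc : Conc V g) (hg : Good V g) {v u} (hu : u ∈ Dirs)
    (h : NI V g v u) (ht : Tight V g v u) (hi : iNT V g (v + rot u) (-rot u)) :
    iNT V g (v + u - rot u) (rot u) := by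
  obtain ⟨p, hp⟩ := exists_In g hu h.1
  have hni := (NI_iff_p hu hp).1 h
  have hd := (tight_iff hp).1 ht
  have i1 := hi.1
  rw [hp.rot'.2.1, dp_neg, isI_neg] at i1
  have hda := hd.rot'
  rw [rot_neg, neg_neg, ← sub_eq_add_neg] at hda
  refine ⟨by rw [hda.2.1]; exact i1, fun htt => hni ?_⟩
  have := (tight_iff hda).1 htt
  have e : v + u - rot u + rot u = v + u := by abel
  rw [e] at this
  have i2 := three hs hc hg (rsub_mem hu) hp.rot (by rw [rot_rsub]; exact hd) (by
    rw [rot3b]; exact this)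
  exact all_int (rot_mem hu) i1 (by rwa [rot_rot])

lemma par2 {V g} (hs : Hs V) (hc : Conc V g) (hg : Good V g) {v u} (hu : u ∈ Dirs)
    (h : NI V g v u) (ht : Tight V g v u) (hi : iNT V g (v + u) (rot u - u)) :
    iNT V g v (u - rot u) := by
  obtain ⟨p, hp⟩ := exists_In g hu h.1
  have hni := (NI_iff_p hu hp).1 h
  have hd := slot_iff.1 ((tight_iff hp).1 ht)
  have i1 := hi.1
  rw [hp.rot.2.1] at i1
  have i1' : IsI (dp p (u - rot u)) := by
    have := i1.neg; rwa [← dp_neg, neg_sub] at this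
  refine ⟨by rw [hd.2.1]; exact i1', fun htt => hni ?_⟩
  have := (tight_iff hd).1 htt
  rw [slot_iff, rot_subr] at this
  have e : u - rot u - u = -rot u := by abel
  rw [e] at this
  have i2 := three hs hc hg (negrot_mem hu) this (by rw [rot_neg, rot_rot, neg_sub]; exact hd) (by
    rw [rot3d]; exact hp)
  rw [dp_neg, isI_neg] at i2
  exact all_int (rot_mem hu) i2 (by rwa [rot_rot])

lemma NI.cross {V g v u} (hu : u ∈ Dirs) (h : NI V g v u) (ht : Tight V g v u) :
    NI V g (v + u) (-u) := by
  obtain ⟨p, hp⟩ := exists_In g hu h.1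
  rw [NI_iff_p hu hp] at h
  rwa [NI_iff_p (neg_mem hu) ((tight_iff hp).1 ht)]

lemma U2_cross {V g} (hs : Hs V) (hc : Conc V g) (hg : Good V g) {v u} (hu : u ∈ Dirs)
    (h : U2 V g v u) (ht : Tight V g v u) : U2 V g (v + u) (-u) := by
  have hN := h.1.cross hu ht
  have ht' := ht.symm
  have e : v + u + -u = v := by abel
  refine ⟨hN, fun hh => h.2.1 (iNT_symm.1 hh), fun hh => ?_, fun hh => ?_⟩
  · have := par2 hs hc hg (neg_mem hu) hN ht' hh
    rw [rot_neg] at this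
    have e : -u - -rot u = rot u - u := by abel
    rw [e] at this
    exact h.2.2.1 this
  · have := par1 hs hc hg (neg_mem hu) hN ht' hh
    rw [rot_neg, e, sub_neg_eq_add] at this
    exact h.2.2.2 this

end TG

namespace TG

def Qp (V : Finset Z2) : Prop :=
  ∀ x ∈ V, x - (1,0) ∈ V → x - (0,1) ∈ V → x - (1,1) ∈ V

lemma exists_lexmax {V : Finset Z2} (h : V.Nonempty) : ∃ v0, LexMax V v0 := by
  obtain ⟨v0, h0, h1⟩ := Finset.exists_max_image V (fun x => toLex x) h
  refine ⟨v0, h0, fun x hx => ?_⟩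
  have := h1 x hx
  rw [Prod.Lex.toLex_le_toLex] at this
  exact this

def cyc (ψ : Z2 → Z2 → ℝ) (v u : Z2) : ℝ :=
  ψ v u + ψ (v + u) (rot u - u) + ψ (v + rot u) (-rot u)

lemma cyc_rot (ψ v u) : cyc ψ (v + u) (rot u - u) = cyc ψ v u := by
  unfold cyc
  rw [rot3a, rot3b, rot_rsub, neg_neg]
  have e : v + u + -u = v := by abel
  rw [e]; ring

lemma potential_aux : ∀ n : ℕ, ∀ S : Finset Z2, S.card = n → Qp S → ∀ δ : Z2 → Z2 → ℝ,
    (∀ v u, u ∈ Dirs → δ (v + u) (-u) = - δ v u) →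
    (∀ v u, u ∈ Dirs → Tri S v u → cyc δ v u = 0) →
    ∃ φ : Z2 → ℝ, ∀ v u, u ∈ Dirs → v ∈ S → v + u ∈ S → φ (v + u) - φ v = δ v u := by
  intro n
  induction n with
  | zero =>
    intro S hS _ δ _ _
    rw [Finset.card_eq_zero] at hS
    subst hS
    exact ⟨fun _ => 0, fun v u _ h => by simp at h⟩
  | succ n ih =>
    intro S hS hQ δ hanti hcl
    have hne : S.Nonempty := by rw [← Finset.card_pos]; omega
    obtain ⟨x0, hx0, hmax⟩ := exists_lexmax hne
    obtain ⟨φ, hφ⟩ := ih (S.erase x0) (by rw [Finset.card_erase_of_mem hx0]; omega) (by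
      intro x hx h1 h2
      rw [Finset.mem_erase] at hx h1 h2 ⊢
      refine ⟨?_, hQ x hx.2 h1.2 h2.2⟩
      intro he
      have := hmax x hx.2
      rw [← he] at this
      simp at this
      omega) δ hanti (by
      intro v u hu ht
      exact hcl v u hu ⟨Finset.mem_of_mem_erase ht.1, Finset.mem_of_mem_erase ht.2.1,
        Finset.mem_of_mem_erase ht.2.2⟩)
    have d0 : ((1,0) : Z2) ∈ Dirs := by simp [Dirs]
    have d1 : ((1,1) : Z2) ∈ Dirs := by simp [Dirs]
    have d2 : ((0,1) : Z2) ∈ Dirs := by simp [Dirs]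
    have er : ∀ a ∈ Dirs, x0 - a ∈ S → x0 - a ∈ S.erase x0 := by
      intro a ha h
      rw [Finset.mem_erase]
      refine ⟨?_, h⟩
      rw [mem_Dirs] at ha
      rcases ha with rfl | rfl | rfl | rfl | rfl | rfl <;> simp
    -- consistency
    have c01 : x0 - (1,0) ∈ S → x0 - (1,1) ∈ S →
        φ (x0 - (1,0)) + δ (x0 - (1,0)) (1,0) = φ (x0 - (1,1)) + δ (x0 - (1,1)) (1,1) := by
      intro h0 h1
      have e1 : x0 - (1,1) + (1,1) = x0 := by abel
      have e2 : x0 - (1,1) + rot (1,1) = x0 - (1,0) := by ext <;> simp [rot]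
      have hc := hcl (x0 - (1,1)) (1,1) d1 ⟨h1, by rw [e1]; exact hx0, by rw [e2]; exact h0⟩
      unfold cyc at hc
      rw [e2, e1] at hc
      have e3 : rot (1,1) - (1,1) = -((1,0) : Z2) := by simp [rot]
      have e4 : -rot (1,1) = -((0,1) : Z2) := by simp [rot]
      rw [e3, e4] at hc
      have a1 := hanti (x0 - (1,0)) (1,0) d0
      have a2 := hanti (x0 - (1,1)) (0,1) d2
      have e5 : x0 - (1,0) + (1,0) = x0 := by abel
      have e6 : x0 - (1,1) + (0,1) = x0 - (1,0) := by ext <;> simp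
      rw [e5] at a1
      rw [e6] at a2
      have b := hφ (x0 - (1,1)) (0,1) d2 (er _ d1 h1) (by rw [e6]; exact er _ d0 h0)
      rw [e6] at b
      linarith
    have c21 : x0 - (0,1) ∈ S → x0 - (1,1) ∈ S →
        φ (x0 - (0,1)) + δ (x0 - (0,1)) (0,1) = φ (x0 - (1,1)) + δ (x0 - (1,1)) (1,1) := by
      intro h0 h1
      have e1 : x0 - (1,1) + rot (1,0) = x0 := by ext <;> simp [rot]
      have e2 : x0 - (1,1) + (1,0) = x0 - (0,1) := by ext <;> simp
      have hc := hcl (x0 - (1,1)) (1,0) d0 ⟨h1, by rw [e2]; exact h0, by rw [e1]; exact hx0⟩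
      unfold cyc at hc
      rw [e2, e1] at hc
      have e3 : rot (1,0) - (1,0) = ((0,1) : Z2) := by simp [rot]
      have e4 : -rot (1,0) = -((1,1) : Z2) := by simp [rot]
      rw [e3, e4] at hc
      have a1 := hanti (x0 - (1,1)) (1,1) d1
      have e5 : x0 - (1,1) + (1,1) = x0 := by abel
      rw [e5] at a1
      have b := hφ (x0 - (1,1)) (1,0) d0 (er _ d1 h1) (by rw [e2]; exact er _ d2 h0)
      rw [e2] at b
      linarith
    have hcex : ∃ c : ℝ, ∀ a, (a = (1,0) ∨ a = (1,1) ∨ a = (0,1)) → x0 - a ∈ S →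
        c - φ (x0 - a) = δ (x0 - a) a := by
      by_cases h1 : x0 - (1,1) ∈ S
      · refine ⟨φ (x0 - (1,1)) + δ (x0 - (1,1)) (1,1), ?_⟩
        rintro a (rfl | rfl | rfl) ha
        · rw [← c01 ha h1]; ring
        · ring
        · rw [← c21 ha h1]; ring
      · by_cases h0 : x0 - (1,0) ∈ S
        · refine ⟨φ (x0 - (1,0)) + δ (x0 - (1,0)) (1,0), ?_⟩
          rintro a (rfl | rfl | rfl) ha
          · ring
          · exact absurd ha h1
          · exact absurd (hQ x0 hx0 h0 ha) h1
        · refine ⟨φ (x0 - (0,1)) + δ (x0 - (0,1)) (0,1), ?_⟩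
          rintro a (rfl | rfl | rfl) ha
          · exact absurd ha h0
          · exact absurd ha h1
          · ring
    obtain ⟨c, hc⟩ := hcex
    have three : ∀ a ∈ Dirs, x0 - a ∈ S → a = (1,0) ∨ a = (1,1) ∨ a = (0,1) := by
      intro a ha h
      have := hmax _ h
      rw [mem_Dirs] at ha
      rcases ha with rfl | rfl | rfl | rfl | rfl | rfl <;> simp at this ⊢
    refine ⟨fun x => if x = x0 then c else φ x, ?_⟩
    intro v u hu hv hvu
    have hu0 : u ≠ 0 := by
      rintro rfl; simp [Dirs, Prod.ext_iff] at hu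
    by_cases h1 : v + u = x0
    · have h2 : v ≠ x0 := by rintro rfl; exact hu0 (by simpa using h1)
      have e : v = x0 - u := by rw [← h1]; abel
      simp only [if_pos h1, if_neg h2]
      rw [e] at hv ⊢
      exact hc u (three u hu hv) hv
    · by_cases h2 : v = x0
      · subst h2
        simp only [if_neg h1, if_true]
        have e : v + u = v - -u := by abel
        have := hc (-u) (three _ (neg_mem hu) (by rwa [← e])) (by rwa [← e])
        rw [← e] at this
        rw [hanti v u hu] at this
        linarith
      · simp only [if_neg h1, if_neg h2]
        exact hφ v u hu (Finset.mem_erase.2 ⟨h2, hv⟩) (Finset.mem_erase.2 ⟨h1, hvu⟩)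

lemma potential {S : Finset Z2} (hQ : Qp S) (δ : Z2 → Z2 → ℝ)
    (h1 : ∀ v u, u ∈ Dirs → δ (v + u) (-u) = - δ v u)
    (h2 : ∀ v u, u ∈ Dirs → Tri S v u → cyc δ v u = 0) :
    ∃ φ : Z2 → ℝ, ∀ v u, u ∈ Dirs → v ∈ S → v + u ∈ S → φ (v + u) - φ v = δ v u :=
  potential_aux _ S rfl hQ δ h1 h2

lemma linalg {E U D T : Type} [Fintype E] [Fintype U] [Fintype D] [Fintype T]
    (L : (E → ℝ) →ₗ[ℝ] ((U → ℝ) × (D → ℝ) × (T → ℝ)))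
    (hcard : Fintype.card U + Fintype.card D + Fintype.card T ≤ Fintype.card E)
    (hdep : Fintype.card U + Fintype.card D + Fintype.card T = Fintype.card E →
      ∀ x, ∑ i, (L x).1 i = ∑ i, (L x).2.1 i)
    (hpos : 0 < Fintype.card U + Fintype.card D) : ∃ x, x ≠ 0 ∧ L x = 0 := by
  by_contra hcon
  push Not at hcon
  have hinj : Function.Injective L := by
    rw [← LinearMap.ker_eq_bot, LinearMap.ker_eq_bot']
    intro x hx
    by_contra h
    exact hcon x h hx
  have hle := LinearMap.finrank_le_finrank_of_injective hinj
  have hfr : Module.finrank ℝ ((U → ℝ) × (D → ℝ) × (T → ℝ)) =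
      Fintype.card U + Fintype.card D + Fintype.card T := by
    rw [Module.finrank_prod, Module.finrank_prod]; simp; ring
  have hfe : Module.finrank ℝ (E → ℝ) = Fintype.card E := by simp
  rw [hfr, hfe] at hle
  have heq : Fintype.card U + Fintype.card D + Fintype.card T = Fintype.card E := by omega
  have hsurj : Function.Surjective L :=
    (LinearMap.injective_iff_surjective_of_finrank_eq_finrank (by rw [hfr, hfe, heq])).1 hinj
  obtain ⟨x, hx⟩ := hsurj (fun _ => 1, fun _ => -1, fun _ => 0)
  have := hdep heq x
  rw [hx] at this
  simp at this
  have h1 : (0 : ℝ) < Fintype.card U + Fintype.card D := by exact_mod_cast hpos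
  linarith

end TG

namespace TG

def Ev : Finset Z2 := {(1,0),(0,1),(-1,-1)}
def rev (ψ : Z2 → Z2 → ℝ) (v u : Z2) : ℝ := ψ (v + u) (-u)

lemma Ev_sub {u} (h : u ∈ Ev) : u ∈ Dirs := by
  simp only [Ev, Finset.mem_insert, Finset.mem_singleton] at h
  rw [mem_Dirs]; tauto
lemma Ev_or {u} (h : u ∈ Dirs) : u ∈ Ev ∨ -u ∈ Ev := by
  rw [mem_Dirs] at h
  rcases h with rfl | rfl | rfl | rfl | rfl | rfl <;> simp [Ev]
lemma Ev_neg {u} (h : u ∈ Ev) : -u ∉ Ev := by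
  simp only [Ev, Finset.mem_insert, Finset.mem_singleton] at h
  rcases h with rfl | rfl | rfl <;> simp [Ev]
lemma Ev_rot {u} (h : u ∈ Ev) : rot u - u ∈ Ev := by
  simp only [Ev, Finset.mem_insert, Finset.mem_singleton] at h
  rcases h with rfl | rfl | rfl <;> simp [Ev, rot]

lemma sum_rot (V : Finset Z2) (g : Z2 → ℝ) (ψ : Z2 → Z2 → ℝ) (u) :
    ∑ v ∈ V.filter (fun v => NI V g v (rot u - u)), ψ v (rot u - u) =
    ∑ v ∈ V.filter (fun v => NI V g v u), ψ (v + u) (rot u - u) := by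
  symm
  refine Finset.sum_nbij' (fun v => v + u) (fun v => v - u) ?_ ?_ ?_ ?_ ?_
  · intro v hv
    rw [Finset.mem_filter] at hv ⊢
    exact ⟨hv.2.1.2.1, hv.2.rot⟩
  · intro v hv
    rw [Finset.mem_filter] at hv ⊢
    have e : v - u + u = v := by abel
    have h : NI V g (v - u) u := by rw [← NI_rot_iff, e]; exact hv.2
    exact ⟨h.1.1, h⟩
  · intro v _; simp
  · intro v _; simp
  · intro v _; rfl

lemma S3 (V : Finset Z2) (g : Z2 → ℝ) (ψ : Z2 → Z2 → ℝ) (u) :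
    ∑ v ∈ V.filter (fun v => NI V g v u), cyc ψ v u =
    ∑ v ∈ V.filter (fun v => NI V g v u), ψ v u +
    ∑ v ∈ V.filter (fun v => NI V g v (rot u - u)), ψ v (rot u - u) +
    ∑ v ∈ V.filter (fun v => NI V g v (-rot u)), ψ v (-rot u) := by
  unfold cyc
  rw [Finset.sum_add_distrib, Finset.sum_add_distrib, sum_rot]
  congr 1
  have h1 := sum_rot V g ψ (rot u - u)
  rw [rot3b] at h1
  rw [h1]
  have h2 := sum_rot V g (fun v _ => ψ (v + (rot u - u)) (-rot u)) u
  rw [h2]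
  simp only [rot3a]

lemma sum_rev (V : Finset Z2) (g : Z2 → ℝ) (ψ : Z2 → Z2 → ℝ) (a) :
    ∑ v ∈ V.filter (fun v => NI V g v (-a)), rev ψ v (-a) =
    ∑ v ∈ V.filter (fun v => NI V g (v + a) (-a)), ψ v a := by
  refine Finset.sum_nbij' (fun v => v - a) (fun v => v + a) ?_ ?_ ?_ ?_ ?_
  · intro v hv
    rw [Finset.mem_filter] at hv ⊢
    have e : v - a + a = v := by abel
    rw [e]
    refine ⟨?_, hv.2⟩
    have := hv.2.1.2.1
    rwa [← sub_eq_add_neg] at this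
  · intro v hv
    rw [Finset.mem_filter] at hv ⊢
    exact ⟨hv.2.1.1, hv.2⟩
  · intro v _; simp
  · intro v _; simp
  · intro v _; unfold rev; rw [neg_neg, ← sub_eq_add_neg]

lemma sum_Ev (V : Finset Z2) (P : Z2 → Z2 → Prop) (ψ : Z2 → Z2 → ℝ) :
    ∑ e ∈ (V ×ˢ Ev).filter (fun e => P e.1 e.2), ψ e.1 e.2 =
    ∑ v ∈ V.filter (fun v => P v (1,0)), ψ v (1,0) +
    ∑ v ∈ V.filter (fun v => P v (0,1)), ψ v (0,1) +
    ∑ v ∈ V.filter (fun v => P v (-1,-1)), ψ v (-1,-1) := by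
  simp only [Finset.sum_filter]
  rw [Finset.sum_product_right]
  unfold Ev
  rw [Finset.sum_insert (by simp), Finset.sum_insert (by simp), Finset.sum_singleton, add_assoc]

lemma S3up (V : Finset Z2) (g : Z2 → ℝ) (ψ : Z2 → Z2 → ℝ) :
    ∑ v ∈ V.filter (fun v => NI V g v (1,0)), cyc ψ v (1,0) =
    ∑ e ∈ (V ×ˢ Ev).filter (fun e => NI V g e.1 e.2), ψ e.1 e.2 := by
  rw [S3, sum_Ev V (fun v u => NI V g v u)]
  have e1 : rot (1,0) - (1,0) = ((0,1) : Z2) := by simp [rot]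
  have e2 : -rot (1,0) = ((-1,-1) : Z2) := by simp [rot]
  rw [e1, e2]

lemma S3dn (V : Finset Z2) (g : Z2 → ℝ) (ψ : Z2 → Z2 → ℝ) :
    ∑ v ∈ V.filter (fun v => NI V g v (-(1,0))), cyc (rev ψ) v (-(1,0)) =
    ∑ e ∈ (V ×ˢ Ev).filter (fun e => NI V g (e.1 + e.2) (-e.2)), ψ e.1 e.2 := by
  rw [S3, sum_Ev V (fun v u => NI V g (v + u) (-u))]
  have e1 : rot (-(1,0)) - -(1,0) = (-(0,1) : Z2) := by simp [rot]
  have e2 : -rot (-(1,0)) = (-(-1,-1) : Z2) := by simp [rot]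
  rw [e1, e2, sum_rev, sum_rev, sum_rev]

def psiI (V : Finset Z2) (g : Z2 → ℝ) (v u : Z2) : ℝ := if iNT V g v u then 0 else 1
def psiT (V : Finset Z2) (g : Z2 → ℝ) (v u : Z2) : ℝ := if U2 V g v u ∧ Tight V g v u then 1 else 0

lemma U2_rot_iff {V g v u} : U2 V g (v + u) (rot u - u) ↔ U2 V g v u := by
  refine ⟨fun h => ?_, fun h => h.rot⟩
  have := h.rot.rot
  rw [rot3a, rot3b, rot_rsub] at this
  have e : v + u + -u = v := by abel
  rwa [e, neg_neg] at this

lemma cntA {A B C : Prop} [Decidable A] [Decidable B] [Decidable C] (h1 : ¬ (A ∧ B))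
    (h2 : ¬ (A ∧ C)) (h3 : ¬ (B ∧ C)) :
    (2 : ℝ) + ((if A then 1 else 0) + (if B then 1 else 0) + (if C then 1 else 0)) ≤ 1 + 1 + 1 := by
  by_cases a : A <;> by_cases b : B <;> by_cases c : C <;> simp_all <;> norm_num

lemma cntB {A B C : Prop} [Decidable A] [Decidable B] [Decidable C] (h1 : ¬ (A ∧ B))
    (h2 : ¬ (A ∧ C)) (h3 : ¬ (B ∧ C)) :
    (2 : ℝ) + (0 + 0 + 0) ≤ (if A then 0 else 1) + (if B then 0 else 1) + (if C then 0 else 1) := by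
  by_cases a : A <;> by_cases b : B <;> by_cases c : C <;> simp_all <;> norm_num

lemma local_count {V g} (hs : Hs V) (hc : Conc V g) (hg : Good V g) {v u} (hu : u ∈ Dirs)
    (h : NI V g v u) : 2 + cyc (psiT V g) v u ≤ cyc (psiI V g) v u := by
  have U3 : U2 V g (v + rot u) (-rot u) ↔ U2 V g v u := by
    have := U2_rot_iff (V := V) (g := g) (v := v + u) (u := rot u - u)
    rw [rot3a, rot3b] at this
    rw [this, U2_rot_iff]
  have n12 : ¬ (iNT V g v u ∧ iNT V g (v + u) (rot u - u)) := by
    rintro ⟨a, b⟩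
    refine h.2 ⟨a.1, ?_⟩
    have := a.1.add b.1
    rw [rot3a] at this
    simpa using this
  have n13 : ¬ (iNT V g v u ∧ iNT V g (v + rot u) (-rot u)) := by
    rintro ⟨a, b⟩
    refine h.2 ⟨a.1, ?_⟩
    have := b.1.neg
    rw [rot3c] at this
    simpa using this
  have n23 : ¬ (iNT V g (v + u) (rot u - u) ∧ iNT V g (v + rot u) (-rot u)) := by
    rintro ⟨a, b⟩
    have b' := b.1
    have a' := a.1
    rw [rot3c] at b'
    rw [rot3a] at a'
    have c := (a'.add b').neg
    have e : -(g (v + rot u) - g (v + u) + (g v - g (v + rot u))) = g (v + u) - g v := by ring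
    rw [e] at c
    have d := b'.neg
    rw [neg_sub] at d
    exact h.2 ⟨c, d⟩
  unfold cyc psiT psiI
  rw [U2_rot_iff, U3]
  by_cases hU : U2 V g v u
  · have t13 := U2_one hs hc hg hu hU
    have t12 := U2_one hs hc hg (rsub_mem hu) hU.rot
    have t23 := U2_one hs hc hg (negrot_mem hu) (U3.2 hU)
    rw [rot_rsub, neg_neg] at t12
    have e : v + u + -u = v := by abel
    rw [e] at t12
    rw [rot_neg, rot_rot, neg_neg, neg_sub] at t23
    have e : v + rot u + (u - rot u) = v + u := by abel
    rw [e] at t23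
    rw [if_neg hU.2.1, if_neg hU.2.2.1, if_neg hU.2.2.2]
    exact cntA (fun q => t12 ⟨q.2.2, q.1.2⟩) (fun q => t13 ⟨q.1.2, q.2.2⟩)
      (fun q => t23 ⟨q.2.2, q.1.2⟩)
  · rw [if_neg (fun q => hU q.1), if_neg (fun q => hU q.1), if_neg (fun q => hU q.1)]
    exact cntB n12 n13 n23

lemma cyc_congr {ψ ψ' : Z2 → Z2 → ℝ} (h : ∀ v u, u ∈ Dirs → ψ v u = ψ' v u) {v u} (hu : u ∈ Dirs) :
    cyc ψ v u = cyc ψ' v u := by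
  unfold cyc
  rw [h _ _ hu, h _ _ (rsub_mem hu), h _ _ (negrot_mem hu)]

lemma rev_psiI {V g v u} : rev (psiI V g) v u = psiI V g v u := by
  unfold rev psiI
  rw [iNT_symm]

lemma rev_psiT {V g} (hs : Hs V) (hc : Conc V g) (hg : Good V g) {v u} (hu : u ∈ Dirs) :
    rev (psiT V g) v u = psiT V g v u := by
  unfold rev psiT
  have e : v + u + -u = v := by abel
  have : (U2 V g (v + u) (-u) ∧ Tight V g (v + u) (-u)) ↔ (U2 V g v u ∧ Tight V g v u) := by
    constructor
    · rintro ⟨a, b⟩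
      have c := U2_cross hs hc hg (neg_mem hu) a b
      have d := b.symm
      rw [e, neg_neg] at c d
      exact ⟨c, d⟩
    · rintro ⟨a, b⟩
      exact ⟨U2_cross hs hc hg hu a b, b.symm⟩
  simp only [this]

def Es (V : Finset Z2) (g : Z2 → ℝ) : Finset (Z2 × Z2) :=
  (V ×ˢ Ev).filter (fun e => (NI V g e.1 e.2 ∨ NI V g (e.1 + e.2) (-e.2)) ∧ ¬ iNT V g e.1 e.2)
def Us (V : Finset Z2) (g : Z2 → ℝ) : Finset Z2 := V.filter (fun v => NI V g v (1,0))
def Ds (V : Finset Z2) (g : Z2 → ℝ) : Finset Z2 := V.filter (fun v => NI V g v (-(1,0)))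
def Ts (V : Finset Z2) (g : Z2 → ℝ) : Finset (Z2 × Z2) :=
  (V ×ˢ Ev).filter (fun e => U2 V g e.1 e.2 ∧ Tight V g e.1 e.2)
def Au (V : Finset Z2) (g : Z2 → ℝ) : Finset (Z2 × Z2) :=
  (V ×ˢ Ev).filter (fun e => NI V g e.1 e.2 ∧ ¬ iNT V g e.1 e.2)
def Ad (V : Finset Z2) (g : Z2 → ℝ) : Finset (Z2 × Z2) :=
  (V ×ˢ Ev).filter (fun e => NI V g (e.1 + e.2) (-e.2) ∧ ¬ iNT V g e.1 e.2)

lemma Au_sub (V g) : Au V g ⊆ Es V g := by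
  intro e he
  unfold Au Es at *
  rw [Finset.mem_filter] at *
  exact ⟨he.1, Or.inl he.2.1, he.2.2⟩
lemma Ad_sub (V g) : Ad V g ⊆ Es V g := by
  intro e he
  unfold Ad Es at *
  rw [Finset.mem_filter] at *
  exact ⟨he.1, Or.inr he.2.1, he.2.2⟩

lemma countU {V g} (hs : Hs V) (hc : Conc V g) (hg : Good V g) :
    2 * (Us V g).card + (Ts V g).card ≤ (Au V g).card := by
  have h1 := S3up V g (psiI V g)
  have h2 := S3up V g (psiT V g)
  have k : ((1,0) : Z2) ∈ Dirs := by simp [Dirs]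
  have h3 : ∑ v ∈ V.filter (fun v => NI V g v (1,0)), (2 + cyc (psiT V g) v (1,0)) ≤
    ∑ v ∈ V.filter (fun v => NI V g v (1,0)), cyc (psiI V g) v (1,0) := by
    refine Finset.sum_le_sum (fun v hv => local_count hs hc hg k (Finset.mem_filter.1 hv).2)
  rw [Finset.sum_add_distrib, h1, h2] at h3
  have a1 : ∑ e ∈ (V ×ˢ Ev).filter (fun e => NI V g e.1 e.2), psiI V g e.1 e.2 = (Au V g).card := by
    unfold psiI Au
    rw [← Finset.filter_filter, Finset.card_filter, Nat.cast_sum]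
    refine Finset.sum_congr rfl (fun e _ => ?_)
    by_cases h : iNT V g e.1 e.2 <;> simp [h]
  have a2 : ∑ e ∈ (V ×ˢ Ev).filter (fun e => NI V g e.1 e.2), psiT V g e.1 e.2 = (Ts V g).card := by
    unfold psiT Ts
    have : (V ×ˢ Ev).filter (fun e => U2 V g e.1 e.2 ∧ Tight V g e.1 e.2) =
      ((V ×ˢ Ev).filter (fun e => NI V g e.1 e.2)).filter (fun e => U2 V g e.1 e.2 ∧ Tight V g e.1 e.2) := by
      rw [Finset.filter_filter]
      refine Finset.filter_congr (fun e _ => ⟨fun h => ⟨h.1.1, h⟩, fun h => h.2⟩)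
    rw [this, Finset.card_filter, Nat.cast_sum]
    refine Finset.sum_congr rfl (fun e _ => ?_)
    by_cases h : U2 V g e.1 e.2 ∧ Tight V g e.1 e.2 <;> simp [h]
  rw [a1, a2, Finset.sum_const, nsmul_eq_mul] at h3
  have : (2 : ℝ) * (Us V g).card + (Ts V g).card ≤ (Au V g).card := by
    unfold Us; linarith
  exact_mod_cast this

lemma countD {V g} (hs : Hs V) (hc : Conc V g) (hg : Good V g) :
    2 * (Ds V g).card + (Ts V g).card ≤ (Ad V g).card := by
  have h1 := S3dn V g (psiI V g)
  have h2 := S3dn V g (psiT V g)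
  have k : (-(1,0) : Z2) ∈ Dirs := by simp [Dirs]
  have h3 : ∑ v ∈ V.filter (fun v => NI V g v (-(1,0))), (2 + cyc (rev (psiT V g)) v (-(1,0))) ≤
    ∑ v ∈ V.filter (fun v => NI V g v (-(1,0))), cyc (rev (psiI V g)) v (-(1,0)) := by
    refine Finset.sum_le_sum (fun v hv => ?_)
    rw [cyc_congr (fun v u hu => rev_psiT hs hc hg hu) k, cyc_congr (fun v u _ => rev_psiI) k]
    exact local_count hs hc hg k (Finset.mem_filter.1 hv).2
  rw [Finset.sum_add_distrib, h1, h2] at h3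
  have a1 : ∑ e ∈ (V ×ˢ Ev).filter (fun e => NI V g (e.1 + e.2) (-e.2)), psiI V g e.1 e.2 = (Ad V g).card := by
    unfold psiI Ad
    rw [← Finset.filter_filter, Finset.card_filter, Nat.cast_sum]
    refine Finset.sum_congr rfl (fun e _ => ?_)
    by_cases h : iNT V g e.1 e.2 <;> simp [h]
  have a2 : ∑ e ∈ (V ×ˢ Ev).filter (fun e => NI V g (e.1 + e.2) (-e.2)), psiT V g e.1 e.2 = (Ts V g).card := by
    unfold psiT Ts
    have : (V ×ˢ Ev).filter (fun e => U2 V g e.1 e.2 ∧ Tight V g e.1 e.2) =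
      ((V ×ˢ Ev).filter (fun e => NI V g (e.1 + e.2) (-e.2))).filter (fun e => U2 V g e.1 e.2 ∧ Tight V g e.1 e.2) := by
      rw [Finset.filter_filter]
      refine Finset.filter_congr (fun e he => ⟨fun h => ⟨?_, h⟩, fun h => h.2⟩)
      exact h.1.1.cross (Ev_sub (Finset.mem_product.1 he).2) h.2
    rw [this, Finset.card_filter, Nat.cast_sum]
    refine Finset.sum_congr rfl (fun e _ => ?_)
    by_cases h : U2 V g e.1 e.2 ∧ Tight V g e.1 e.2 <;> simp [h]
  rw [a1, a2, Finset.sum_const, nsmul_eq_mul] at h3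
  have : (2 : ℝ) * (Ds V g).card + (Ts V g).card ≤ (Ad V g).card := by
    unfold Ds; linarith
  exact_mod_cast this

def extz {E : Finset (Z2 × Z2)} (x : E → ℝ) (v u : Z2) : ℝ :=
  if h : (v, u) ∈ E then x ⟨(v, u), h⟩ else 0

lemma extz_add {E : Finset (Z2 × Z2)} (x y : E → ℝ) (v u) :
    extz (x + y) v u = extz x v u + extz y v u := by
  unfold extz; split_ifs <;> simp
lemma extz_smul {E : Finset (Z2 × Z2)} (c : ℝ) (x : E → ℝ) (v u) :
    extz (c • x) v u = c * extz x v u := by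
  unfold extz; split_ifs <;> simp

def LL (V : Finset Z2) (g : Z2 → ℝ) : (Es V g → ℝ) →ₗ[ℝ]
    ((Us V g → ℝ) × (Ds V g → ℝ) × (Ts V g → ℝ)) where
  toFun x := (fun v => cyc (extz x) v (1,0), fun v => cyc (rev (extz x)) v (-(1,0)),
    fun e => extz x (e.1.1 + e.1.2 - rot e.1.2) (rot e.1.2 - e.1.2) -
      extz x (e.1.1 + e.1.2) (rot e.1.2 - e.1.2))
  map_add' x y := by
    refine Prod.ext ?_ (Prod.ext ?_ ?_)
    · funext v; simp only [cyc, extz_add, Prod.fst_add, Pi.add_apply]; ring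
    · funext v; simp only [cyc, rev, extz_add, Prod.fst_add, Prod.snd_add, Pi.add_apply]; ring
    · funext v; simp only [extz_add, Prod.snd_add, Pi.add_apply]; ring
  map_smul' c x := by
    refine Prod.ext ?_ (Prod.ext ?_ ?_)
    · funext v; simp only [cyc, extz_smul, Prod.smul_fst, Pi.smul_apply, smul_eq_mul, RingHom.id_apply]; ring
    · funext v; simp only [cyc, rev, extz_smul, Prod.smul_fst, Prod.smul_snd, Pi.smul_apply, smul_eq_mul, RingHom.id_apply]; ring
    · funext v; simp only [extz_smul, Prod.smul_snd, Pi.smul_apply, smul_eq_mul, RingHom.id_apply]; ring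

lemma exists_ker {V g} (hs : Hs V) (hc : Conc V g) (hg : Good V g)
    (hN : ∃ v, NI V g v (1,0) ∨ NI V g v (-(1,0))) :
    ∃ x : Es V g → ℝ, x ≠ 0 ∧ LL V g x = 0 := by
  have cU := countU hs hc hg
  have cD := countD hs hc hg
  have lU := Finset.card_le_card (Au_sub V g)
  have lD := Finset.card_le_card (Ad_sub V g)
  refine linalg (LL V g) ?_ ?_ ?_
  · simp only [Fintype.card_coe]; omega
  · simp only [Fintype.card_coe]
    intro heq x
    have eU : Au V g = Es V g := Finset.eq_of_subset_of_card_le (Au_sub V g) (by omega)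
    have eD : Ad V g = Es V g := Finset.eq_of_subset_of_card_le (Ad_sub V g) (by omega)
    have h1 : ∑ i, (LL V g x).1 i = ∑ e ∈ Es V g, extz x e.1 e.2 := by
      have := S3up V g (extz x)
      have e : ∑ i, (LL V g x).1 i = ∑ v ∈ Us V g, cyc (extz x) v (1,0) :=
        Finset.sum_coe_sort (Us V g) (fun v => cyc (extz x) v (1,0))
      rw [e]; unfold Us
      rw [this]
      symm
      apply Finset.sum_subset
      · rw [← eU]; intro e he
        unfold Au at he; rw [Finset.mem_filter] at *; exact ⟨he.1, he.2.1⟩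
      · intro e _ he; unfold extz; rw [dif_neg he]
    have h2 : ∑ i, (LL V g x).2.1 i = ∑ e ∈ Es V g, extz x e.1 e.2 := by
      have := S3dn V g (extz x)
      have e : ∑ i, (LL V g x).2.1 i = ∑ v ∈ Ds V g, cyc (rev (extz x)) v (-(1,0)) :=
        Finset.sum_coe_sort (Ds V g) (fun v => cyc (rev (extz x)) v (-(1,0)))
      rw [e]; unfold Ds
      rw [this]
      symm
      apply Finset.sum_subset
      · rw [← eD]; intro e he
        unfold Ad at he; rw [Finset.mem_filter] at *; exact ⟨he.1, he.2.1⟩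
      · intro e _ he; unfold extz; rw [dif_neg he]
    rw [h1, h2]
  · simp only [Fintype.card_coe]
    obtain ⟨v, hv | hv⟩ := hN
    · have : v ∈ Us V g := Finset.mem_filter.2 ⟨hv.1.1, hv⟩
      have := Finset.card_pos.2 ⟨v, this⟩
      omega
    · have : v ∈ Ds V g := Finset.mem_filter.2 ⟨hv.1.1, hv⟩
      have := Finset.card_pos.2 ⟨v, this⟩
      omega

end TG

namespace TG

def dl {E : Finset (Z2 × Z2)} (x : E → ℝ) (v u : Z2) : ℝ :=
  if u ∈ Ev then extz x v u else - extz x (v + u) (-u)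

lemma dl_anti {E : Finset (Z2 × Z2)} (x : E → ℝ) (v u) (hu : u ∈ Dirs) :
    dl x (v + u) (-u) = - dl x v u := by
  unfold dl
  have e : v + u + -u = v := by abel
  rcases Ev_or hu with h | h
  · rw [if_neg (Ev_neg h), if_pos h, e, neg_neg]
  · have h' := Ev_neg h
    rw [neg_neg] at h'
    rw [if_pos h, if_neg h', neg_neg]

lemma dl_supp {V g} {x : Es V g → ℝ} {v u} (h : dl x v u ≠ 0) :
    (NI V g v u ∨ NI V g (v + u) (-u)) ∧ ¬ iNT V g v u := by
  have key : ∀ v u, extz x v u ≠ 0 → (NI V g v u ∨ NI V g (v + u) (-u)) ∧ ¬ iNT V g v u := by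
    intro v u h
    unfold extz at h
    split_ifs at h with hm
    · exact (Finset.mem_filter.1 hm).2
    · exact absurd rfl h
  unfold dl at h
  split_ifs at h with hu
  · exact key v u h
  · have := key _ _ (neg_ne_zero.1 h)
    rw [iNT_symm, neg_neg] at this
    have e : v + u + -u = v := by abel
    rw [e] at this
    exact ⟨this.1.symm, this.2⟩

lemma dl_d1 {V g} {x : Es V g → ℝ} {v u} (h : iNT V g v u) : dl x v u = 0 := by
  by_contra hh
  exact (dl_supp hh).2 h

lemma dl_d3 {V g} {x : Es V g → ℝ} {v u} (hu : u ∈ Dirs) (ht : Tri V v u) (h : ¬ NI V g v u) :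
    dl x v u = 0 := by
  by_contra hh
  obtain ⟨h1, h2⟩ := dl_supp hh
  have h3 := h1.resolve_left h
  have hI : IsI (g (v + u) - g v) := by
    by_contra hc
    exact h ⟨ht, fun q => hc q.1⟩
  have hT : Tight V g v u := by
    by_contra hc
    exact h2 ⟨hI, hc⟩
  have := h3.cross (neg_mem hu) hT.symm
  have e : v + u + -u = v := by abel
  rw [e, neg_neg] at this
  exact h this

lemma base_ind (P : Z2 → Z2 → Prop) (h1 : ∀ v, P v (1,0)) (h2 : ∀ v, P v (-(1,0)))
    (hr : ∀ v u, P (v + u) (rot u - u) → P v u) : ∀ v u, u ∈ Dirs → P v u := by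
  intro v u hu
  rw [mem_Dirs] at hu
  rcases hu with rfl | rfl | rfl | rfl | rfl | rfl
  · exact h1 _
  · apply hr; 
    have : rot (1,1) - (1,1) = (-(1,0) : Z2) := by simp [rot]
    rw [this]; exact h2 _
  · apply hr; apply hr
    have : rot (rot (0,1) - (0,1)) - (rot (0,1) - (0,1)) = ((1,0) : Z2) := by simp [rot]
    rw [this]; exact h1 _
  · exact h2 v
  · apply hr
    have : rot (-1,-1) - (-1,-1) = ((1,0) : Z2) := by simp [rot]
    rw [this]; exact h1 _
  · apply hr; apply hr
    have : rot (rot (0,-1) - (0,-1)) - (rot (0,-1) - (0,-1)) = (-(1,0) : Z2) := by simp [rot]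
    rw [this]; exact h2 _

lemma dl_d4 {V g} {x : Es V g → ℝ} (hx : LL V g x = 0) :
    ∀ v u, u ∈ Dirs → NI V g v u → cyc (dl x) v u = 0 := by
  apply base_ind
  · intro v h
    have hm : v ∈ Us V g := Finset.mem_filter.2 ⟨h.1.1, h⟩
    have h1 : cyc (extz x) v (1,0) = 0 := congrFun (congrArg Prod.fst hx) ⟨v, hm⟩
    rw [← h1]
    unfold cyc dl
    have k1 : ((1,0) : Z2) ∈ Ev := by simp [Ev]
    have k2 : rot (1,0) - (1,0) ∈ Ev := Ev_rot k1
    have k3 : - rot (1,0) ∈ Ev := by have := Ev_rot k2; rwa [rot3b] at this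
    rw [if_pos k1, if_pos k2, if_pos k3]
  · intro v h
    have hm : v ∈ Ds V g := Finset.mem_filter.2 ⟨h.1.1, h⟩
    have h1 : cyc (rev (extz x)) v (-(1,0)) = 0 :=
      congrFun (congrArg Prod.fst (congrArg Prod.snd hx)) ⟨v, hm⟩
    rw [← neg_eq_zero, ← h1]
    unfold cyc dl rev
    have k1 : ((1,0) : Z2) ∈ Ev := by simp [Ev]
    have k2 : rot (1,0) - (1,0) ∈ Ev := Ev_rot k1
    have k3 : - rot (1,0) ∈ Ev := by have := Ev_rot k2; rwa [rot3b] at this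
    have e2 : rot (-(1,0)) - -(1,0) = -(rot (1,0) - (1,0)) := by rw [rot_neg]; abel
    have e3 : - rot (-(1,0)) = -(-rot (1,0)) := by rw [rot_neg]
    rw [e2, e3, if_neg (Ev_neg k1), if_neg (Ev_neg k2), if_neg (Ev_neg k3)]
    ring
  · intro v u h h'
    rw [← cyc_rot]
    exact h h'.rot

lemma dl_d5 {V g} (hs : Hs V) (hc : Conc V g) (hg : Good V g) {x : Es V g → ℝ} (hx : LL V g x = 0)
    {v u} (hu : u ∈ Dirs) (h : U2 V g v u) (ht : Tight V g v u) :
    dl x (v + u) (rot u - u) + dl x v (u - rot u) = 0 := by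
  have key : ∀ v u, u ∈ Ev → U2 V g v u → Tight V g v u →
      dl x (v + u) (rot u - u) + dl x v (u - rot u) = 0 := by
    intro v u hu h ht
    have hm : (v, u) ∈ Ts V g :=
      Finset.mem_filter.2 ⟨Finset.mem_product.2 ⟨h.1.1.1, hu⟩, h, ht⟩
    have h1 : extz x (v + u - rot u) (rot u - u) - extz x (v + u) (rot u - u) = 0 :=
      congrFun (congrArg Prod.snd (congrArg Prod.snd hx)) ⟨(v, u), hm⟩
    have h2 := dl_anti x (v + u - rot u) (rot u - u) (rsub_mem (Ev_sub hu))
    have e : v + u - rot u + (rot u - u) = v := by abel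
    rw [e, neg_sub] at h2
    rw [h2]
    unfold dl
    rw [if_pos (Ev_rot hu), if_pos (Ev_rot hu)]
    linarith
  rcases Ev_or hu with hE | hE
  · exact key v u hE h ht
  · have := key (v + u) (-u) hE (U2_cross hs hc hg hu h ht) ht.symm
    have e : v + u + -u = v := by abel
    have e1 : rot (-u) - -u = u - rot u := by rw [rot_neg]; abel
    have e2 : -u - rot (-u) = rot u - u := by rw [rot_neg]; abel
    rw [e, e1, e2] at this
    linarith

lemma exists_dir {V g v0} (hs : Hs V) (hc : Conc V g) (hg : Good V g) (hQ : Qp V)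
    (h0 : v0 ∈ V) (hN : ∃ v u, u ∈ Dirs ∧ NI V g v u) :
    ∃ φ : Z2 → ℝ, (∃ v ∈ V, φ v ≠ 0) ∧ (∀ v, v ∉ V → φ v = 0) ∧ φ v0 = 0 ∧
      (∀ v u, u ∈ Dirs → Tight V g v u → sl φ v u = 0) ∧
      (∀ v u, u ∈ Dirs → Tri V v u → ¬ Tight V g v u → IsI (g (v + u) - g v) →
        φ (v + u) = φ v) ∧
      (∀ v u, u ∈ Dirs → Tri V v u → IsI (g (v + u) - g v) → IsI (g (v + rot u) - g v) →
        φ (v + u) = φ v) := by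
  have hN' : ∃ v, NI V g v (1,0) ∨ NI V g v (-(1,0)) := by
    obtain ⟨v, u, hu, h⟩ := hN
    by_contra hcon
    push Not at hcon
    exact base_ind (fun v u => ¬ NI V g v u) (fun v => (hcon v).1) (fun v => (hcon v).2)
      (fun v u h h' => h h'.rot) v u hu h
  obtain ⟨x, hx0, hx⟩ := exists_ker hs hc hg hN'
  have hrn : ∀ v u, ¬ NI V g v u → ¬ NI V g (v + u) (rot u - u) := fun v u h h' =>
    h (NI_rot_iff.1 h')
  have hcyc : ∀ v u, u ∈ Dirs → Tri V v u → cyc (dl x) v u = 0 := by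
    intro v u hu ht
    by_cases h : NI V g v u
    · exact dl_d4 hx v u hu h
    · unfold cyc
      have h2 := hrn _ _ h
      have h3 := hrn _ _ h2
      rw [rot3a, rot3b] at h3
      rw [dl_d3 hu ht h, dl_d3 (rsub_mem hu) ht.rot h2, dl_d3 (negrot_mem hu) ht.rot' h3]
      ring
  obtain ⟨φ, hφ⟩ := potential hQ (dl x) (fun v u hu => dl_anti x v u hu) hcyc
  have hφ' : ∀ v u, u ∈ Dirs → v ∈ V → v + u ∈ V →
      (if v + u ∈ V then φ (v + u) - φ v0 else 0) - (if v ∈ V then φ v - φ v0 else 0) = dl x v u := by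
    intro v u hu h1 h2
    rw [if_pos h1, if_pos h2, ← hφ v u hu h1 h2]; ring
  refine ⟨fun v => if v ∈ V then φ v - φ v0 else 0, ?_, ?_, ?_, ?_, ?_, ?_⟩
  · by_contra hcon
    push Not at hcon
    apply hx0
    funext e
    by_contra hne
    obtain ⟨⟨v, u⟩, he⟩ := e
    have hE := Finset.mem_filter.1 he
    have hu := (Finset.mem_product.1 hE.1).2
    have hv := (Finset.mem_product.1 hE.1).1
    have hvu : v + u ∈ V := by
      rcases hE.2.1 with h | h
      · exact h.1.2.1
      · exact h.1.1
    have h1 := hφ' v u (Ev_sub hu) hv hvu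
    have h2 := hcon v hv
    have h3 := hcon _ hvu
    rw [h2, h3] at h1
    unfold dl extz at h1
    simp only at hu
    rw [if_pos hu, dif_pos he] at h1
    apply hne
    rw [← h1]; simp
  · intro v hv; simp only [if_neg hv]
  · simp
  · intro v u hu ht
    have a1 := ht.1.1
    have a2 := ht.1.2.1
    have a3 := ht.1.2.2
    have a4 := tri_opp_apex ht.2.1
    have e1 := rot3a v u
    have e2 : v + (u - rot u) = v + u - rot u := by abel
    have e3 : v + u - rot u + rot u = v + u := by abel
    have e4 := rot3c v u
    have b1 := hφ (v + u) (rot u - u) (rsub_mem hu) a2 (by rw [e1]; exact a3)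
    have b2 := hφ v (u - rot u) (subr_mem hu) a1 (by rw [e2]; exact a4)
    have b3 := hφ (v + u - rot u) (rot u) (rot_mem hu) a4 (by rw [e3]; exact a2)
    have b4 := hφ (v + rot u) (-rot u) (negrot_mem hu) a3 (by rw [e4]; exact a1)
    rw [e1] at b1
    rw [e2] at b2
    rw [e3] at b3
    rw [e4] at b4
    unfold sl
    simp only [if_pos a1, if_pos a2, if_pos a3, if_pos a4]
    by_cases hN : NI V g v u
    · by_cases hU : U2 V g v u
      · have := dl_d5 hs hc hg hx hu hU ht
        linarith
      · have : iNT V g (v + u) (rot u - u) ∨ iNT V g (v + rot u) (-rot u) := by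
          by_contra hcon
          push Not at hcon
          exact hU ⟨hN, fun q => q.2 ht, hcon.1, hcon.2⟩
        rcases this with h | h
        · have h' := par2 hs hc hg hu hN ht h
          rw [dl_d1 h] at b1
          rw [dl_d1 h'] at b2
          linarith
        · have h' := par1 hs hc hg hu hN ht h
          rw [dl_d1 h'] at b3
          rw [dl_d1 h] at b4
          linarith
    · have h2 : ¬ NI V g (v + u) (-u) := by
        intro h
        have := h.cross (neg_mem hu) ht.symm
        have e : v + u + -u = v := by abel
        rw [e, neg_neg] at this
        exact hN this
      have h3 := hrn _ _ h2
      have t3 := ht.2.1.rot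
      have e : v + u + -u = v := by abel
      have e1 : rot (-u) - -u = u - rot u := by rw [rot_neg]; abel
      rw [e, e1] at h3 t3
      rw [dl_d3 (rsub_mem hu) ht.1.rot (hrn _ _ hN)] at b1
      rw [dl_d3 (subr_mem hu) t3 h3] at b2
      linarith
  · intro v u hu ht hnt hi
    have := hφ' v u hu ht.1 ht.2.1
    rw [dl_d1 ⟨hi, hnt⟩] at this
    simp only
    linarith
  · intro v u hu ht hi hi'
    have := hφ' v u hu ht.1 ht.2.1
    rw [dl_d3 hu ht (fun q => q.2 ⟨hi, hi'⟩)] at this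
    simp only
    linarith

end TG

namespace TG

def PP (V : Finset Z2) (g0 : Z2 → ℝ) (v0 : Z2) (M : ℤ) : Set (Z2 → ℝ) :=
  {g | (∀ v, v ∉ V → g v = 0) ∧ g v0 = 0 ∧ Conc V g ∧
    (∀ v u, u ∈ Dirs → Tri V v u → v + u - rot u ∉ V →
      ((⌊g0 (v + u) - g0 v⌋ : ℤ) : ℝ) ≤ g (v + u) - g v ∧
      g (v + u) - g v ≤ ((⌈g0 (v + u) - g0 v⌉ : ℤ) : ℝ)) ∧
    (∀ v u, u ∈ Dirs → Tri V v u → IsI (g0 (v + u) - g0 v) → IsI (g0 (v + rot u) - g0 v) →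
      g (v + u) - g v = g0 (v + u) - g0 v) ∧
    (∀ v u, u ∈ Dirs → (Tri V v u ∨ Tri V (v + u) (-u)) → g (v + u) - g v ≤ (M : ℝ))}


lemma ev_lin {a b : ℝ} (h : 0 ≤ a) (h' : a = 0 → 0 ≤ b) :
    ∀ᶠ ε in nhdsWithin (0 : ℝ) (Set.Ioi 0), 0 ≤ a + ε * b := by
  rcases h.eq_or_lt with h1 | h1
  · have := h' h1.symm
    filter_upwards [self_mem_nhdsWithin] with ε hε
    have : 0 < ε := hε
    positivity
  · have hc : Filter.Tendsto (fun ε : ℝ => a + ε * b) (nhds 0) (nhds (a + 0 * b)) :=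
      Continuous.tendsto (by fun_prop) 0
    rw [zero_mul, add_zero] at hc
    have := hc.eventually (lt_mem_nhds h1)
    exact (this.filter_mono nhdsWithin_le_nhds).mono (fun _ h => h.le)

lemma ev_lin' {V : Finset Z2} {Q : Z2 → Z2 → Prop} {a b : Z2 → Z2 → ℝ}
    (hV : ∀ v u, u ∈ Dirs → Q v u → v ∈ V)
    (h : ∀ v u, u ∈ Dirs → Q v u → 0 ≤ a v u)
    (h' : ∀ v u, u ∈ Dirs → Q v u → a v u = 0 → 0 ≤ b v u) :
    ∀ᶠ ε in nhdsWithin (0 : ℝ) (Set.Ioi 0), ∀ v u, u ∈ Dirs → Q v u → 0 ≤ a v u + ε * b v u := by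
  have : ∀ᶠ ε in nhdsWithin (0 : ℝ) (Set.Ioi 0), ∀ v ∈ V, ∀ u ∈ Dirs,
      Q v u → 0 ≤ a v u + ε * b v u := by
    rw [Filter.eventually_all_finset]
    intro v _
    rw [Filter.eventually_all_finset]
    intro u hu
    by_cases q : Q v u
    · exact (ev_lin (h v u hu q) (h' v u hu q)).mono (fun _ h _ => h)
    · exact Filter.Eventually.of_forall (fun _ q' => absurd q' q)
  exact this.mono (fun ε h v u hu q => h v (hV v u hu q) u hu q)

/-- no bad edge for the window constraint -/
lemma window {V g0 v0 g φ} {M : ℤ}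
    (hM : ∀ v u, u ∈ Dirs → Tri V v u → v + u - rot u ∉ V →
      2 * ⌈g0 (v + u) - g0 v⌉ < M ∧ -M < 2 * ⌊g0 (v + u) - g0 v⌋)
    (hg : g ∈ PP V g0 v0 M)
    (f1 : ∀ v u, u ∈ Dirs → Tight V g v u → 0 ≤ sl φ v u)
    (f2 : ∀ v u, u ∈ Dirs → Tri V v u → ¬ Tight V g v u → IsI (g (v + u) - g v) →
        φ (v + u) = φ v)
    {v u} (hu : u ∈ Dirs) (he : Tri V v u ∨ Tri V (v + u) (-u))
    (hd : g (v + u) - g v = (M : ℝ)) : φ (v + u) - φ v ≤ 0 := by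
  obtain ⟨-, -, c1, c2, -, c4⟩ := hg
  by_contra hcon
  push Not at hcon
  let bad : Z2 → Prop := fun v => (Tri V v u ∨ Tri V (v + u) (-u)) ∧ g (v + u) - g v = (M : ℝ) ∧
    0 < φ (v + u) - φ v
  have badV : ∀ v, bad v → v ∈ V := by
    rintro v ⟨h | h, -⟩
    · exact h.1
    · have := h.2.1
      rwa [add_neg_cancel_right] at this
  have hne : (V.filter bad).Nonempty :=
    ⟨v, Finset.mem_filter.2 ⟨badV v ⟨he, hd, hcon⟩, he, hd, hcon⟩⟩
  obtain ⟨x, hx, hmax⟩ := Finset.exists_max_image _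
    (fun x => -(2 * cr x (rot u) + cr u x)) hne
  have hb := (Finset.mem_filter.1 hx).2
  obtain ⟨b1, b2, b3⟩ := hb
  clear hd hcon he hne
  have ht : Tight V g x u := by
    by_contra hnt
    rcases b1 with h | h
    · have := f2 x u hu h hnt ⟨M, b2⟩
      linarith
    · have := f2 (x + u) (-u) (neg_mem hu) h (fun q => hnt (by
        have := q.symm; rwa [neg_neg, add_neg_cancel_right] at this)) (by
        rw [add_neg_cancel_right]
        exact ⟨-M, by push_cast; linarith⟩)
      rw [add_neg_cancel_right] at this
      linarith
  have a1 := ht.1.1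
  have a2 := ht.1.2.1
  have a3 := ht.1.2.2
  have a4 := tri_opp_apex ht.2.1
  have hw := rot_mem hu
  have hcr := cr_rot hu
  by_cases m1 : x + rot u - u ∈ V
  · have e1 : rot (rot u) = rot u - u := rot_rot u
    have T1 : Tri V x (rot u) := ⟨a1, a3, by rw [e1, ← add_sub_assoc]; exact m1⟩
    have e2 : x + rot u - rot (rot u) = x + u := by rw [e1]; abel
    have e3 : x + rot (rot u) = x + rot u - u := by rw [e1]; abel
    have s1 := c1 x (rot u) hw T1 (by rw [e2]; exact a2)
    have T2 : Tri V (x + rot u) (-u) := ⟨a3, by rw [← sub_eq_add_neg]; exact m1, by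
      rw [rot_neg, add_neg_cancel_right]; exact a1⟩
    have e4 : x + rot u - u + u = x + rot u := by abel
    have q := c4 (x + rot u - u) u hu (Or.inr (by rw [e4]; exact T2))
    rw [e4] at q
    have s1' := s1
    unfold sl at s1'
    rw [e2, e3] at s1'
    have s0 : sl g x (rot u) = 0 := by
      refine le_antisymm ?_ s1
      unfold sl; rw [e2, e3]; linarith
    have s2 := f1 x (rot u) hw ⟨T1, tri_opp T1 (by rw [e2]; exact a2), s0⟩
    unfold sl at s2
    rw [e2, e3] at s2
    have hbad : bad (x + rot u - u) := by
      refine ⟨Or.inr (by rw [e4]; exact T2), ?_, ?_⟩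
      · rw [e4]; linarith
      · rw [e4]; linarith
    have := hmax _ (Finset.mem_filter.2 ⟨m1, hbad⟩)
    simp only [cr_sub_right, cr_add_right, cr_sub_left, cr_add_left, cr_self, hcr] at this
    linarith
  by_cases m2 : x - rot u ∈ V
  · have e1 : rot (u - rot u) = u := rot_subr u
    have e0 : x + (u - rot u) = x + u - rot u := by abel
    have T1 : Tri V x (u - rot u) := ⟨a1, by rw [e0]; exact a4, by rw [e1]; exact a2⟩
    have e2 : x + (u - rot u) - rot (u - rot u) = x - rot u := by rw [e1]; abel
    have e3 : x + rot (u - rot u) = x + u := by rw [e1]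
    have s1 := c1 x (u - rot u) (subr_mem hu) T1 (by rw [e2]; exact m2)
    have e4 : x - rot u + u = x + u - rot u := by abel
    have T2 : Tri V (x - rot u) u := ⟨m2, by rw [e4]; exact a4, by
      rw [sub_add_cancel]; exact a1⟩
    have q := c4 (x - rot u) u hu (Or.inl T2)
    rw [e4] at q
    have s1' := s1
    unfold sl at s1'
    rw [e2, e3, e0] at s1'
    have s0 : sl g x (u - rot u) = 0 := by
      refine le_antisymm ?_ s1
      unfold sl; rw [e2, e3, e0]; linarith
    have s2 := f1 x (u - rot u) (subr_mem hu) ⟨T1, tri_opp T1 (by rw [e2]; exact m2), s0⟩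
    unfold sl at s2
    rw [e2, e3, e0] at s2
    have hbad : bad (x - rot u) := by
      refine ⟨Or.inl T2, ?_, ?_⟩
      · rw [e4]; linarith
      · rw [e4]; linarith
    have := hmax _ (Finset.mem_filter.2 ⟨m2, hbad⟩)
    simp only [cr_sub_right, cr_add_right, cr_sub_left, cr_add_left, cr_self, hcr] at this
    linarith
  · have T1 := ht.1.rot'
    have e1 : x + rot u + -rot u - rot (-rot u) = x + rot u - u := by
      rw [rot_neg, rot_rot]; abel
    have q1 := c2 (x + rot u) (-rot u) (negrot_mem hu) T1 (by rw [e1]; exact m1)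
    have r1 := hM (x + rot u) (-rot u) (negrot_mem hu) T1 (by rw [e1]; exact m1)
    have e0 : x + (u - rot u) = x + u - rot u := by abel
    have e1' : rot (u - rot u) = u := rot_subr u
    have T2 : Tri V x (u - rot u) := ⟨a1, by rw [e0]; exact a4, by rw [e1']; exact a2⟩
    have e2 : x + (u - rot u) - rot (u - rot u) = x - rot u := by rw [e1']; abel
    have q2 := c2 x (u - rot u) (subr_mem hu) T2 (by rw [e2]; exact m2)
    have r2 := hM x (u - rot u) (subr_mem hu) T2 (by rw [e2]; exact m2)
    have z1 : (-M : ℝ) < 2 * (⌊g0 (x + rot u + -rot u) - g0 (x + rot u)⌋ : ℤ) := by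
      exact_mod_cast r1.2
    have z2 : 2 * ((⌈g0 (x + (u - rot u)) - g0 x⌉ : ℤ) : ℝ) < (M : ℝ) := by exact_mod_cast r2.1
    have s0 := ht.2.2
    unfold sl at s0
    rw [rot3c] at q1
    rw [e0] at q2
    rw [rot3c] at z1
    rw [e0] at z2
    linarith [q1.1, q2.2]

lemma perturb {V g0 v0 g φ} {M : ℤ}
    (hM : ∀ v u, u ∈ Dirs → Tri V v u → v + u - rot u ∉ V →
      2 * ⌈g0 (v + u) - g0 v⌉ < M ∧ -M < 2 * ⌊g0 (v + u) - g0 v⌋)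
    (hg : g ∈ PP V g0 v0 M)
    (f0 : ∀ v, v ∉ V → φ v = 0) (f0' : φ v0 = 0)
    (f1 : ∀ v u, u ∈ Dirs → Tight V g v u → 0 ≤ sl φ v u)
    (f2 : ∀ v u, u ∈ Dirs → Tri V v u → ¬ Tight V g v u → IsI (g (v + u) - g v) →
        φ (v + u) = φ v)
    (f3 : ∀ v u, u ∈ Dirs → Tri V v u → IsI (g (v + u) - g v) → IsI (g (v + rot u) - g v) →
        φ (v + u) = φ v) :
    ∀ᶠ ε in nhdsWithin (0 : ℝ) (Set.Ioi 0), (fun v => g v + ε * φ v) ∈ PP V g0 v0 M := by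
  have hgP := hg
  obtain ⟨c0, c0', c1, c2, c3, c4⟩ := hg
  have nt : ∀ v u, v + u - rot u ∉ V → ¬ Tight V g v u := fun v u h t => h (tri_opp_apex t.2.1)
  have E1 := ev_lin' (V := V) (Q := fun v u => Tri V v u ∧ v + u - rot u ∈ V)
    (a := fun v u => sl g v u) (b := fun v u => sl φ v u) (fun v u _ q => q.1.1)
    (fun v u hu q => c1 v u hu q.1 q.2)
    (fun v u hu q h => f1 v u hu ⟨q.1, tri_opp q.1 q.2, h⟩)
  have E2 := ev_lin' (V := V) (Q := fun v u => Tri V v u ∧ v + u - rot u ∉ V)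
    (a := fun v u => g (v + u) - g v - ((⌊g0 (v + u) - g0 v⌋ : ℤ) : ℝ))
    (b := fun v u => φ (v + u) - φ v) (fun v u _ q => q.1.1)
    (fun v u hu q => by have := (c2 v u hu q.1 q.2).1; linarith)
    (fun v u hu q h => by
      have := f2 v u hu q.1 (nt v u q.2) ⟨_, sub_eq_zero.1 h⟩
      linarith)
  have E3 := ev_lin' (V := V) (Q := fun v u => Tri V v u ∧ v + u - rot u ∉ V)
    (a := fun v u => ((⌈g0 (v + u) - g0 v⌉ : ℤ) : ℝ) - (g (v + u) - g v))
    (b := fun v u => φ v - φ (v + u)) (fun v u _ q => q.1.1)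
    (fun v u hu q => by have := (c2 v u hu q.1 q.2).2; linarith)
    (fun v u hu q h => by
      have := f2 v u hu q.1 (nt v u q.2) ⟨_, (sub_eq_zero.1 h).symm⟩
      linarith)
  have E4 := ev_lin' (V := V) (Q := fun v u => Tri V v u ∨ Tri V (v + u) (-u))
    (a := fun v u => (M : ℝ) - (g (v + u) - g v))
    (b := fun v u => φ v - φ (v + u))
    (fun v u _ q => by
      rcases q with h | h
      · exact h.1
      · have := h.2.1
        rwa [add_neg_cancel_right] at this)
    (fun v u hu q => by have := c4 v u hu q; linarith)
    (fun v u hu q h => by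
      have := window hM hgP f1 f2 hu q (sub_eq_zero.1 h).symm
      linarith)
  filter_upwards [E1, E2, E3, E4] with ε h1 h2 h3 h4
  refine ⟨?_, ?_, ?_, ?_, ?_, ?_⟩
  · intro v hv; simp only [c0 v hv, f0 v hv]; ring
  · simp only [c0', f0']; ring
  · intro v u hu ht ha
    have := h1 v u hu ⟨ht, ha⟩
    unfold sl at this ⊢
    linarith
  · intro v u hu ht ha
    have a := h2 v u hu ⟨ht, ha⟩
    have b := h3 v u hu ⟨ht, ha⟩
    constructor
    · simp only at a ⊢; linarith
    · simp only at b ⊢; linarith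
  · intro v u hu ht i1 i2
    have a := c3 v u hu ht i1 i2
    have r2 : IsI (g (v + rot u) - g v) := by
      have t := ht.rot'
      have := c3 (v + rot u) (-rot u) (negrot_mem hu) t (by
        rw [rot3c]; have := i2.neg; rwa [neg_sub] at this) (by
        have e : v + rot u + rot (-rot u) = v + u := by rw [rot_neg, rot_rot]; abel
        rw [e]
        have := i1.sub i2
        have e2 : g0 (v + u) - g0 v - (g0 (v + rot u) - g0 v) = g0 (v + u) - g0 (v + rot u) := by
          ring
        rwa [e2] at this)
      rw [rot3c] at this
      have e2 : g (v + rot u) - g v = g0 (v + rot u) - g0 v := by linarith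
      rw [e2]; exact i2
    have b := f3 v u hu ht (by rw [a]; exact i1) r2
    simp only [b]; linarith
  · intro v u hu he
    have := h4 v u hu he
    simp only at this ⊢; linarith

end TG

namespace TG

lemma fin_bd {α : Type} (s : Finset α) (f : α → ℝ) : ∃ B, 0 ≤ B ∧ ∀ t ∈ s, |f t| ≤ B :=
  ⟨∑ t ∈ s, |f t|, Finset.sum_nonneg (fun _ _ => abs_nonneg _), fun _ ht =>
    Finset.single_le_sum (f := fun t => |f t|) (fun _ _ => abs_nonneg _) ht⟩

lemma PP_closed (V g0 v0 M) : IsClosed (PP V g0 v0 M) := by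
  have cont : ∀ v : Z2, Continuous (fun g : Z2 → ℝ => g v) := fun v => continuous_apply v
  have e : PP V g0 v0 M = {g | ∀ v, v ∉ V → g v = 0} ∩ ({g | g v0 = 0} ∩ ({g | ∀ v u, u ∈ Dirs →
      Tri V v u → v + u - rot u ∈ V → 0 ≤ sl g v u} ∩ ({g | ∀ v u, u ∈ Dirs → Tri V v u →
      v + u - rot u ∉ V → ((⌊g0 (v + u) - g0 v⌋ : ℤ) : ℝ) ≤ g (v + u) - g v ∧
      g (v + u) - g v ≤ ((⌈g0 (v + u) - g0 v⌉ : ℤ) : ℝ)} ∩ ({g | ∀ v u, u ∈ Dirs → Tri V v u →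
      IsI (g0 (v + u) - g0 v) → IsI (g0 (v + rot u) - g0 v) →
      g (v + u) - g v = g0 (v + u) - g0 v} ∩ {g | ∀ v u, u ∈ Dirs →
      (Tri V v u ∨ Tri V (v + u) (-u)) → g (v + u) - g v ≤ (M : ℝ)})))) := rfl
  rw [e]
  refine IsClosed.inter ?_ (IsClosed.inter ?_ (IsClosed.inter ?_ (IsClosed.inter ?_
    (IsClosed.inter ?_ ?_))))
  · simp only [Set.ofPred_forall]
    exact isClosed_iInter (fun v => isClosed_iInter (fun _ => isClosed_eq (cont v) continuous_const))
  · exact isClosed_eq (cont v0) continuous_const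
  · simp only [Set.ofPred_forall]
    refine isClosed_iInter (fun v => isClosed_iInter (fun u => isClosed_iInter (fun _ =>
      isClosed_iInter (fun _ => isClosed_iInter (fun _ => isClosed_le continuous_const ?_)))))
    unfold sl; fun_prop
  · simp only [Set.ofPred_forall]
    refine isClosed_iInter (fun v => isClosed_iInter (fun u => isClosed_iInter (fun _ =>
      isClosed_iInter (fun _ => isClosed_iInter (fun _ => ?_)))))
    rw [Set.ofPred_and]
    exact IsClosed.inter (isClosed_le continuous_const (by fun_prop))
      (isClosed_le (by fun_prop) continuous_const)
  · simp only [Set.ofPred_forall]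
    refine isClosed_iInter (fun v => isClosed_iInter (fun u => isClosed_iInter (fun _ =>
      isClosed_iInter (fun _ => isClosed_iInter (fun _ => isClosed_iInter (fun _ =>
        isClosed_eq (by fun_prop) continuous_const))))))
  · simp only [Set.ofPred_forall]
    refine isClosed_iInter (fun v => isClosed_iInter (fun u => isClosed_iInter (fun _ =>
      isClosed_iInter (fun _ => isClosed_le (by fun_prop) continuous_const))))

lemma PP_bdd {V : Finset Z2} (g0) {v0 : Z2} {M : ℤ} (hs : Hs V) (h0 : v0 ∈ V)
    (hV : ∀ x ∈ V, ∃ u ∈ Dirs, Tri V x u) :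
    ∃ K : ℝ, 0 ≤ K ∧ ∀ g ∈ PP V g0 v0 M, ∀ v, |g v| ≤ K := by
  obtain ⟨B1, hB1, b1⟩ := fin_bd ((V ×ˢ V) ×ˢ Dirs) (fun t => (cr (t.1.1 - t.1.2) (rot t.2) : ℝ))
  obtain ⟨B2, hB2, b2⟩ := fin_bd ((V ×ˢ V) ×ˢ Dirs) (fun t => (cr t.2 (t.1.1 - t.1.2) : ℝ))
  refine ⟨(B1 + B2) * |(M : ℝ)|, by positivity, ?_⟩
  rintro g ⟨c0, c0', c1, -, -, c4⟩ v
  have key : ∀ x ∈ V, ∀ y ∈ V, ∀ u ∈ Dirs, ∀ p, In V g p y u →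
      |dp p (x - y)| ≤ (B1 + B2) * |(M : ℝ)| := by
    intro x hx y hy u hu p hp
    rw [dp_decomp hu]
    have hm : ((x, y), u) ∈ (V ×ˢ V) ×ˢ Dirs := by simp [hx, hy, hu]
    have q1 := b1 _ hm
    have q2 := b2 _ hm
    have small : ∀ a ∈ Dirs, (Tri V y a ∨ Tri V (y + a) (-a)) → |g (y + a) - g y| ≤ |(M : ℝ)| := by
      intro a ha ht
      refine abs_le_abs (c4 y a ha ht) ?_
      have := c4 (y + a) (-a) (neg_mem ha) (by rw [neg_neg, add_neg_cancel_right]; exact ht.symm)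
      rw [add_neg_cancel_right] at this
      linarith
    have r1 : |dp p u| ≤ |(M : ℝ)| := by rw [← hp.2.1]; exact small u hu (Or.inl hp.1)
    have r2 : |dp p (rot u)| ≤ |(M : ℝ)| := by
      rw [← hp.2.2]; exact small (rot u) (rot_mem hu) (Or.inr hp.1.rot')
    calc _ ≤ |(cr (x - y) (rot u) : ℝ) * dp p u| + |(cr u (x - y) : ℝ) * dp p (rot u)| :=
          abs_add_le _ _
      _ ≤ B1 * |(M : ℝ)| + B2 * |(M : ℝ)| := by
          rw [abs_mul, abs_mul]
          gcongr
      _ = _ := by ring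
  by_cases hv : v ∈ V
  swap
  · rw [c0 v hv, abs_zero]; positivity
  obtain ⟨u, hu, ht⟩ := hV v hv
  obtain ⟨u', hu', ht'⟩ := hV v0 h0
  obtain ⟨p, hp⟩ := exists_In g hu ht
  obtain ⟨p', hp'⟩ := exists_In g hu' ht'
  have m1 := maj hs c1 hu hp h0
  have m2 := maj hs c1 hu' hp' hv
  have k1 := abs_le.1 (key v0 h0 v hv u hu p hp)
  have k2 := abs_le.1 (key v hv v0 h0 u' hu' p' hp')
  rw [c0'] at m1 m2
  rw [abs_le]
  constructor <;> linarith [k1.1, k1.2, k2.1, k2.2]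

lemma core {V : Finset Z2} {g0 : Z2 → ℝ} (hne : V.Nonempty) (hs : Hs V) (hQ : Qp V)
    (hV : ∀ x ∈ V, ∃ u ∈ Dirs, Tri V x u) (hc0 : Conc V g0) :
    ∃ g : Z2 → ℝ, Conc V g ∧ (∀ v u, u ∈ Dirs → Tri V v u → IsI (g (v + u) - g v)) ∧
      (∀ v u, u ∈ Dirs → Tri V v u → v + u - rot u ∉ V → IsI (g0 (v + u) - g0 v) →
        g (v + u) - g v = g0 (v + u) - g0 v) ∧
      (∀ v u, u ∈ Dirs → Tri V v u → IsI (g0 (v + u) - g0 v) → IsI (g0 (v + rot u) - g0 v) →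
        g (v + u) - g v = g0 (v + u) - g0 v) := by
  obtain ⟨v0, h0⟩ := exists_lexmax hne
  obtain ⟨B, hB, hb⟩ := fin_bd (V ×ˢ Dirs) (fun t => g0 (t.1 + t.2) - g0 t.1)
  have hb' : ∀ v ∈ V, ∀ u ∈ Dirs, |g0 (v + u) - g0 v| ≤ B := fun v hv u hu =>
    hb (v, u) (by simp [hv, hu])
  obtain ⟨M, hMB⟩ : ∃ M : ℤ, 2 * B + 3 ≤ (M : ℝ) := ⟨⌈2 * B + 3⌉, Int.le_ceil _⟩
  have hM : ∀ v u, u ∈ Dirs → Tri V v u → v + u - rot u ∉ V →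
      2 * ⌈g0 (v + u) - g0 v⌉ < M ∧ -M < 2 * ⌊g0 (v + u) - g0 v⌋ := by
    intro v u hu ht _
    have h := abs_le.1 (hb' v ht.1 u hu)
    have h1 := Int.ceil_lt_add_one (g0 (v + u) - g0 v)
    have h2 := Int.sub_one_lt_floor (g0 (v + u) - g0 v)
    constructor
    · have : 2 * ((⌈g0 (v + u) - g0 v⌉ : ℤ) : ℝ) < (M : ℝ) := by linarith [h.2]
      exact_mod_cast this
    · have : -(M : ℝ) < 2 * ((⌊g0 (v + u) - g0 v⌋ : ℤ) : ℝ) := by linarith [h.1]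
      exact_mod_cast this
  have hP0 : (fun v => if v ∈ V then g0 v - g0 v0 else 0) ∈ PP V g0 v0 M := by
    have dif : ∀ v w, v ∈ V → w ∈ V → (if w ∈ V then g0 w - g0 v0 else 0) -
        (if v ∈ V then g0 v - g0 v0 else 0) = g0 w - g0 v := by
      intro v w hv hw; rw [if_pos hv, if_pos hw]; ring
    refine ⟨?_, ?_, ?_, ?_, ?_, ?_⟩
    · intro v hv; simp only [if_neg hv]
    · simp
    · intro v u hu ht ha
      have := hc0 v u hu ht ha
      unfold sl at this ⊢
      simp only [if_pos ht.1, if_pos ht.2.1, if_pos ht.2.2, if_pos ha]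
      linarith
    · intro v u hu ht _
      simp only [dif _ _ ht.1 ht.2.1]
      exact ⟨Int.floor_le _, Int.le_ceil _⟩
    · intro v u hu ht _ _
      exact dif _ _ ht.1 ht.2.1
    · intro v u hu he
      have a1 : v ∈ V := by
        rcases he with h | h
        · exact h.1
        · have := h.2.1
          rwa [add_neg_cancel_right] at this
      have a2 : v + u ∈ V := by
        rcases he with h | h
        · exact h.2.1
        · exact h.1
      simp only [dif _ _ a1 a2]
      linarith [(abs_le.1 (hb' v a1 u hu)).2]
  obtain ⟨K, hK, hk⟩ := PP_bdd g0 (M := M) hs h0.1 hV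
  have hcomp : IsCompact (PP V g0 v0 M) := by
    refine (isCompact_univ_pi (fun _ : Z2 => isCompact_Icc (a := -K) (b := K))).of_isClosed_subset
      (PP_closed _ _ _ _) ?_
    intro g hg v _
    exact abs_le.1 (hk g hg v)
  obtain ⟨g, hg, hmax⟩ := hcomp.exists_isMaxOn ⟨_, hP0⟩
    (f := fun g : Z2 → ℝ => ∑ v ∈ V, (g v + K) ^ 2)
    (Continuous.continuousOn (by fun_prop))
  have hmax' : ∀ g' ∈ PP V g0 v0 M, ∑ v ∈ V, (g' v + K) ^ 2 ≤ ∑ v ∈ V, (g v + K) ^ 2 :=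
    fun g' h => hmax h
  have hc : Conc V g := hg.2.2.1
  have rotI : ∀ v u, IsI (g (v + u) - g v) → IsI (g (v + rot u) - g v) →
      IsI (g (v + u + (rot u - u)) - g (v + u)) ∧ IsI (g (v + u + rot (rot u - u)) - g (v + u)) := by
    intro v u i1 i2
    rw [rot3a, rot_rsub, add_neg_cancel_right]
    constructor
    · have := i2.sub i1
      have e : g (v + rot u) - g v - (g (v + u) - g v) = g (v + rot u) - g (v + u) := by ring
      rwa [e] at this
    · have := i1.neg; rwa [neg_sub] at this
  have hphi : ∀ v, phi V g v = 0 := by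
    have ev := perturb (φ := phi V g) hM hg (fun v hv => phi_off hv) (phi_v0 h0)
      (fun v u hu ht => phi_f1 hs hc hu ht) (fun v u hu ht hn hi => phi_f2 hs hc hu ht hn hi)
      (fun v u hu ht i1 i2 => by
        rw [phi_f3 hs hc hu ht i1 i2]
        obtain ⟨j1, j2⟩ := rotI v u i1 i2
        exact phi_f3 hs hc (rsub_mem hu) ht.rot j1 j2)
    obtain ⟨ε, h1, h2⟩ := (ev.and self_mem_nhdsWithin).exists
    have hε : 0 < ε := h2
    intro w
    by_cases hw : w ∈ V
    swap
    · exact phi_off hw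
    by_contra hcon
    have hpos : 0 < phi V g w := lt_of_le_of_ne (phi_nonneg hs hc w) (Ne.symm hcon)
    have := hmax' _ h1
    have lt : ∑ v ∈ V, (g v + K) ^ 2 < ∑ v ∈ V, (g v + ε * phi V g v + K) ^ 2 := by
      refine Finset.sum_lt_sum (fun v _ => ?_) ⟨w, hw, ?_⟩
      · have a := (abs_le.1 (hk g hg v)).1
        have b := phi_nonneg hs hc v
        have c : 0 ≤ ε * phi V g v := by positivity
        exact pow_le_pow_left₀ (by linarith) (by linarith) 2
      · have a := (abs_le.1 (hk g hg w)).1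
        have c : 0 < ε * phi V g w := by positivity
        exact pow_lt_pow_left₀ (by linarith) (by linarith) (by norm_num)
    linarith
  have hgood := good_of_phi hs hc hphi
  have hNoNI : ∀ v u, u ∈ Dirs → ¬ NI V g v u := by
    intro v u hu hN
    obtain ⟨φ, ⟨w, hw, hw0⟩, f0, f0', f1, f2, f3⟩ := exists_dir hs hc hgood hQ h0.1 ⟨v, u, hu, hN⟩
    have ev1 := perturb (φ := φ) hM hg f0 f0' (fun v u hu ht => (f1 v u hu ht).ge) f2 f3
    have ev2 := perturb (φ := fun v => - φ v) hM hg (fun v hv => by rw [f0 v hv, neg_zero])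
      (by rw [f0', neg_zero])
      (fun v u hu ht => by
        have := f1 v u hu ht
        unfold sl at this ⊢; linarith)
      (fun v u hu a b c => by rw [f2 v u hu a b c]) (fun v u hu a b c => by rw [f3 v u hu a b c])
    obtain ⟨ε, ⟨h1, h2⟩, h3⟩ := ((ev1.and ev2).and self_mem_nhdsWithin).exists
    have hε : 0 < ε := h3
    have q1 := hmax' _ h1
    have q2 := hmax' _ h2
    have e : ∑ v ∈ V, (g v + ε * φ v + K) ^ 2 + ∑ v ∈ V, (g v + ε * -φ v + K) ^ 2 =
        2 * ∑ v ∈ V, (g v + K) ^ 2 + 2 * ∑ v ∈ V, (ε * φ v) ^ 2 := by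
      rw [← Finset.sum_add_distrib, Finset.mul_sum, Finset.mul_sum, ← Finset.sum_add_distrib]
      exact Finset.sum_congr rfl (fun v _ => by ring)
    have pos : 0 < ∑ v ∈ V, (ε * φ v) ^ 2 :=
      Finset.sum_pos' (fun v _ => sq_nonneg _) ⟨w, hw, by positivity⟩
    linarith
  have hII : ∀ v u, u ∈ Dirs → Tri V v u → IsI (g (v + u) - g v) := by
    intro v u hu ht
    by_contra hcon
    exact hNoNI v u hu ⟨ht, fun q => hcon q.1⟩
  refine ⟨g, hc, hII, ?_, hg.2.2.2.2.1⟩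
  rintro v u hu ht ha ⟨z, hz⟩
  have := hg.2.2.2.1 v u hu ht ha
  rw [hz, Int.floor_intCast, Int.ceil_intCast] at this
  rw [hz]; linarith [this.1, this.2]

end TG

namespace TG

def ptR (o : Pt) (y : ℝ × ℝ) : Pt := (o.1 + y.1 - y.2 / 2, o.2 + y.2 * (Real.sqrt 3 / 2))
def cst (x : Z2) : ℝ × ℝ := ((x.1 : ℝ), (x.2 : ℝ))
def pt (o : Pt) (x : Z2) : Pt := ptR o (cst x)

def affst (o : Pt) (a b c : ℝ) : Pt →ᵃ[ℝ] ℝ :=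
  (a • LinearMap.fst ℝ ℝ ℝ + ((a / 2 + b) * (2 / Real.sqrt 3)) • LinearMap.snd ℝ ℝ ℝ).toAffineMap +
    AffineMap.const ℝ Pt (c - a * o.1 - (a / 2 + b) * (2 / Real.sqrt 3) * o.2)

lemma s3 : Real.sqrt 3 ≠ 0 := by positivity

lemma affst_pt (o a b c y) : affst o a b c (ptR o y) = a * y.1 + b * y.2 + c := by
  have := s3
  simp only [affst, ptR, Pi.add_apply, AffineMap.coe_add,
    LinearMap.coe_toAffineMap, LinearMap.add_apply, LinearMap.smul_apply, LinearMap.fst_apply,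
    LinearMap.snd_apply, smul_eq_mul, AffineMap.const_apply]
  field_simp
  ring

lemma pt_inj {o x y} (h : pt o x = pt o y) : x = y := by
  have h1 := congrArg (affst o 1 0 0) h
  have h2 := congrArg (affst o 0 1 0) h
  unfold pt at h1 h2
  rw [affst_pt, affst_pt] at h1 h2
  simp [cst] at h1 h2
  exact Prod.ext h1 h2

lemma ptR_combo (o) (a b : ℝ) (hab : a + b = 1) (x y) :
    ptR o (a • x + b • y) = a • ptR o x + b • ptR o y := by
  have : b = 1 - a := by linarith
  subst this
  ext <;> simp [ptR] <;> ring

lemma hull_le {T : GridTriangle} (φ ψ : Pt →ᵃ[ℝ] ℝ) (h0 : φ T.v0 ≤ ψ T.v0) (h1 : φ T.v1 ≤ ψ T.v1)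
    (h2 : φ T.v2 ≤ ψ T.v2) : ∀ q ∈ T.region, φ q ≤ ψ q := by
  have hc : Convex ℝ {q | φ q ≤ ψ q} := by
    intro x hx y hy a b ha hb hab
    have hx' : φ x ≤ ψ x := hx
    have hy' : φ y ≤ ψ y := hy
    change φ _ ≤ ψ _
    rw [Convex.combo_affine_apply hab, Convex.combo_affine_apply hab]
    simp only [smul_eq_mul]
    gcongr
  have := convexHull_min (s := {T.v0, T.v1, T.v2}) (t := {q | φ q ≤ ψ q}) (by
    intro q hq
    simp only [Set.mem_insert_iff, Set.mem_singleton_iff] at hq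
    rcases hq with rfl | rfl | rfl
    · exact h0
    · exact h1
    · exact h2) hc
  exact fun q hq => this hq

lemma pt_add (o : Pt) (c d : Z2) :
    pt o (c + d) = pt o c + (((d.1 : ℝ) - d.2 / 2, (d.2 : ℝ) * (Real.sqrt 3 / 2)) : ℝ × ℝ) := by
  ext <;> simp [pt, ptR, cst] <;> ring

lemma v0_eq (o c b) : (GridTriangle.mk (pt o c) b).v0 = pt o c := rfl
lemma v1_eq (o c b) : (GridTriangle.mk (pt o c) b).v1 = pt o (c + (1,0)) := by
  unfold GridTriangle.v1
  rw [pt_add]; simp [xiv]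
lemma v2_eq_t (o c) : (GridTriangle.mk (pt o c) true).v2 = pt o (c + (1,1)) := by
  unfold GridTriangle.v2
  rw [pt_add]; ext <;> simp [xiv] <;> ring
lemma v2_eq_f (o c) : (GridTriangle.mk (pt o c) false).v2 = pt o (c + (0,-1)) := by
  unfold GridTriangle.v2
  rw [pt_add]; ext <;> simp [xiv] <;> ring

lemma hull_st {T : GridTriangle} {o} {c0 c1 c2 : Z2} (h0 : T.v0 = pt o c0) (h1 : T.v1 = pt o c1)
    (h2 : T.v2 = pt o c2) (a b k : ℝ) (g0 : 0 ≤ a * c0.1 + b * c0.2 + k)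
    (g1 : 0 ≤ a * c1.1 + b * c1.2 + k) (g2 : 0 ≤ a * c2.1 + b * c2.2 + k) {y}
    (hy : ptR o y ∈ T.region) : 0 ≤ a * y.1 + b * y.2 + k := by
  have := hull_le (T := T) (affst o 0 0 0) (affst o a b k)
    (by rw [h0]; unfold pt; rw [affst_pt, affst_pt]; simpa [cst] using g0)
    (by rw [h1]; unfold pt; rw [affst_pt, affst_pt]; simpa [cst] using g1)
    (by rw [h2]; unfold pt; rw [affst_pt, affst_pt]; simpa [cst] using g2) _ hy
  rw [affst_pt, affst_pt] at this
  linarith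

lemma reg_t {o c y} (h : ptR o y ∈ (GridTriangle.mk (pt o c) true).region) :
    (c.2 : ℝ) ≤ y.2 ∧ y.2 - c.2 ≤ y.1 - c.1 ∧ y.1 ≤ c.1 + 1 := by
  have k := fun a b k => hull_st (v0_eq o c true) (v1_eq o c true) (v2_eq_t o c) a b k (y := y)
  have k1 := k 0 1 (-c.2) (by simp) (by simp) (by simp) h
  have k2 := k 1 (-1) (c.2 - c.1) (by simp; linarith) (by simp; linarith) (by simp; linarith) h
  have k3 := k (-1) 0 (c.1 + 1) (by simp) (by simp) (by simp) h
  refine ⟨by linarith, by linarith, by linarith⟩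

lemma reg_f {o c y} (h : ptR o y ∈ (GridTriangle.mk (pt o c) false).region) :
    (c.1 : ℝ) ≤ y.1 ∧ y.1 - c.1 ≤ y.2 - c.2 + 1 ∧ y.2 ≤ c.2 := by
  have k := fun a b k => hull_st (v0_eq o c false) (v1_eq o c false) (v2_eq_f o c) a b k (y := y)
  have k1 := k 1 0 (-c.1) (by simp) (by simp) (by simp) h
  have k2 := k (-1) 1 (c.1 - c.2 + 1) (by simp; linarith) (by simp; linarith) (by simp; linarith) h
  have k3 := k 0 (-1) (c.2) (by simp) (by simp) (by simp) h
  refine ⟨by linarith, by linarith, by linarith⟩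

def Al (G : ConvexGrid) (o : Pt) : Prop := ∀ T ∈ G.tris, ∃ c, T.base = pt o c

lemma exists_Al (G : ConvexGrid) : ∃ o, Al G o := by
  obtain ⟨T0, h0⟩ := G.nonempty
  refine ⟨T0.base, fun T hT => ?_⟩
  obtain ⟨m, n, h⟩ := G.aligned T hT T0 h0
  refine ⟨(m, n), ?_⟩
  have : T.base = T0.base + ((m : ℝ) • xiv 0 + (n : ℝ) • xiv 1) := by rw [← h]; abel
  rw [this]
  ext <;> simp [pt, ptR, cst, xiv] <;> ring

lemma mem_reg {G : ConvexGrid} {o} (ha : Al G o) {q} (h : q ∈ G.region) :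
    ∃ c b, GridTriangle.mk (pt o c) b ∈ G.tris ∧ q ∈ (GridTriangle.mk (pt o c) b).region := by
  unfold ConvexGrid.region at h
  simp only [Set.mem_iUnion] at h
  obtain ⟨T, hT, hq⟩ := h
  obtain ⟨c, hc⟩ := ha T hT
  obtain ⟨base, up⟩ := T
  simp only at hc
  subst hc
  exact ⟨c, up, hT, hq⟩

lemma sub_reg {G : ConvexGrid} {T} (hT : T ∈ G.tris) : T.region ⊆ G.region := by
  intro q hq
  unfold ConvexGrid.region
  simp only [Set.mem_iUnion]
  exact ⟨T, hT, hq⟩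

lemma v0_mem (T : GridTriangle) : T.v0 ∈ T.region := subset_convexHull ℝ _ (by simp)
lemma v1_mem (T : GridTriangle) : T.v1 ∈ T.region := subset_convexHull ℝ _ (by simp)
lemma v2_mem (T : GridTriangle) : T.v2 ∈ T.region := subset_convexHull ℝ _ (by simp)

lemma int_eq {a b : ℤ} {y : ℝ} (h1 : (a : ℝ) ≤ y) (h2 : y ≤ a + 1) (h3 : (b : ℝ) < y)
    (h4 : y < b + 1) : a = b := by
  have k1 : (a : ℝ) < b + 1 := by linarith
  have k2 : (b : ℝ) < a + 1 := by linarith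
  have k1' : a < b + 1 := by exact_mod_cast k1
  have k2' : b < a + 1 := by exact_mod_cast k2
  omega

lemma R_t {G : ConvexGrid} {o} (ha : Al G o) {y : ℝ × ℝ} {c : Z2} (hy : ptR o y ∈ G.region)
    (h1 : 0 < y.2 - c.2) (h2 : y.2 - c.2 < y.1 - c.1) (h3 : y.1 - c.1 < 1) :
    GridTriangle.mk (pt o c) true ∈ G.tris := by
  obtain ⟨d, b, hT, hq⟩ := mem_reg ha hy
  cases b
  · obtain ⟨k1, k2, k3⟩ := reg_f hq
    exfalso
    have e1 : d.1 = c.1 := int_eq (y := y.1) (by linarith) (by linarith) (by linarith) (by linarith)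
    have e2 : d.2 - 1 = c.2 := int_eq (y := y.2) (by push_cast; linarith) (by push_cast; linarith)
      (by linarith) (by linarith)
    have e2' : (d.2 : ℝ) - 1 = c.2 := by exact_mod_cast e2
    have e1' : (d.1 : ℝ) = c.1 := by exact_mod_cast e1
    linarith
  · obtain ⟨k1, k2, k3⟩ := reg_t hq
    have e1 : d.1 = c.1 := int_eq (y := y.1) (by linarith) (by linarith) (by linarith) (by linarith)
    have e2 : d.2 = c.2 := int_eq (y := y.2) (by linarith) (by linarith) (by linarith) (by linarith)
    have : d = c := Prod.ext e1 e2
    rw [← this]; exact hT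

lemma R_f {G : ConvexGrid} {o} (ha : Al G o) {y : ℝ × ℝ} {c : Z2} (hy : ptR o y ∈ G.region)
    (h1 : 0 < y.1 - c.1) (h2 : y.1 - c.1 < y.2 - c.2 + 1) (h3 : y.2 - c.2 < 0) :
    GridTriangle.mk (pt o c) false ∈ G.tris := by
  obtain ⟨d, b, hT, hq⟩ := mem_reg ha hy
  cases b
  · obtain ⟨k1, k2, k3⟩ := reg_f hq
    have e1 : d.1 = c.1 := int_eq (y := y.1) (by linarith) (by linarith) (by linarith) (by linarith)
    have e2 : d.2 - 1 = c.2 - 1 := int_eq (y := y.2) (by push_cast; linarith)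
      (by push_cast; linarith) (by push_cast; linarith) (by push_cast; linarith)
    have : d = c := Prod.ext e1 (by omega)
    rw [← this]; exact hT
  · obtain ⟨k1, k2, k3⟩ := reg_t hq
    exfalso
    have e1 : d.1 = c.1 := int_eq (y := y.1) (by linarith) (by linarith) (by linarith) (by linarith)
    have e2 : d.2 = c.2 - 1 := int_eq (y := y.2) (by linarith) (by linarith)
      (by push_cast; linarith) (by push_cast; linarith)
    have e2' : (d.2 : ℝ) = c.2 - 1 := by exact_mod_cast e2
    have e1' : (d.1 : ℝ) = c.1 := by exact_mod_cast e1
    linarith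

def ccf (o : Pt) (T : GridTriangle) : Z2 := if h : ∃ c, T.base = pt o c then h.choose else 0
lemma ccf_mk (o c b) : ccf o (GridTriangle.mk (pt o c) b) = c := by
  unfold ccf
  have h : ∃ d, (GridTriangle.mk (pt o c) b).base = pt o d := ⟨c, rfl⟩
  rw [dif_pos h]
  exact (pt_inj h.choose_spec).symm

def Vs (G : ConvexGrid) (o : Pt) : Finset Z2 :=
  (G.tris.biUnion (fun T => {ccf o T, ccf o T + (1,0), ccf o T + (1,1), ccf o T + (0,-1)})).filter
    (fun x => pt o x ∈ G.region)

lemma latt {o x c b} (h : pt o x ∈ (GridTriangle.mk (pt o c) b).region) :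
    x = c ∨ x = c + (1,0) ∨ x = c + (if b then (1,1) else (0,-1)) := by
  obtain ⟨x1, x2⟩ := x
  obtain ⟨c1, c2⟩ := c
  cases b
  · obtain ⟨k1, k2, k3⟩ := reg_f h
    simp only [cst] at k1 k2 k3
    have k1' : c1 ≤ x1 := by exact_mod_cast k1
    have k2' : x1 - c1 ≤ x2 - c2 + 1 := by exact_mod_cast k2
    have k3' : x2 ≤ c2 := by exact_mod_cast k3
    simp only [Prod.mk.injEq, Prod.mk_add_mk, Bool.false_eq_true, if_false]
    omega
  · obtain ⟨k1, k2, k3⟩ := reg_t h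
    simp only [cst] at k1 k2 k3
    have k1' : c2 ≤ x2 := by exact_mod_cast k1
    have k2' : x2 - c2 ≤ x1 - c1 := by exact_mod_cast k2
    have k3' : x1 ≤ c1 + 1 := by exact_mod_cast k3
    simp only [Prod.mk.injEq, Prod.mk_add_mk, if_true]
    omega

lemma mem_Vs {G : ConvexGrid} {o} (ha : Al G o) {x} : x ∈ Vs G o ↔ pt o x ∈ G.region := by
  unfold Vs
  rw [Finset.mem_filter]
  refine ⟨fun h => h.2, fun h => ⟨?_, h⟩⟩
  obtain ⟨c, b, hT, hq⟩ := mem_reg ha h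
  rw [Finset.mem_biUnion]
  refine ⟨_, hT, ?_⟩
  rw [ccf_mk]
  have := latt hq
  simp only [Finset.mem_insert, Finset.mem_singleton]
  cases b <;> simp at this <;> tauto

end TG

namespace TG

lemma conv_pt {G : ConvexGrid} {o} {x y : ℝ × ℝ} (a b : ℝ) (ha : 0 ≤ a) (hb : 0 ≤ b)
    (hab : a + b = 1) (hx : ptR o x ∈ G.region) (hy : ptR o y ∈ G.region) :
    ptR o (a • x + b • y) ∈ G.region := by
  rw [ptR_combo o a b hab]
  exact G.convex hx hy ha hb hab

lemma tri_t {G : ConvexGrid} {o} (ha : Al G o) {c}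
    (h : GridTriangle.mk (pt o c) true ∈ G.tris) : Tri (Vs G o) c (1,0) := by
  have k := sub_reg h
  refine ⟨?_, ?_, ?_⟩ <;> rw [mem_Vs ha]
  · exact k (v0_mem _)
  · rw [← v1_eq o c true]; exact k (v1_mem _)
  · have := k (v2_mem _)
    rw [v2_eq_t] at this
    simpa [rot] using this

lemma tri_f {G : ConvexGrid} {o} (ha : Al G o) {c}
    (h : GridTriangle.mk (pt o c) false ∈ G.tris) : Tri (Vs G o) (c + (1,0)) (-(1,0)) := by
  have k := sub_reg h
  refine ⟨?_, ?_, ?_⟩ <;> rw [mem_Vs ha]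
  · rw [← v1_eq o c false]; exact k (v1_mem _)
  · have e : c + (1,0) + -(1,0) = c := by abel
    rw [e]; exact k (v0_mem _)
  · have := k (v2_mem _)
    rw [v2_eq_f] at this
    have e : c + (1,0) + rot (-(1,0)) = c + (0,-1) := by
      ext <;> simp [rot]
    rw [e]; exact this

def Fp (w e : Z2) (α β : ℝ) : ℝ × ℝ :=
  (w.1 + α * e.1 + β * (rot e).1, w.2 + α * e.2 + β * (rot e).2)

lemma Fp_rot (w e : Z2) (α β : ℝ) : Fp w e α β = Fp (w + e) (rot e - e) β (1 - α - β) := by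
  unfold Fp
  rw [rot_rsub]
  ext <;> simp <;> ring

def Mk (o : Pt) (v u : Z2) (T : GridTriangle) : Prop :=
  T.v0 = pt o v ∧ T.v1 = pt o (v + u) ∧ T.v2 = pt o (v + rot u)

def Desc (o : Pt) (T : GridTriangle) (v u : Z2) : Prop :=
  ({T.v0, T.v1, T.v2} : Set Pt) = {pt o v, pt o (v + u), pt o (v + rot u)} ∧
  ((u ∈ Ev ∧ T.up = true ∧ T.edgeFinset =
      {(pt o v, pt o (v + u)), (pt o (v + u), pt o (v + rot u)), (pt o (v + rot u), pt o v)}) ∨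
   (-u ∈ Ev ∧ T.up = false ∧ T.edgeFinset =
      {(pt o (v + u), pt o v), (pt o (v + rot u), pt o (v + u)), (pt o v, pt o (v + rot u))}))

lemma Desc.rot {o T v u} (h : Desc o T v u) : Desc o T (v + u) (TG.rot u - u) := by
  unfold Desc at *
  have e1 : v + u + (TG.rot u - u) = v + TG.rot u := by abel
  have e2 : v + u + TG.rot (TG.rot u - u) = v := by rw [rot_rsub]; abel
  rw [e1, e2]
  obtain ⟨h1, h2⟩ := h
  refine ⟨?_, ?_⟩
  · rw [h1]; ext q; simp only [Set.mem_insert_iff, Set.mem_singleton_iff]; tauto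
  · rcases h2 with ⟨a, b, c⟩ | ⟨a, b, c⟩
    · left
      refine ⟨Ev_rot a, b, ?_⟩
      rw [c]; ext q; simp only [Finset.mem_insert, Finset.mem_singleton]; tauto
    · right
      refine ⟨?_, b, ?_⟩
      · have := Ev_rot a
        rw [rot_neg] at this
        have e : -(TG.rot u - u) = -TG.rot u - -u := by abel
        rw [e]; exact this
      · rw [c]; ext q; simp only [Finset.mem_insert, Finset.mem_singleton]; tauto

lemma Desc.rot2 {o T v u} (h : Desc o T v u) : Desc o T (v + TG.rot u) (-TG.rot u) := by
  have := h.rot.rot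
  rwa [rot3a, rot3b] at this

lemma Desc.unrot {o T v u} (h : Desc o T (v + u) (TG.rot u - u)) : Desc o T v u := by
  have := h.rot2
  have e1 : v + u + TG.rot (TG.rot u - u) = v := by rw [rot_rsub]; abel
  have e2 : -TG.rot (TG.rot u - u) = u := by rw [rot_rsub]; abel
  rwa [e1, e2] at this

lemma desc_t (o c) : Desc o (GridTriangle.mk (pt o c) true) c (1,0) := by
  have e : c + rot (1,0) = c + (1,1) := by simp [rot]
  unfold Desc GridTriangle.edgeFinset GridTriangle.e0 GridTriangle.e1 GridTriangle.e2
  rw [v0_eq, v1_eq, v2_eq_t, e]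
  exact ⟨rfl, Or.inl ⟨by simp [Ev], rfl, rfl⟩⟩

lemma desc_f (o c) : Desc o (GridTriangle.mk (pt o c) false) (c + (1,0)) (-(1,0)) := by
  have e : c + (1,0) + rot (-(1,0)) = c + (0,-1) := by ext <;> simp [rot]
  have e' : c + (1,0) + -(1,0) = c := by abel
  unfold Desc GridTriangle.edgeFinset GridTriangle.e0 GridTriangle.e1 GridTriangle.e2
  rw [v0_eq, v1_eq, v2_eq_f, e, e']
  refine ⟨?_, Or.inr ⟨by simp [Ev], rfl, ?_⟩⟩
  · ext q; simp only [Set.mem_insert_iff, Set.mem_singleton_iff]; tauto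
  · ext q; simp only [Finset.mem_insert, Finset.mem_singleton]; tauto

lemma Rflag {G : ConvexGrid} {o} (ha : Al G o) : ∀ w e, e ∈ Dirs → ∀ α β : ℝ, 0 < α → 0 < β →
    α + β < 1 → ptR o (Fp w e α β) ∈ G.region →
    Tri (Vs G o) w e ∧ ∃ T ∈ G.tris, Desc o T w e := by
  apply base_ind
  · intro v α β h1 h2 h3 h4
    have := R_t ha (c := v) h4 (by simp [Fp, rot]; linarith) (by simp [Fp, rot]; linarith)
      (by simp [Fp, rot]; linarith)
    exact ⟨tri_t ha this, _, this, desc_t _ _⟩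
  · intro v α β h1 h2 h3 h4
    have := R_f ha (c := v - (1,0)) h4 (by simp [Fp, rot]; linarith) (by simp [Fp, rot]; linarith)
      (by simp [Fp, rot]; linarith)
    have e : v - (1,0) + (1,0) = v := by abel
    have k1 := tri_f ha this
    have k2 := desc_f o (v - (1,0))
    rw [e] at k1 k2
    exact ⟨k1, _, this, k2⟩
  · intro v u h α β h1 h2 h3 h4
    rw [Fp_rot] at h4
    obtain ⟨k1, T, hT, k2⟩ := h β (1 - α - β) h2 (by linarith) (by linarith) h4
    refine ⟨?_, T, hT, k2.unrot⟩
    have := k1.rot'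
    have e1 : v + u + TG.rot (TG.rot u - u) = v := by rw [rot_rsub]; abel
    have e2 : -TG.rot (TG.rot u - u) = u := by rw [rot_rsub]; abel
    rwa [e1, e2] at this

lemma Tri_desc {G : ConvexGrid} {o} (ha : Al G o) {v u} (hu : u ∈ Dirs) (h : Tri (Vs G o) v u) :
    ∃ T ∈ G.tris, Desc o T v u := by
  obtain ⟨h0, h1, h2⟩ := h
  rw [mem_Vs ha] at h0 h1 h2
  have k := conv_pt (G := G) (1/2) (1/2) (by norm_num) (by norm_num) (by norm_num) h0
    (conv_pt (1/2) (1/2) (by norm_num) (by norm_num) (by norm_num) h1 h2)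
  refine (Rflag ha v u hu (1/4) (1/4) (by norm_num) (by norm_num) (by norm_num) ?_).2
  convert k using 2
  ext <;> simp [Fp, cst] <;> ring

lemma desc_of_mem {G : ConvexGrid} {o} (ha : Al G o) {T} (hT : T ∈ G.tris) :
    ∃ v u, u ∈ Dirs ∧ Tri (Vs G o) v u ∧ Desc o T v u := by
  obtain ⟨c, hc⟩ := ha T hT
  obtain ⟨base, up⟩ := T
  simp only at hc
  subst hc
  cases up
  · exact ⟨_, _, by simp [Dirs], tri_f ha hT, desc_f o c⟩
  · exact ⟨_, _, by simp [Dirs], tri_t ha hT, desc_t o c⟩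

lemma edge_flag {G : ConvexGrid} {o} (ha : Al G o) {T} (hT : T ∈ G.tris) {e}
    (he : e ∈ T.edgeFinset) : ∃ v u, u ∈ Dirs ∧ Tri (Vs G o) v u ∧ Desc o T v u ∧
    ((u ∈ Ev ∧ e = (pt o v, pt o (v + u))) ∨ (-u ∈ Ev ∧ e = (pt o (v + u), pt o v))) := by
  obtain ⟨v, u, hu, ht, hd⟩ := desc_of_mem ha hT
  have key : ∀ v u, u ∈ Dirs → Tri (Vs G o) v u → Desc o T v u →
      (e = (pt o v, pt o (v + u)) ∨ e = (pt o (v + u), pt o v)) →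
      (e = (pt o v, pt o (v + u)) → u ∈ Ev) → (e = (pt o (v + u), pt o v) → -u ∈ Ev) →
      ∃ v u, u ∈ Dirs ∧ Tri (Vs G o) v u ∧ Desc o T v u ∧
    ((u ∈ Ev ∧ e = (pt o v, pt o (v + u))) ∨ (-u ∈ Ev ∧ e = (pt o (v + u), pt o v))) := by
    intro v u hu ht hd h1 h2 h3
    exact ⟨v, u, hu, ht, hd, by tauto⟩
  have e1 : v + u + (TG.rot u - u) = v + TG.rot u := by abel
  have e3 : v + rot u + -rot u = v := by abel
  have r1 := hd.rot
  have r2 := hd.rot2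
  rcases hd.2 with ⟨a, b, c⟩ | ⟨a, b, c⟩
  · rw [c] at he
    simp only [Finset.mem_insert, Finset.mem_singleton] at he
    rcases he with he | he | he
    · exact ⟨v, u, hu, ht, hd, Or.inl ⟨a, he⟩⟩
    · exact ⟨v + u, rot u - u, rsub_mem hu, ht.rot, r1, Or.inl ⟨Ev_rot a, by rw [e1]; exact he⟩⟩
    · refine ⟨v + rot u, -rot u, negrot_mem hu, ht.rot', r2, Or.inl ⟨?_, by rw [e3]; exact he⟩⟩
      rcases r2.2 with h | h
      · exact h.1
      · exfalso; have := h.2.1; rw [b] at this; cases this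
  · rw [c] at he
    simp only [Finset.mem_insert, Finset.mem_singleton] at he
    rcases he with he | he | he
    · exact ⟨v, u, hu, ht, hd, Or.inr ⟨a, he⟩⟩
    · refine ⟨v + u, rot u - u, rsub_mem hu, ht.rot, r1, Or.inr ⟨?_, by rw [e1]; exact he⟩⟩
      rcases r1.2 with h | h
      · exfalso; have := h.2.1; rw [b] at this; cases this
      · exact h.1
    · refine ⟨v + rot u, -rot u, negrot_mem hu, ht.rot', r2, Or.inr ⟨?_, by rw [e3]; exact he⟩⟩
      rcases r2.2 with h | h
      · exfalso; have := h.2.1; rw [b] at this; cases this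
      · exact h.1

lemma Vs_hs {G : ConvexGrid} {o} (ha : Al G o) : Hs (Vs G o) := by
  intro v u x hu ht hx hneg
  have hd := vec_decomp hu (x - v)
  set A := cr (x - v) (rot u) with hA
  set B := cr u (x - v) with hB
  have h1 := congrArg Prod.fst hd
  have h2 := congrArg Prod.snd hd
  simp only [Prod.fst_sub, Prod.snd_sub, Prod.fst_add, Prod.snd_add, Prod.smul_fst, Prod.smul_snd,
    smul_eq_mul] at h1 h2
  have h1' : (x.1 : ℝ) = v.1 + A * u.1 + B * (rot u).1 := by
    have : x.1 = v.1 + A * u.1 + B * (rot u).1 := by linarith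
    exact_mod_cast this
  have h2' : (x.2 : ℝ) = v.2 + A * u.2 + B * (rot u).2 := by
    have : x.2 = v.2 + A * u.2 + B * (rot u).2 := by linarith
    exact_mod_cast this
  have hB' : (B : ℝ) < 0 := by exact_mod_cast hneg
  have hp : 0 < 4 * (|(A : ℝ)| + |(B : ℝ)| + 1) := by positivity
  obtain ⟨ε, hε⟩ : ∃ ε : ℝ, ε = 1 / (4 * (|(A : ℝ)| + |(B : ℝ)| + 1)) := ⟨_, rfl⟩
  have he0 : 0 < ε := by rw [hε]; positivity
  have he1 : ε * |(A : ℝ)| + ε * |(B : ℝ)| + ε = 1 / 4 := by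
    rw [hε]; field_simp
  have m1 : ε * (A : ℝ) ≤ ε * |(A : ℝ)| := mul_le_mul_of_nonneg_left (le_abs_self _) he0.le
  have m2 : ε * -(A : ℝ) ≤ ε * |(A : ℝ)| := mul_le_mul_of_nonneg_left (neg_le_abs _) he0.le
  have m3 : ε * -(B : ℝ) ≤ ε * |(B : ℝ)| := mul_le_mul_of_nonneg_left (neg_le_abs _) he0.le
  have m4 : 0 < ε * -(B : ℝ) := mul_pos he0 (by linarith)
  have m5 : 0 ≤ ε * |(A : ℝ)| := by positivity
  obtain ⟨t0, t1, t2⟩ := ht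
  have t0' := (mem_Vs ha).1 t0
  have t1' := (mem_Vs ha).1 t1
  have x' := (mem_Vs ha).1 hx
  have k := conv_pt (G := G) (1 - ε) ε (by linarith [abs_nonneg (A : ℝ), mul_nonneg he0.le (abs_nonneg (B : ℝ))]) he0.le (by ring)
    (conv_pt (1/2) (1/2) (by norm_num) (by norm_num) (by norm_num) t0' t1') x'
  have r := (Rflag ha (v + u) (-u) (neg_mem hu) ((1 + ε) / 2 - ε * A) (-(ε * B)) (by linarith)
    (by linarith) (by linarith [mul_nonneg he0.le (abs_nonneg (B : ℝ))]) (by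
      convert k using 2
      rw [Fp, rot_neg]
      ext
      · simp [cst]; rw [h1']; ring
      · simp [cst]; rw [h2']; ring)).1
  exact tri_opp_apex r

lemma Vs_qp {G : ConvexGrid} {o} (ha : Al G o) : Qp (Vs G o) := by
  intro x h0 h1 h2
  rw [mem_Vs ha] at h0 h1 h2
  have k := conv_pt (G := G) (1/2) (1/2) (by norm_num) (by norm_num) (by norm_num) h2
    (conv_pt (1/2) (1/2) (by norm_num) (by norm_num) (by norm_num) h0 h1)
  have := R_t ha (c := x - (1,1)) k (by simp [cst]; linarith) (by simp [cst]; linarith)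
    (by simp [cst]; linarith)
  exact (tri_t ha this).1

lemma Vs_tri {G : ConvexGrid} {o} (ha : Al G o) : ∀ x ∈ Vs G o, ∃ u ∈ Dirs, Tri (Vs G o) x u := by
  intro x hx
  obtain ⟨c, b, hT, hq⟩ := mem_reg ha ((mem_Vs ha).1 hx)
  have := latt hq
  have key : ∀ v u, u ∈ Dirs → Tri (Vs G o) v u → (x = v ∨ x = v + u ∨ x = v + rot u) →
      ∃ u ∈ Dirs, Tri (Vs G o) x u := by
    rintro v u hu ht (rfl | rfl | rfl)
    · exact ⟨u, hu, ht⟩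
    · exact ⟨_, rsub_mem hu, ht.rot⟩
    · exact ⟨_, negrot_mem hu, ht.rot'⟩
  cases b
  · refine key _ _ (by simp [Dirs]) (tri_f ha hT) ?_
    have e : c + (1,0) + rot (-(1,0)) = c + (0,-1) := by ext <;> simp [rot]
    have e' : c + (1,0) + -(1,0) = c := by abel
    rw [e, e']
    simp only [Bool.false_eq_true, if_false] at this
    tauto
  · refine key _ _ (by simp [Dirs]) (tri_t ha hT) ?_
    have e : c + rot (1,0) = c + (1,1) := by simp [rot]
    rw [e]
    simpa using this

end TG

namespace TG

lemma Desc.mem {o T v u} (h : Desc o T v u) :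
    pt o v ∈ T.region ∧ pt o (v + u) ∈ T.region ∧ pt o (v + TG.rot u) ∈ T.region := by
  unfold GridTriangle.region
  rw [h.1]
  refine ⟨?_, ?_, ?_⟩ <;> apply subset_convexHull <;> simp

lemma Desc.le {o T v u} (h : Desc o T v u) (φ ψ : Pt →ᵃ[ℝ] ℝ) (h0 : φ (pt o v) ≤ ψ (pt o v))
    (h1 : φ (pt o (v + u)) ≤ ψ (pt o (v + u)))
    (h2 : φ (pt o (v + TG.rot u)) ≤ ψ (pt o (v + TG.rot u))) : ∀ q ∈ T.region, φ q ≤ ψ q := by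
  have key : ∀ q ∈ ({T.v0, T.v1, T.v2} : Set Pt), φ q ≤ ψ q := by
    rw [h.1]
    intro q hq
    simp only [Set.mem_insert_iff, Set.mem_singleton_iff] at hq
    rcases hq with rfl | rfl | rfl
    · exact h0
    · exact h1
    · exact h2
  exact hull_le φ ψ (key _ (by simp)) (key _ (by simp)) (key _ (by simp))

lemma conc_pt {G : ConvexGrid} {o} (ha : Al G o) {g : Pt → ℝ} (h1 : ConcaveOn ℝ G.region g)
    (h2 : ∀ T ∈ G.tris, AffineOn g T.region) : Conc (Vs G o) (fun x => g (pt o x)) := by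
  intro v u hu ht hx
  obtain ⟨T, hT, hd⟩ := Tri_desc ha hu ht
  obtain ⟨φ, hφ⟩ := h2 T hT
  obtain ⟨m0, m1, m2⟩ := hd.mem
  have half : (1/2 : ℝ) + 1/2 = 1 := by norm_num
  have mm : (1/2 : ℝ) • pt o v + (1/2 : ℝ) • pt o (v + u) ∈ T.region :=
    convex_convexHull ℝ _ m0 m1 (by norm_num) (by norm_num) half
  have e1 := hφ _ mm
  rw [Convex.combo_affine_apply half, ← hφ _ m0, ← hφ _ m1] at e1
  have e2 := h1.2 ((mem_Vs ha).1 ht.2.2) ((mem_Vs ha).1 hx) (by norm_num) (by norm_num) half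
  have e3 : (1/2 : ℝ) • pt o (v + rot u) + (1/2 : ℝ) • pt o (v + u - rot u) =
      (1/2 : ℝ) • pt o v + (1/2 : ℝ) • pt o (v + u) := by
    unfold pt
    rw [← ptR_combo o _ _ half, ← ptR_combo o _ _ half]
    congr 1
    ext <;> simp [cst] <;> ring
  rw [e3, e1] at e2
  simp only [smul_eq_mul] at e2
  unfold sl
  simp only
  linarith

lemma exists_L {V : Finset Z2} {g} (o : Pt) (hs : Hs V) (hc : Conc V g) (v u : Z2) (hu : u ∈ Dirs)
    (ht : Tri V v u) : ∃ φ : Pt →ᵃ[ℝ] ℝ, (∀ x ∈ V, g x ≤ φ (pt o x)) ∧ φ (pt o v) = g v ∧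
      φ (pt o (v + u)) = g (v + u) ∧ φ (pt o (v + rot u)) = g (v + rot u) := by
  obtain ⟨p, hp⟩ := exists_In g hu ht
  have key : ∀ x, affst o p.1 p.2 (g v - p.1 * v.1 - p.2 * v.2) (pt o x) = g v + dp p (x - v) := by
    intro x
    unfold pt
    rw [affst_pt]
    simp [cst, dp]; ring
  refine ⟨affst o p.1 p.2 (g v - p.1 * v.1 - p.2 * v.2), ?_, ?_, ?_, ?_⟩
  · intro x hx
    rw [key]; exact maj hs hc hu hp hx
  · rw [key]; simp [dp]
  · rw [key, add_sub_cancel_left, ← hp.2.1]; ring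
  · rw [key, add_sub_cancel_left, ← hp.2.2]; ring

lemma extG {G : ConvexGrid} {o} (ha : Al G o) {g} (hc : Conc (Vs G o) g) :
    ∃ f : Pt → ℝ, ConcaveOn ℝ G.region f ∧ (∀ T ∈ G.tris, AffineOn f T.region) ∧
      ∀ x ∈ Vs G o, f (pt o x) = g x := by
  set V := Vs G o with hV
  have hs : Hs V := Vs_hs ha
  have ex : ∀ q : Z2 × Z2, ∃ φ : Pt →ᵃ[ℝ] ℝ, q.2 ∈ Dirs → Tri V q.1 q.2 →
      (∀ x ∈ V, g x ≤ φ (pt o x)) ∧ φ (pt o q.1) = g q.1 ∧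
      φ (pt o (q.1 + q.2)) = g (q.1 + q.2) ∧ φ (pt o (q.1 + rot q.2)) = g (q.1 + rot q.2) := by
    intro q
    by_cases h : q.2 ∈ Dirs ∧ Tri V q.1 q.2
    · obtain ⟨φ, hφ⟩ := exists_L o hs hc q.1 q.2 h.1 h.2
      exact ⟨φ, fun _ _ => hφ⟩
    · exact ⟨0, fun h1 h2 => absurd ⟨h1, h2⟩ h⟩
  choose φ hφ using ex
  set F := (V ×ˢ Dirs).filter (fun q => Tri V q.1 q.2) with hF
  have memF : ∀ v u, u ∈ Dirs → Tri V v u → (v, u) ∈ F := by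
    intro v u hu ht
    rw [hF, Finset.mem_filter, Finset.mem_product]
    exact ⟨⟨ht.1, hu⟩, ht⟩
  have Fsp : ∀ q ∈ F, q.2 ∈ Dirs ∧ Tri V q.1 q.2 := by
    intro q hq
    rw [hF, Finset.mem_filter, Finset.mem_product] at hq
    exact ⟨hq.1.2, hq.2⟩
  have Fne : F.Nonempty := by
    obtain ⟨T, hT⟩ := G.nonempty
    obtain ⟨v, u, hu, ht, _⟩ := desc_of_mem ha hT
    exact ⟨_, memF v u hu ht⟩
  refine ⟨fun x => F.inf' Fne (fun q => φ q x), ⟨G.convex, ?_⟩, ?_, ?_⟩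
  · intro x _ y _ a b ha' hb hab
    apply Finset.le_inf'
    intro q hq
    rw [Convex.combo_affine_apply hab]
    have k1 : F.inf' Fne (fun q => φ q x) ≤ φ q x := Finset.inf'_le (fun q => φ q x) hq
    have k2 : F.inf' Fne (fun q => φ q y) ≤ φ q y := Finset.inf'_le (fun q => φ q y) hq
    simp only [smul_eq_mul]
    gcongr
  · intro T hT
    obtain ⟨v, u, hu, ht, hd⟩ := desc_of_mem ha hT
    refine ⟨φ (v, u), fun x hx => ?_⟩
    apply le_antisymm
    · exact Finset.inf'_le (fun q => φ q x) (memF v u hu ht)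
    · apply Finset.le_inf'
      intro q hq
      obtain ⟨k1, k2⟩ := Fsp q hq
      have l1 := (hφ q k1 k2).1
      obtain ⟨_, l2, l3, l4⟩ := hφ (v, u) hu ht
      simp only at l2 l3 l4
      refine hd.le _ _ ?_ ?_ ?_ x hx
      · rw [l2]; exact l1 _ ht.1
      · rw [l3]; exact l1 _ ht.2.1
      · rw [l4]; exact l1 _ ht.2.2
  · intro x hx
    obtain ⟨u, hu, ht⟩ := Vs_tri ha x hx
    apply le_antisymm
    · have k : F.inf' Fne (fun q => φ q (pt o x)) ≤ φ (x, u) (pt o x) :=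
        Finset.inf'_le (fun q => φ q (pt o x)) (memF x u hu ht)
      have := (hφ (x, u) hu ht).2.1
      simp only at this
      linarith
    · apply Finset.le_inf'
      intro q hq
      obtain ⟨k1, k2⟩ := Fsp q hq
      exact (hφ q k1 k2).1 x hx

lemma bdry {G : ConvexGrid} {o} (ha : Al G o) {e T v u} (he : e ∈ G.boundary) (hT : T ∈ G.tris)
    (heT : e ∈ T.edgeFinset) (hu : u ∈ Dirs) (ht : Tri (Vs G o) v u) (hd : Desc o T v u)
    (h : (u ∈ Ev ∧ e = (pt o v, pt o (v + u))) ∨ (-u ∈ Ev ∧ e = (pt o (v + u), pt o v))) :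
    v + u - rot u ∉ Vs G o := by
  intro hx
  obtain ⟨T', hT', hd'⟩ := Tri_desc ha (neg_mem hu) (tri_opp ht hx)
  have e1 : v + u + -u = v := by abel
  have heT' : e ∈ T'.edgeFinset ∧ T'.up ≠ T.up := by
    have h1 := hd'.2
    have h2 := hd.2
    rw [e1, neg_neg] at h1
    rcases h with ⟨a, b⟩ | ⟨a, b⟩
    · have na := Ev_neg a
      rcases h1 with h1 | h1
      · exact absurd h1.1 na
      rcases h2 with h2 | h2
      · refine ⟨?_, by rw [h1.2.1, h2.2.1]; decide⟩
        rw [h1.2.2, b]; simp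
      · exact absurd h2.1 na
    · have na : u ∉ Ev := fun k => Ev_neg k a
      rcases h1 with h1 | h1
      · rcases h2 with h2 | h2
        · exact absurd h2.1 na
        · refine ⟨?_, by rw [h1.2.1, h2.2.1]; decide⟩
          rw [h1.2.2, b]; simp
      · exact absurd h1.1 na
  unfold ConvexGrid.boundary at he
  rw [Finset.mem_filter, Finset.card_eq_one] at he
  obtain ⟨_, S, hS⟩ := he
  have m1 : T ∈ G.tris.filter (fun T => e ∈ T.edgeFinset) := Finset.mem_filter.2 ⟨hT, heT⟩
  have m2 : T' ∈ G.tris.filter (fun T => e ∈ T.edgeFinset) := Finset.mem_filter.2 ⟨hT', heT'.1⟩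
  rw [hS, Finset.mem_singleton] at m1 m2
  exact heT'.2 (by rw [m1, m2])

theorem main (G : ConvexGrid) (h : Ed → ℝ) (hh : IsConcaveCocirculation G h) :
    ∃ h' : Ed → ℝ, IsConcaveCocirculation G h' ∧
      (∀ e ∈ G.edges, ∃ z : ℤ, h' e = (z : ℝ)) ∧
      ∀ e ∈ G.edges,
        ((e ∈ G.boundary ∧ ∃ z : ℤ, h e = (z : ℝ)) ∨
          (∃ T ∈ G.tris, e ∈ T.edgeFinset ∧ ∀ f ∈ T.edgeFinset, ∃ z : ℤ, h f = (z : ℝ))) →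
        h' e = h e := by
  obtain ⟨_, g, hg1, hg2, hg3⟩ := hh
  obtain ⟨o, ha⟩ := exists_Al G
  have hne : (Vs G o).Nonempty := by
    obtain ⟨T, hT⟩ := G.nonempty
    obtain ⟨v, u, hu, ht, _⟩ := desc_of_mem ha hT
    exact ⟨v, ht.1⟩
  obtain ⟨k, kc, kI, kB, kT⟩ := core hne (Vs_hs ha) (Vs_qp ha) (Vs_tri ha) (conc_pt ha hg1 hg2)
  obtain ⟨f, f1, f2, f3⟩ := extG ha kc
  have eT : ∀ {e}, e ∈ G.edges → ∃ T ∈ G.tris, e ∈ T.edgeFinset := by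
    intro e he
    unfold ConvexGrid.edges at he
    simpa using he
  have Te : ∀ {T e}, T ∈ G.tris → e ∈ T.edgeFinset → e ∈ G.edges := by
    intro T e hT he
    unfold ConvexGrid.edges
    rw [Finset.mem_biUnion]
    exact ⟨T, hT, he⟩
  refine ⟨fun e => f e.2 - f e.1, ⟨?_, f, f1, f2, fun _ _ => rfl⟩, ?_, ?_⟩
  · intro T _
    simp only [GridTriangle.e0, GridTriangle.e1, GridTriangle.e2]
    ring
  · intro e he
    obtain ⟨T, hT, heT⟩ := eT he
    obtain ⟨v, u, hu, ht, hd, hc⟩ := edge_flag ha hT heT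
    have := kI v u hu ht
    rw [← f3 _ ht.1, ← f3 _ ht.2.1] at this
    rcases hc with ⟨_, rfl⟩ | ⟨_, rfl⟩
    · exact this
    · have := this.neg
      rw [neg_sub] at this
      exact this
  · -- agreement with the original cocirculation
    have fin : ∀ e v u, e ∈ G.edges → Tri (Vs G o) v u →
        ((u ∈ Ev ∧ e = (pt o v, pt o (v + u))) ∨ (-u ∈ Ev ∧ e = (pt o (v + u), pt o v))) →
        k (v + u) - k v = g (pt o (v + u)) - g (pt o v) → f e.2 - f e.1 = h e := by
      intro e v u he ht hc heq
      rw [← f3 _ ht.1, ← f3 _ ht.2.1] at heq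
      rw [hg3 e he]
      rcases hc with ⟨_, rfl⟩ | ⟨_, rfl⟩
      · exact heq
      · simp only; linarith
    have int : ∀ e x y, e ∈ G.edges → (∃ z : ℤ, h e = (z : ℝ)) →
        (e = (pt o x, pt o y) ∨ e = (pt o y, pt o x)) → IsI (g (pt o y) - g (pt o x)) := by
      intro e x y he hz hc
      rw [hg3 e he] at hz
      rcases hc with rfl | rfl
      · exact hz
      · have := IsI.neg hz
        rw [neg_sub] at this
        exact this
    intro e he hc
    rcases hc with ⟨hb, hz⟩ | ⟨T, hT, heT, hz⟩
    · obtain ⟨T, hT, heT⟩ := eT he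
      obtain ⟨v, u, hu, ht, hd, hc⟩ := edge_flag ha hT heT
      refine fin e v u he ht hc ?_
      exact kB v u hu ht (bdry ha hb hT heT hu ht hd hc) (int e v (v + u) he hz (by tauto))
    · obtain ⟨v, u, hu, ht, hd, hc⟩ := edge_flag ha hT heT
      refine fin e v u he ht hc ?_
      refine kT v u hu ht (int e v (v + u) he (hz e heT) (by tauto)) ?_
      rcases hd.2 with ⟨_, _, c⟩ | ⟨_, _, c⟩
      · have m : (pt o (v + rot u), pt o v) ∈ T.edgeFinset := by rw [c]; simp
        exact int _ v (v + rot u) (Te hT m) (hz _ m) (Or.inr rfl)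
      · have m : (pt o v, pt o (v + rot u)) ∈ T.edgeFinset := by rw [c]; simp
        exact int _ v (v + rot u) (Te hT m) (hz _ m) (Or.inl rfl)

end TG

/-- Theorem 2.  For any concave cocirculation h in a convex grid G
there is an integer concave cocirculation h' agreeing with h on O_h ∪ I_h, where O_h
is the set of boundary edges with integer h-value and I_h is the set of edges lying in
little triangles all three of whose edges have integer h-values. -/
theorem stmt1 (G : ConvexGrid) (h : Ed → ℝ) (hh : IsConcaveCocirculation G h) :
    ∃ h' : Ed → ℝ, IsConcaveCocirculation G h' ∧
      (∀ e ∈ G.edges, ∃ z : ℤ, h' e = (z : ℝ)) ∧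
      ∀ e ∈ G.edges,
        ((e ∈ G.boundary ∧ ∃ z : ℤ, h e = (z : ℝ)) ∨
          (∃ T ∈ G.tris, e ∈ T.edgeFinset ∧ ∀ f ∈ T.edgeFinset, ∃ z : ℤ, h f = (z : ℝ))) →
        h' e = h e := by
  exact TG.main G h hh
end
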